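/- arXiv:2512.17000 — 4 statements merged into one kernel-verified Lean document; each statement's English description precedes it below -/
import Mathlib

section
/- Let N > 1 be an odd integer and let q be a primitive N-th root of unity in ℂ (choose v with v² = q). Suppose Δ : 𝒪_q(B⁺) → 𝒪_q(B⁺) ⊗_ℂ 𝒪_q(B⁺) is an algebra homomorphism satisfying Δ(z_{ij}) = Σ_{k=i}^{j} z_{ik} ⊗ z_{kj} for all 1 ≤ i ≤ j ≤ n (the standard comultiplication of the quantum Borel algebra). Then for all 1 ≤ i ≤ j ≤ n one has Δ(z_{ij}^N) = Σ_{k=i}^{j} c^k_{ij} · z_{ik}^N ⊗ z_{kj}^N, where c^k_{ij} := 2/(1+q)^N if n is odd, k = n₀ and i < k < j, and c^k_{ij} := 1 otherwise. -/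
noncomputable section
open scoped TensorProduct

namespace SOq

/-- `pr n k = n + 1 - k`, the "primed" index `k'`. -/
def pr (n k : ℕ) : ℕ := n + 1 - k

/-- `2 ρ_i` as an integer. -/
def twoRho (n i : ℕ) : ℤ :=
  if 2 * i < n + 1 then (n : ℤ) - 2 * i
  else if 2 * i = n + 1 then 0
  else (n : ℤ) + 2 - 2 * i

/-- Entries of the matrix `J`: `c_{ij} = δ_{j,i'} q^{-ρ_i}` (with `q^{1/2} := v`). -/
def Jc (n : ℕ) (v : ℂ) (i j : ℕ) : ℂ :=
  if j = pr n i then v ^ (-(twoRho n i)) else 0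

/-- R-matrix coefficients `R^{ij}_{ab}`. -/
def Rc (n : ℕ) (q v : ℂ) (i j a b : ℕ) : ℂ :=
  q ^ (((if i = j then 1 else 0) - (if i = pr n j then 1 else 0) : ℤ)) *
      (if i = a then (1 : ℂ) else 0) * (if j = b then (1 : ℂ) else 0) +
    (if a < i then (1 : ℂ) else 0) * (q - q⁻¹) *
      ((if j = a then (1 : ℂ) else 0) * (if i = b then (1 : ℂ) else 0) -
        Jc n v j i * Jc n v a b)

/-- The free algebra on the generators `z_{ij}`. -/
abbrev FA : Type := FreeAlgebra ℂ (ℕ × ℕ)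

def zf (i j : ℕ) : FA := FreeAlgebra.ι ℂ (i, j)

/-- The FRT relation element `FRT(i,b,j,a)`. -/
def frtRel (n : ℕ) (q v : ℂ) (i b j a : ℕ) : FA :=
  ∑ k ∈ Finset.Icc 1 n, ∑ l ∈ Finset.Icc 1 n,
    (Rc n q v l k a b • (zf i k * zf j l) - Rc n q v j i k l • (zf k a * zf l b))

/-- Entry `(i,j)` of `z J zᵗ J⁻¹ - Id` (note `J⁻¹ = J`). -/
def orthRel₁ (n : ℕ) (v : ℂ) (i j : ℕ) : FA :=
  (∑ k ∈ Finset.Icc 1 n, ∑ l ∈ Finset.Icc 1 n, ∑ m ∈ Finset.Icc 1 n,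
      (Jc n v k l * Jc n v m j) • (zf i k * zf m l)) - (if i = j then (1 : FA) else 0)

/-- Entry `(i,j)` of `J zᵗ J⁻¹ z - Id`. -/
def orthRel₂ (n : ℕ) (v : ℂ) (i j : ℕ) : FA :=
  (∑ k ∈ Finset.Icc 1 n, ∑ l ∈ Finset.Icc 1 n, ∑ m ∈ Finset.Icc 1 n,
      (Jc n v i k * Jc n v l m) • (zf l k * zf m j)) - (if i = j then (1 : FA) else 0)

/-- The defining relations of the quantum Borel algebra `𝒪_q(B⁺) ⊆ 𝒪_q(SO_n)`. -/
inductive Rel (n : ℕ) (q v : ℂ) : FA → FA → Prop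
  | frt : ∀ i b j a : ℕ, i ∈ Finset.Icc 1 n → b ∈ Finset.Icc 1 n → j ∈ Finset.Icc 1 n →
      a ∈ Finset.Icc 1 n → Rel n q v (frtRel n q v i b j a) 0
  | orth₁ : ∀ i j : ℕ, i ∈ Finset.Icc 1 n → j ∈ Finset.Icc 1 n →
      Rel n q v (orthRel₁ n v i j) 0
  | orth₂ : ∀ i j : ℕ, i ∈ Finset.Icc 1 n → j ∈ Finset.Icc 1 n →
      Rel n q v (orthRel₂ n v i j) 0
  | lower : ∀ i j : ℕ, j < i → Rel n q v (zf i j) 0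
  | out : ∀ i j : ℕ, (i = 0 ∨ j = 0 ∨ n < i ∨ n < j) → Rel n q v (zf i j) 0

/-- The quantum Borel algebra `𝒪_q(B⁺)`. -/
abbrev OB (n : ℕ) (q v : ℂ) : Type := RingQuot (Rel n q v)

/-- The generators `z_{ij}` of `𝒪_q(B⁺)`. -/
def z (n : ℕ) (q v : ℂ) (i j : ℕ) : OB n q v :=
  RingQuot.mkAlgHom ℂ (Rel n q v) (zf i j)

end SOq

namespace SOq

/-- The coefficient `c^k_{ij}`. -/
def cCoef (n N : ℕ) (q : ℂ) (i j k : ℕ) : ℂ :=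
  if Odd n ∧ 2 * k = n + 1 ∧ i < k ∧ k < j then 2 / (1 + q) ^ N else 1

section
open Polynomial

/-- Dickson-type sequence in a ring. -/
def Dk {A : Type*} [Ring A] (x e : A) : ℕ → A
  | 0 => 2
  | 1 => x
  | (n+2) => x * Dk x e (n+1) - e * Dk x e n

theorem Dk_map {A B : Type*} [Ring A] [Ring B] (φ : A →+* B) (x e : A) (n : ℕ) :
    φ (Dk x e n) = Dk (φ x) (φ e) n := by
  induction n using Nat.twoStepInduction with
  | zero => simp only [Dk]; exact map_ofNat φ 2
  | one => simp [Dk]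
  | more n h1 h2 => simp [Dk, h1, h2]

theorem Dk_commute {A : Type*} [Ring A] (x e y : A) (hx : Commute x y) (he : Commute e y) (n : ℕ) :
    Commute (Dk x e n) y := by
  induction n using Nat.twoStepInduction with
  | zero => simp only [Dk]; exact Commute.ofNat_left 2 y
  | one => simpa [Dk]
  | more n h1 h2 => simp only [Dk]; exact (hx.mul_left h2).sub_left (he.mul_left h1)

theorem Dk_zero_right {A : Type*} [Ring A] (x : A) (n : ℕ) : Dk x 0 (n+1) = x^(n+1) := by
  induction n with
  | zero => simp [Dk]
  | succ n ih => rw [Dk, ih]; simp [pow_succ']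

theorem Dk_zero_left {A : Type*} [Ring A] (e : A) (n : ℕ) : Dk 0 e (2*n+1) = 0 := by
  induction n with
  | zero => simp [Dk]
  | succ n ih => rw [show 2*(n+1)+1 = (2*n+1)+2 by ring, Dk, ih]; simp

theorem Dk_neg {A : Type*} [Ring A] (x e : A) (n : ℕ) : Dk (-x) e n = (-1)^n * Dk x e n := by
  induction n using Nat.twoStepInduction with
  | zero => simp [Dk]
  | one => simp [Dk]
  | more n h1 h2 =>
    simp only [Dk, h1, h2, pow_succ]
    rcases neg_one_pow_eq_or A n with h | h <;> simp [h] <;> noncomm_ring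

theorem Dk_trace {R : Type*} [CommRing R] (x e : R) (n : ℕ) :
    ((!![x, -e; 1, 0] : Matrix (Fin 2) (Fin 2) R)^n).trace = Dk x e n := by
  induction n using Nat.twoStepInduction with
  | zero => simp [Dk]
  | one => simp [Dk, Matrix.trace_fin_two]
  | more n h1 h2 =>
    have h : (!![x, -e; 1, 0] : Matrix (Fin 2) (Fin 2) R)^2
        = x • (!![x, -e; 1, 0] : Matrix (Fin 2) (Fin 2) R) - e • 1 := by
      ext i j
      fin_cases i <;> fin_cases j <;> simp [pow_two, Matrix.mul_fin_two, Matrix.one_fin_two] <;> ring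
    rw [pow_add, h, mul_sub, Matrix.trace_sub]
    simp only [Matrix.mul_smul, Matrix.trace_smul, mul_one, ← pow_succ, h1, h2, Dk, smul_eq_mul]

/-- scaled eigen case -/
theorem Dk_sq {A : Type*} [Ring A] [Algebra ℂ A] (x : A) (a b : ℂ) (hab : a + b = 1) (n : ℕ) :
    Dk x ((a*b) • x^2) n = (a^n + b^n) • x^n := by
  induction n using Nat.twoStepInduction with
  | zero => simp only [Dk, pow_zero]; norm_num [← Algebra.algebraMap_eq_smul_one]; exact (map_ofNat (algebraMap ℂ A) 2).symm
  | one => simp [Dk, hab]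
  | more n h1 h2 =>
    simp only [Dk, h1, h2, mul_smul_comm, smul_mul_assoc, smul_smul, ← pow_succ', ← pow_add]
    rw [show 2+n = n+2 by ring, show n+1+1 = n+2 by ring, ← sub_smul]
    congr 1
    have : b = 1 - a := by rw [← hab]; ring
    subst this; ring

section comm
variable {R : Type*} [CommRing R] [Algebra ℂ R]

def Bm (x y f0 f1 f2 t : R) : Matrix (Fin 2) (Fin 2) R :=
  !![x - t*y, -(f0 + t*f1 + t^2*f2); 1, 0]

/-- product `B(t) B(pt) ... B(p^(n-1)t)` -/
def Gm (x y f0 f1 f2 : R) (p : ℂ) : ℕ → R → Matrix (Fin 2) (Fin 2) R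
  | 0, _ => 1
  | (n+1), t => Gm x y f0 f1 f2 p n t * Bm x y f0 f1 f2 (p^n • t)

theorem Gm_succ (x y f0 f1 f2 : R) (p : ℂ) (n : ℕ) (t : R) :
    Gm x y f0 f1 f2 p (n+1) t = Gm x y f0 f1 f2 p n t * Bm x y f0 f1 f2 (p^n • t) := rfl

theorem Gm_succ' (x y f0 f1 f2 : R) (p : ℂ) (n : ℕ) (t : R) :
    Gm x y f0 f1 f2 p (n+1) t = Bm x y f0 f1 f2 t * Gm x y f0 f1 f2 p n (p • t) := by
  induction n with
  | zero => simp [Gm]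
  | succ n ih =>
    rw [Gm, ih, Gm, mul_assoc, smul_smul, pow_succ]

theorem Gm_top (y f2 : R) (p : ℂ) (hp : p ≠ 0) (n : ℕ) :
    Gm 0 y 0 0 f2 p n 1 = p^(∑ i ∈ Finset.range n, i) •
      ((!![-y, -(p⁻¹ • f2); 1, 0] : Matrix (Fin 2) (Fin 2) R)^n * !![1, 0; 0, algebraMap ℂ R (p^n)]) := by
  induction n with
  | zero => simp [Gm, Matrix.one_fin_two]
  | succ n ih =>
    have step : !![1, 0; 0, algebraMap ℂ R (p^n)] * Bm 0 y 0 0 f2 (p^n • 1) =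
        p^n • ((!![-y, -(p⁻¹ • f2); 1, 0] : Matrix (Fin 2) (Fin 2) R)
          * !![1, 0; 0, algebraMap ℂ R (p^(n+1))]) := by
      have : algebraMap ℂ R p⁻¹ * algebraMap ℂ R p = 1 := by
        rw [← map_mul, inv_mul_cancel₀ hp, map_one]
      ext i j
      fin_cases i <;> fin_cases j <;> simp [Bm, Algebra.smul_def, pow_succ]
      · linear_combination (algebraMap ℂ R p)^n * (algebraMap ℂ R p)^n * f2 * (-this)
    rw [Gm, ih, Finset.sum_range_succ, pow_add, mul_smul, smul_mul_assoc, Matrix.mul_assoc, step,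
      Matrix.mul_smul, pow_succ (!![-y, -(p⁻¹ • f2); 1, 0] : Matrix (Fin 2) (Fin 2) R) n, Matrix.mul_assoc]

theorem Bm_map {S : Type*} [CommRing S] (φ : R →+* S) (x y f0 f1 f2 t : R) :
    (Bm x y f0 f1 f2 t).map φ = Bm (φ x) (φ y) (φ f0) (φ f1) (φ f2) (φ t) := by
  ext i j
  fin_cases i <;> fin_cases j <;> simp [Bm]

theorem Gm_map {S : Type*} [CommRing S] [Algebra ℂ S] (φ : R →ₐ[ℂ] S) (x y f0 f1 f2 t : R) (p : ℂ) (n : ℕ) :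
    (Gm x y f0 f1 f2 p n t).map φ = Gm (φ x) (φ y) (φ f0) (φ f1) (φ f2) p n (φ t) := by
  induction n with
  | zero => simp [Gm]
  | succ n ih =>
    have := Bm_map (φ : R →+* S) x y f0 f1 f2 (p^n • t)
    simp only [AlgHom.coe_toRingHom, map_smul] at this
    rw [Gm, Matrix.map_mul, ih, this, Gm]

def Hd (d : ℕ) (c : R) (f : R[X]) : Prop := f.natDegree ≤ d ∧ f.coeff d = c

theorem Hd.mul {d e : ℕ} {c c' : R} {f g : R[X]} (hf : Hd d c f) (hg : Hd e c' g) :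
    Hd (d+e) (c*c') (f*g) :=
  ⟨natDegree_mul_le_of_le hf.1 hg.1, by
    rw [coeff_mul_add_eq_of_natDegree_le hf.1 hg.1, hf.2, hg.2]⟩

theorem Hd.add {d : ℕ} {c c' : R} {f g : R[X]} (hf : Hd d c f) (hg : Hd d c' g) :
    Hd d (c+c') (f+g) :=
  ⟨natDegree_add_le_of_degree_le hf.1 hg.1, by rw [coeff_add, hf.2, hg.2]⟩

theorem Gm_Hd (x y f0 f1 f2 : R) (p : ℂ) (n : ℕ) :
    ∀ i j : Fin 2, Hd (n + 1 + j - i) (Gm 0 y 0 0 f2 p (n+1) 1 i j)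
      (Gm (C x) (C y) (C f0) (C f1) (C f2) p (n+1) X i j) := by
  have hB : ∀ s : ℂ, ∀ i j : Fin 2, Hd (1 + j - i) (Bm 0 y 0 0 f2 (s • 1) i j)
      (Bm (C x) (C y) (C f0) (C f1) (C f2) (s • X) i j) := by
    intro s i j
    have h1 : (C x - s • (C y * X)).natDegree ≤ 1 := by
      have : (s • (C y * X) : R[X]) = C (s • y) * X := by ext; simp [coeff_X]
      rw [this]; compute_degree
    have h2 : (C f0 + s • X * C f1 + (s • X)^2 * C f2 : R[X]).natDegree ≤ 2 := by
      have e1 : (s • X * C f1 : R[X]) = C (s • f1) * X := by ext; simp [coeff_X]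
      have e2 : ((s • X)^2 * C f2 : R[X]) = C (s^2 • f2) * X^2 := by
        rw [_root_.smul_pow]; ext; simp [coeff_X_pow]
      rw [e1, e2]; compute_degree
    fin_cases i <;> fin_cases j
    · refine ⟨by simpa [Bm] using h1, ?_⟩
      simp [Bm, coeff_X, coeff_C]
    · refine ⟨by simpa [Bm] using (natDegree_neg _).trans_le h2, ?_⟩
      simp [Bm, coeff_X, coeff_C, _root_.smul_pow, coeff_X_pow]
    · simp [Bm, Hd]
    · simp [Bm, Hd]
  induction n with
  | zero => simpa [Gm] using hB 1
  | succ n ih =>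
    intro i j
    rw [Gm_succ _ _ _ _ _ _ (n+1), Gm_succ _ _ _ _ _ _ (n+1), Matrix.mul_apply, Matrix.mul_apply, Fin.sum_univ_two, Fin.sum_univ_two]
    have key : ∀ l : Fin 2, Hd (n + 1 + 1 + j - i)
        (Gm 0 y 0 0 f2 p (n+1) 1 i l * Bm 0 y 0 0 f2 (p^(n+1) • 1) l j)
        (Gm (C x) (C y) (C f0) (C f1) (C f2) p (n+1) X i l *
          Bm (C x) (C y) (C f0) (C f1) (C f2) (p^(n+1) • X) l j) := by
      intro l
      have := (ih i l).mul (hB (p^(n+1)) l j)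
      rwa [show n + 1 + (l:ℕ) - i + (1 + j - l) = n+1+1+j-i by omega] at this
    exact (key 0).add (key 1)

theorem trace_key (x y f0 f1 f2 : R) (N : ℕ) (hN : Odd N) (p : ℂ) (hp : IsPrimitiveRoot p N) :
    (Gm x y f0 f1 f2 p N 1).trace = Dk x f0 N - Dk y (p⁻¹ • f2) N := by
  have hN0 : N ≠ 0 := by rintro rfl; simp at hN
  have hp0 : p ≠ 0 := hp.ne_zero hN0
  obtain ⟨m, hm⟩ : ∃ m, N = m + 1 := ⟨N - 1, by omega⟩
  set F := (Gm (C x) (C y) (C f0) (C f1) (C f2) p N X).trace with hF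
  have hdeg : Hd N ((Gm 0 y 0 0 f2 p N 1).trace) F := by
    rw [hF, Matrix.trace_fin_two, Matrix.trace_fin_two]
    have h := Gm_Hd x y f0 f1 f2 p m
    rw [← hm] at h
    have := (h 0 0).add (h 1 1)
    simpa using this
  -- invariance
  have hcyc : (Gm (C x) (C y) (C f0) (C f1) (C f2) p N (p • X)).trace = F := by
    rw [hF, hm, Gm_succ' _ _ _ _ _ _ _ X, Matrix.trace_mul_comm, Gm, smul_smul, ← pow_succ, ← hm, hp.pow_eq_one, one_smul]
  have hcomp : F.comp (p • X) = F := by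
    conv_rhs => rw [← hcyc]
    have h := Gm_map ((Polynomial.aeval (p • X : R[X]) : R[X] →ₐ[R] R[X]).restrictScalars ℂ)
      (C x) (C y) (C f0) (C f1) (C f2) X p N
    have h2 := congrArg Matrix.trace h
    simp only [AlgHom.coe_restrictScalars', aeval_C, aeval_X, algebraMap_eq] at h2
    rw [← h2, hF, comp_eq_aeval]
    simp [Matrix.trace_fin_two]
  have hcoeff : ∀ k, F.coeff k = p^k • F.coeff k := by
    intro k
    conv_lhs => rw [← hcomp]
    have : (p • X : R[X]) = C (algebraMap ℂ R p) * X := by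
      ext; simp [Algebra.smul_def]
    rw [this, comp_C_mul_X_coeff, Algebra.smul_def, mul_comm, map_pow]
  have hz : ∀ k, k < N → k ≠ 0 → F.coeff k = 0 := by
    intro k hk hk0
    have h1 := hcoeff k
    have h2 : (p^k - 1) • F.coeff k = 0 := by rw [sub_smul, one_smul, ← h1, sub_self]
    have h3 : p^k - 1 ≠ 0 := sub_ne_zero.2 (hp.pow_ne_one_of_pos_of_lt hk0 hk)
    rw [← one_smul ℂ (F.coeff k), ← inv_mul_cancel₀ h3, mul_smul, h2, smul_zero]
  have heval : ∀ r : R, F.eval r = (Gm x y f0 f1 f2 p N r).trace := by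
    intro r
    have h := Gm_map ((Polynomial.aeval r : R[X] →ₐ[R] R).restrictScalars ℂ)
      (C x) (C y) (C f0) (C f1) (C f2) X p N
    have h2 := congrArg Matrix.trace h
    simp only [AlgHom.coe_restrictScalars', aeval_C, aeval_X] at h2
    simp only [Algebra.algebraMap_self, RingHom.id_apply] at h2
    rw [← h2, hF, ← coe_aeval_eq_eval]
    simp [Matrix.trace_fin_two]
  have h1 : F.eval 1 = F.coeff 0 + F.coeff N := by
    rw [eval_eq_sum_range' (n := N+1) (by have := hdeg.1; omega), Finset.sum_range_succ]
    congr 1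
    · rw [hm, Finset.sum_range_succ', Finset.sum_eq_zero]
      · simp
      · intro k hk
        rw [Finset.mem_range] at hk
        rw [hz (k+1) (by omega) (by omega)]; simp
    · simp
  have h0 : F.coeff 0 = Dk x f0 N := by
    rw [coeff_zero_eq_eval_zero, heval, ← Dk_trace]
    have : ∀ n, Gm x y f0 f1 f2 p n 0 = (!![x, -f0; 1, 0] : Matrix (Fin 2) (Fin 2) R)^n := by
      intro n
      induction n with
      | zero => simp [Gm]
      | succ n ih => rw [Gm, ih, pow_succ]; simp [Bm]
    rw [this]
  rw [← heval, h1, h0, hdeg.2, Gm_top _ _ _ hp0]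
  have hsum : p^(∑ i ∈ Finset.range N, i) = 1 := by
    obtain ⟨k, hk⟩ := hN
    rw [Finset.sum_range_id, hk, show (2*k+1)*(2*k+1-1)/2 = (2*k+1)*k from ?_, pow_mul, ← hk, hp.pow_eq_one, one_pow]
    rw [show 2*k+1-1 = k*2 by omega, ← mul_assoc]; simp
  rw [hsum, hp.pow_eq_one, map_one, ← Matrix.one_fin_two, mul_one, one_smul, Dk_trace, Dk_neg, hN.neg_one_pow]
  ring

end comm
end

section
theorem key_module {A : Type*} [Ring A] [Algebra ℂ A] {R : Type*} [CommRing R] [Algebra ℂ R]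
    (φ : R →ₐ[ℂ] Module.End ℂ A) (x y f0 f1 f2 : R) (N : ℕ) (hN : Odd N) (Q : ℂ)
    (hQ : IsPrimitiveRoot Q N) (P M Y g0 g1 g2 : A)
    (hx : ∀ a, φ x a = (P + Y + M) * a) (hy : ∀ a, φ y a = a * Y)
    (h0 : ∀ a, φ f0 a = a * g0) (h1 : ∀ a, φ f1 a = a * g1) (h2 : ∀ a, φ f2 a = a * g2)
    (hMP : M * P = g0 + g1 + g2) (hPM : P * M = g0 + Q • g1 + Q^2 • g2)
    (hPY : P * Y = Q • (Y * P)) (hYM : Y * M = Q • (M * Y))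
    (hP0 : P * g0 = g0 * P) (hP1 : P * g1 = Q • (g1 * P)) (hP2 : P * g2 = Q^2 • (g2 * P))
    (hM0 : g0 * M = M * g0) (hM1 : g1 * M = Q • (M * g1)) (hM2 : g2 * M = Q^2 • (M * g2)) :
    P^N + M^N = φ (Dk x f0 N) 1 - φ (Dk y (Q • f2) N) 1 := by
  have hN0 : N ≠ 0 := by rintro rfl; simp at hN
  have hQ0 : Q ≠ 0 := hQ.ne_zero hN0
  set p := Q⁻¹ with hp
  have hpQ : p * Q = 1 := inv_mul_cancel₀ hQ0
  have hpp : IsPrimitiveRoot p N := hQ.inv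
  have swapP : ∀ (g : A) (s : ℂ), P * g = s • (g * P) → s ≠ 0 → ∀ j : ℕ,
      g * P^j = (s⁻¹)^j • (P^j * g) := by
    intro g s h hs j
    have h' : g * P = s⁻¹ • (P * g) := by rw [h, smul_smul, inv_mul_cancel₀ hs, one_smul]
    induction j with
    | zero => simp
    | succ j ih =>
      rw [pow_succ, ← mul_assoc, ih, smul_mul_assoc, mul_assoc, h', mul_smul_comm, smul_smul,
        ← pow_succ, mul_assoc]
  have swapM : ∀ (g : A) (s : ℂ), g * M = s • (M * g) → ∀ j : ℕ,
      g * M^j = s^j • (M^j * g) := by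
    intro g s h j
    induction j with
    | zero => simp
    | succ j ih =>
      rw [pow_succ, ← mul_assoc, ih, smul_mul_assoc, mul_assoc, h, mul_smul_comm, smul_smul,
        ← pow_succ, mul_assoc]
  have hv : ∀ j : ℕ, P^j = φ (Gm x y f0 f1 f2 p j 1 0 0) 1 - φ (Gm x y f0 f1 f2 p j 1 1 0) M ∧
      -(M * P^j) = φ (Gm x y f0 f1 f2 p j 1 0 1) 1 - φ (Gm x y f0 f1 f2 p j 1 1 1) M := by
    intro j
    induction j with
    | zero => simp [Gm]
    | succ j ih =>
      have e1 : P^(j+1) = φ (x - p^j • y) (P^j) - M * P^j := by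
        rw [map_sub, map_smul, LinearMap.sub_apply, LinearMap.smul_apply, hx, hy, hp,
          ← swapP Y Q hPY hQ0, pow_succ']
        noncomm_ring
      have e2 : M * P^(j+1) = φ (f0 + p^j • f1 + (p^j)^2 • f2) (P^j) := by
        simp only [map_add, map_smul, LinearMap.add_apply, LinearMap.smul_apply, h0, h1, h2]
        rw [pow_succ', ← mul_assoc, hMP, add_mul, add_mul, swapP g0 1 (by simpa using hP0) one_ne_zero,
          swapP g1 Q hP1 hQ0, swapP g2 (Q^2) hP2 (pow_ne_zero _ hQ0)]
        simp only [inv_one, one_pow, one_smul, hp]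
        congr 2
        rw [← inv_pow, ← pow_mul, ← pow_mul, mul_comm]
      have comm : ∀ r s : R, ∀ a, φ r (φ s a) = φ (s * r) a := by
        intro r s a; rw [mul_comm, map_mul]; rfl
      obtain ⟨ih1, ih2⟩ := ih
      constructor
      · rw [e1, sub_eq_add_neg, ih2, ih1, map_sub (φ (x - p^j • y)), comm, comm]
        simp only [Gm, Matrix.mul_apply, Fin.sum_univ_two]
        simp [Bm]
        abel
      · rw [e2, ih1]
        simp only [Gm, Matrix.mul_apply, Fin.sum_univ_two, map_sub, comm]
        simp [Bm, smul_pow]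
        abel
  have hw : ∀ k : ℕ, M^(k+1) = φ (Gm x y f0 f1 f2 p k (Q^k • 1) 0 0) M + φ (Gm x y f0 f1 f2 p k (Q^k • 1) 0 1) 1 ∧
      M^k = φ (Gm x y f0 f1 f2 p k (Q^k • 1) 1 0) M + φ (Gm x y f0 f1 f2 p k (Q^k • 1) 1 1) 1 := by
    intro k
    induction k with
    | zero => simp [Gm]
    | succ k ih =>
      have e1 : M^(k+2) = φ (x - Q^(k+1) • y) (M^(k+1)) - φ (f0 + Q^(k+1) • f1 + (Q^(k+1))^2 • f2) (M^k) := by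
        have : P * M^(k+1) = φ (f0 + Q^(k+1) • f1 + (Q^(k+1))^2 • f2) (M^k) := by
          simp only [map_add, map_smul, LinearMap.add_apply, LinearMap.smul_apply, h0, h1, h2]
          rw [pow_succ', ← mul_assoc, hPM, add_mul, add_mul, smul_mul_assoc, smul_mul_assoc,
            swapM g0 1 (by simpa using hM0), swapM g1 Q hM1, swapM g2 (Q^2) hM2]
          simp only [one_pow, one_smul, smul_smul]
          congr 2 <;> ring
        rw [← this]
        rw [map_sub, map_smul, LinearMap.sub_apply, LinearMap.smul_apply, hx, hy, 
          ← swapM Y Q hYM, pow_succ' M (k+1)]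
        noncomm_ring
      have comm : ∀ r s : R, ∀ a, φ r (φ s a) = φ (r * s) a := by
        intro r s a; rw [map_mul]; rfl
      obtain ⟨ih1, ih2⟩ := ih
      have hs : p • Q^(k+1) • (1:R) = Q^k • 1 := by
        rw [smul_smul, pow_succ', ← mul_assoc, hpQ, one_mul]
      have G : Gm x y f0 f1 f2 p (k+1) (Q^(k+1) • 1) = 
        Bm x y f0 f1 f2 (Q^(k+1) • 1) * Gm x y f0 f1 f2 p k (Q^k • 1) := by
        rw [Gm_succ', hs]
      rw [G]
      constructor
      · rw [e1, ih1, ih2]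
        simp only [Matrix.mul_apply, Fin.sum_univ_two, map_add, comm]
        simp [Bm, smul_pow]
        abel
      · rw [ih1]
        simp [Matrix.mul_apply, Fin.sum_univ_two, Bm]
  obtain ⟨m, hm⟩ : ∃ m, N = m + 1 := ⟨N - 1, by omega⟩
  have t := trace_key x y f0 f1 f2 N hN p hpp
  have hpi : p⁻¹ = Q := by simp [hp]
  rw [hpi] at t
  rw [← LinearMap.sub_apply, ← map_sub, ← t, (hv N).1]
  have hQm : Q^m = p := by
    have := hQ.pow_eq_one
    rw [hm, pow_succ] at this
    exact eq_inv_of_mul_eq_one_left this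
  have hw1 := (hw m).1
  rw [hQm, ← hm] at hw1
  rw [hw1, Matrix.trace_fin_two, hm, Gm_succ']
  simp [Matrix.mul_apply, Fin.sum_univ_two, Bm]
  abel

theorem Dk_apply {A : Type*} [Ring A] [Algebra ℂ A] (L e : A) (h : Commute L e) (X E : Module.End ℂ A)
    (hX : ∀ a, X a = L * a) (hE : ∀ a, E a = a * e) (n : ℕ) : Dk X E n 1 = Dk L e n := by
  induction n using Nat.twoStepInduction with
  | zero => simp only [Dk]; rw [Module.End.ofNat_apply]; simp
  | one => simp [Dk, hX]
  | more n h1 h2 =>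
    simp only [Dk, LinearMap.sub_apply, Module.End.mul_apply, h1, h2, hX, hE]
    rw [(Dk_commute L e e h (Commute.refl e) n).eq]

theorem Dk_apply' {A : Type*} [Ring A] [Algebra ℂ A] (L e : A) (h : Commute L e) (X E : Module.End ℂ A)
    (hX : ∀ a, X a = a * L) (hE : ∀ a, E a = a * e) (n : ℕ) : Dk X E n 1 = Dk L e n := by
  induction n using Nat.twoStepInduction with
  | zero => simp only [Dk]; rw [Module.End.ofNat_apply]; simp
  | one => simp [Dk, hX]
  | more n h1 h2 =>
    simp only [Dk, LinearMap.sub_apply, Module.End.mul_apply, h1, h2, hX, hE]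
    rw [(Dk_commute L e e h (Commute.refl e) n).eq, (Dk_commute L e L (Commute.refl L) h.symm _).eq]

/-- Key lemma. -/
theorem key {A : Type*} [Ring A] [Algebra ℂ A] (N : ℕ) (hN : Odd N) (Q : ℂ)
    (hQ : IsPrimitiveRoot Q N) (P M Y g0 g1 g2 : A)
    (hMP : M * P = g0 + g1 + g2) (hPM : P * M = g0 + Q • g1 + Q^2 • g2)
    (hPY : P * Y = Q • (Y * P)) (hYM : Y * M = Q • (M * Y))
    (hP0 : P * g0 = g0 * P) (hP1 : P * g1 = Q • (g1 * P)) (hP2 : P * g2 = Q^2 • (g2 * P))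
    (hM0 : g0 * M = M * g0) (hM1 : g1 * M = Q • (M * g1)) (hM2 : g2 * M = Q^2 • (M * g2))
    (hY0 : Commute Y g0) (hY1 : Commute Y g1) (hY2 : Commute Y g2)
    (h01 : Commute g0 g1) (h02 : Commute g0 g2) (h12 : Commute g1 g2) :
    Dk (P + Y + M) g0 N = P^N + M^N + Dk Y (Q • g2) N := by
  set s : Set (Module.End ℂ A) := {LinearMap.mulLeft ℂ (P+Y+M), LinearMap.mulRight ℂ Y,
    LinearMap.mulRight ℂ g0, LinearMap.mulRight ℂ g1, LinearMap.mulRight ℂ g2} with hs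
  have hLR : ∀ a b : A, LinearMap.mulLeft ℂ a * LinearMap.mulRight ℂ b = LinearMap.mulRight ℂ b * LinearMap.mulLeft ℂ a := by
    intro a b; ext c; simp [mul_assoc]
  have hRR : ∀ a b : A, Commute a b → LinearMap.mulRight ℂ a * LinearMap.mulRight ℂ b = LinearMap.mulRight ℂ b * LinearMap.mulRight ℂ a := by
    intro a b h; ext c; simp [mul_assoc, h.eq]
  have hcomm : ∀ a ∈ s, ∀ b ∈ s, a * b = b * a := by
    intro a ha b hb
    simp only [hs, Set.mem_insert_iff, Set.mem_singleton_iff] at ha hb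
    rcases ha with rfl | rfl | rfl | rfl | rfl <;> rcases hb with rfl | rfl | rfl | rfl | rfl <;>
    first
    | rfl
    | exact hLR _ _
    | exact (hLR _ _).symm
    | (apply hRR; assumption)
    | (apply hRR; apply Commute.symm; assumption)
  letI : CommRing (Algebra.adjoin ℂ s) := Algebra.adjoinCommRingOfComm ℂ hcomm
  have mem : ∀ a ∈ s, a ∈ Algebra.adjoin ℂ s := fun a ha => Algebra.subset_adjoin ha
  let φ : Algebra.adjoin ℂ s →ₐ[ℂ] Module.End ℂ A := (Algebra.adjoin ℂ s).val
  let x : Algebra.adjoin ℂ s := ⟨LinearMap.mulLeft ℂ (P+Y+M), mem _ (by simp [hs])⟩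
  let y : Algebra.adjoin ℂ s := ⟨LinearMap.mulRight ℂ Y, mem _ (by simp [hs])⟩
  let f0 : Algebra.adjoin ℂ s := ⟨LinearMap.mulRight ℂ g0, mem _ (by simp [hs])⟩
  let f1 : Algebra.adjoin ℂ s := ⟨LinearMap.mulRight ℂ g1, mem _ (by simp [hs])⟩
  let f2 : Algebra.adjoin ℂ s := ⟨LinearMap.mulRight ℂ g2, mem _ (by simp [hs])⟩
  have km := key_module φ x y f0 f1 f2 N hN Q hQ P M Y g0 g1 g2 (fun a => rfl) (fun a => rfl) (fun a => rfl)
    (fun a => rfl) (fun a => rfl) hMP hPM hPY hYM hP0 hP1 hP2 hM0 hM1 hM2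
  have m1 : φ (Dk x f0 N) = Dk (φ x) (φ f0) N := Dk_map φ.toRingHom x f0 N
  have m2 : φ (Dk y (Q • f2) N) = Dk (φ y) (φ (Q • f2)) N := Dk_map φ.toRingHom y (Q • f2) N
  rw [m1, m2, Dk_apply (P+Y+M) g0 ?_ _ _ (fun a => rfl) (fun a => rfl),
    Dk_apply' Y (Q • g2) ?_ _ _ (fun a => rfl) ?_] at km
  · rw [km]; abel
  · exact hY2.smul_right Q
  · intro a
    rw [map_smul, LinearMap.smul_apply, mul_smul_comm]; rfl
  · exact ((show Commute P g0 from hP0).add_left hY0).add_left (show Commute M g0 from hM0.symm)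

theorem Dk_zero_right' {A : Type*} [Ring A] (x : A) (N : ℕ) (h : N ≠ 0) : Dk x 0 N = x^N := by
  obtain ⟨m, rfl⟩ : ∃ m, N = m + 1 := ⟨N - 1, by omega⟩
  exact Dk_zero_right x m

/-- q-binomial -/
theorem qbinom {A : Type*} [Ring A] [Algebra ℂ A] (N : ℕ) (hN : Odd N) (Q : ℂ)
    (hQ : IsPrimitiveRoot Q N) (P M : A) (h : P * M = Q • (M * P)) : (P+M)^N = P^N+M^N := by
  have hN0 : N ≠ 0 := by rintro rfl; simp at hN
  have := key N hN Q hQ P M 0 0 (M*P) 0 (by simp) (by simp [h]) (by simp) (by simp) (by simp)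
    (by rw [← mul_assoc, h, smul_mul_assoc]) (by simp) (by simp) 
    (by rw [mul_assoc, h, mul_smul_comm]) (by simp) (by simp) (by simp) (by simp) (by simp) (by simp) (by simp)
  rw [Dk_zero_right' _ _ hN0, smul_zero, Dk_zero_right' _ _ hN0, zero_pow hN0] at this
  simpa using this

theorem qshort {A : Type*} [Ring A] [Algebra ℂ A] (N : ℕ) (hN : Odd N) (hN1 : 1 < N) (q : ℂ)
    (hq : IsPrimitiveRoot q N) (P M C : A) (h : P * M = q • (M * P) + C)
    (hPC : P * C = q^2 • (C * P)) (hCM : C * M = q^2 • (M * C)) : (P+M)^N = P^N+M^N := by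
  have hN0 : N ≠ 0 := by rintro rfl; simp at hN
  have hq0 : q ≠ 0 := hq.ne_zero hN0
  have hq1 : 1 - q ≠ 0 := sub_ne_zero.2 (hq.ne_one hN1).symm
  obtain ⟨l, hl⟩ : ∃ l : ℂ, l = q⁻¹ + l * q := ⟨q⁻¹ / (1-q), by field_simp; ring⟩
  have hl' : q * l = 1 + l * q^2 := by
    calc q * l = q * (q⁻¹ + l * q) := by rw [← hl]
      _ = _ := by rw [mul_add, mul_inv_cancel₀ hq0]; ring
  have e1 : P * (M * P + l • C) = q • ((M * P + l • C) * P) := by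
    rw [mul_add, ← mul_assoc, h, mul_smul_comm, hPC]
    simp only [add_mul, smul_mul_assoc, smul_add, smul_smul, hl', add_smul, one_smul]
    abel
  have e2 : (M * P + l • C) * M = q • (M * (M * P + l • C)) := by
    rw [add_mul, mul_assoc, h, smul_mul_assoc, hCM]
    simp only [mul_add, mul_smul_comm, smul_add, smul_smul, hl', add_smul, one_smul]
    abel
  have e3 : Commute (M * P + l • C) C := by
    have : Commute (M * P) C := by
      show M * P * C = C * (M * P)
      rw [mul_assoc, hPC, ← mul_assoc, hCM, mul_smul_comm, smul_mul_assoc, mul_assoc]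
    exact this.add_left ((Commute.refl C).smul_left l)
  have := key N hN q hq P M 0 0 (M*P + l • C) (-(l • C)) (by simp) 
    (by rw [h, smul_add, smul_neg, smul_smul, smul_smul, hl', add_smul, one_smul, mul_comm l]; abel) (by simp) (by simp) (by simp)
    e1 (by simp [hPC, smul_smul, mul_comm]) (by simp) e2 (by simp [hCM, smul_smul, mul_comm]) 
    (by simp) (by simp) (by simp) (by simp) (by simp) ((e3.smul_right l).neg_right)
  rw [Dk_zero_right' _ _ hN0] at this
  obtain ⟨k, hk⟩ := hN
  rw [show Dk 0 (q • -(l • C)) N = 0 by rw [hk]; exact Dk_zero_left _ _] at this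
  simpa using this
end

section
section abstractPart
variable {E : Type*} [Ring E] [Algebra ℂ E]

def Osum (n : ℕ) (v : ℂ) (α : ℕ → E) (b : ℕ) : E :=
  ∑ m ∈ Finset.Ico 1 b, v ^ (-(twoRho n m)) • (α m * α (pr n m))

structure Eucl (n : ℕ) (q v : ℂ) (α : ℕ → E) : Prop where
  qc : ∀ a b, a < b → a + b ≠ n + 1 → α a * α b = q • (α b * α a)
  pair : ∀ b, 1 ≤ b → 2 * b < n + 1 → q^2 • (α (pr n b) * α b) =
    α b * α (pr n b) - ((q^2 - 1) * v ^ (twoRho n b)) • Osum n v α b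
  total : ∑ k ∈ Finset.Icc 1 n, v ^ (-(twoRho n k)) • (α k * α (pr n k)) = 0

theorem Osum_map {F : Type*} [Ring F] [Algebra ℂ F] (φ : E →ₐ[ℂ] F) (n : ℕ) (v : ℂ) (α : ℕ → E) (b : ℕ) :
    Osum n v (fun k => φ (α k)) b = φ (Osum n v α b) := by
  simp [Osum]

theorem Eucl.map {F : Type*} [Ring F] [Algebra ℂ F] {n : ℕ} {q v : ℂ} {α : ℕ → E} (h : Eucl n q v α)
    (φ : E →ₐ[ℂ] F) : Eucl n q v (fun k => φ (α k)) where
  qc a b h1 h2 := by rw [← map_mul, h.qc a b h1 h2, map_smul, map_mul]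
  pair b h1 h2 := by
    rw [Osum_map, ← map_mul, ← map_mul, ← map_smul, h.pair b h1 h2, map_sub, map_smul]
  total := by
    have := congrArg φ h.total
    simpa using this

theorem Osum_succ (n : ℕ) (v : ℂ) (α : ℕ → E) (b : ℕ) (hb : 1 ≤ b) :
    Osum n v α (b+1) = Osum n v α b + v ^ (-(twoRho n b)) • (α b * α (pr n b)) := by
  rw [Osum, Finset.sum_Ico_succ_top hb, Osum]

variable {n : ℕ} {q v : ℂ} {α : ℕ → E}

theorem Eucl.uw (hv : v ≠ 0) (b : ℕ) (hb : 1 ≤ b) :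
    α b * α (pr n b) = v ^ (twoRho n b) • (Osum n v α (b+1) - Osum n v α b) := by
  rw [Osum_succ n v α b hb, add_sub_cancel_left, smul_smul, ← zpow_add₀ hv, add_neg_cancel, zpow_zero, one_smul]

theorem Eucl.wu (h : Eucl n q v α) (hv : v ≠ 0) (hq : q ≠ 0) (b : ℕ) (hb : 1 ≤ b) (hb2 : 2 * b < n + 1) :
    α (pr n b) * α b = v ^ (twoRho n b) • ((q^2)⁻¹ • Osum n v α (b+1) - Osum n v α b) := by
  have hq2 : q^2 ≠ 0 := pow_ne_zero _ hq
  have := h.pair b hb hb2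
  rw [Eucl.uw hv b hb] at this
  have h2 := congrArg (fun x => (q^2)⁻¹ • x) this
  simp only [smul_smul, inv_mul_cancel₀ hq2, one_smul] at h2
  rw [h2]
  simp only [smul_sub, smul_smul]
  rw [sub_sub, ← add_smul]
  congr 2
  · ring
  · field_simp; ring

theorem Eucl.Ocomm (h : Eucl n q v α) (hq : q ≠ 0) (b m : ℕ) (hb : b ≤ m) (hm : m ≤ pr n b) (hbn : b ≤ n) :
    Commute (Osum n v α b) (α m) := by
  refine Commute.sum_left _ _ _ fun k hk => Commute.smul_left ?_ _
  simp only [pr, Finset.mem_Ico] at *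
  have h1 := h.qc k m (by omega) (by omega)
  have h2 := h.qc m (n+1-k) (by omega) (by omega)
  show α k * α (n+1-k) * α m = α m * (α k * α (n+1-k))
  have h3 : α (n+1-k) * α m = q⁻¹ • (α m * α (n+1-k)) := by
    rw [h2, smul_smul, inv_mul_cancel₀ hq, one_smul]
  rw [mul_assoc, h3, mul_smul_comm, ← mul_assoc, h1, smul_mul_assoc, smul_smul, inv_mul_cancel₀ hq, one_smul, mul_assoc]

theorem Eucl.uO (h : Eucl n q v α) (hv : v ≠ 0) (hq : q ≠ 0) (b : ℕ) (hb : 1 ≤ b) (hb2 : 2 * b < n + 1) :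
    α b * Osum n v α (b+1) = q^2 • (Osum n v α (b+1) * α b) := by
  have hq2 : q^2 ≠ 0 := pow_ne_zero _ hq
  have hc := (h.Ocomm hq b b le_rfl (by simp only [pr]; omega) (by omega)).eq
  have : Osum n v α (b+1) * α b = (q^2)⁻¹ • (α b * Osum n v α (b+1)) := by
    conv_lhs => rw [Osum_succ n v α b hb]
    rw [add_mul, smul_mul_assoc, mul_assoc, h.wu hv hq b hb hb2, hc, mul_smul_comm, smul_smul, ← zpow_add₀ hv,
      neg_add_cancel, zpow_zero, one_smul, mul_sub, mul_smul_comm]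
    abel
  rw [this, smul_smul, mul_inv_cancel₀ hq2, one_smul]

theorem Eucl.Ow (h : Eucl n q v α) (hv : v ≠ 0) (hq : q ≠ 0) (b : ℕ) (hb : 1 ≤ b) (hb2 : 2 * b < n + 1) :
    Osum n v α (b+1) * α (pr n b) = q^2 • (α (pr n b) * Osum n v α (b+1)) := by
  have hq2 : q^2 ≠ 0 := pow_ne_zero _ hq
  have hc := (h.Ocomm hq b (pr n b) (by simp only [pr]; omega) le_rfl (by omega)).eq
  have : α (pr n b) * Osum n v α (b+1) = (q^2)⁻¹ • (Osum n v α (b+1) * α (pr n b)) := by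
    conv_lhs => rw [Osum_succ n v α b hb]
    rw [mul_add, mul_smul_comm, ← mul_assoc, h.wu hv hq b hb hb2, smul_mul_assoc, smul_smul, ← zpow_add₀ hv,
      neg_add_cancel, zpow_zero, one_smul, sub_mul, smul_mul_assoc, hc]
    abel
  rw [this, smul_smul, mul_inv_cancel₀ hq2, one_smul]

theorem Eucl.OO (h : Eucl n q v α) (hq : q ≠ 0) (b : ℕ) (hb : 1 ≤ b) (hb2 : 2 * b < n + 1) :
    Commute (Osum n v α b) (Osum n v α (b+1)) := by
  rw [Osum_succ n v α b hb]
  refine (Commute.refl _).add_right (Commute.smul_right (Commute.mul_right ?_ ?_) _)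
  · exact h.Ocomm hq b b le_rfl (by simp only [pr]; omega) (by omega)
  · exact h.Ocomm hq b (pr n b) (by simp only [pr]; omega) le_rfl (by omega)

theorem twoRho_lt (n b : ℕ) (h : 2 * b < n + 1) : twoRho n b = n - 2 * b := by simp [twoRho, h]

theorem twoRho_pr (n b : ℕ) (hb : 1 ≤ b) (h : 2 * b < n + 1) : twoRho n (pr n b) = -(n - 2 * b) := by
  have h1 : ¬ 2 * (n+1-b) < n+1 := by omega
  have h2 : ¬ 2 * (n+1-b) = n+1 := by omega
  simp only [twoRho, pr, h1, h2, if_false]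
  push_cast [show b ≤ n + 1 by omega]
  ring

theorem Eucl.center (h : Eucl n q v α) (hv : v ≠ 0) (hvq : v^2 = q) (c : ℕ) (hc : 2 * c = n + 1) :
    α c ^ 2 = -((1 + q⁻¹) • Osum n v α c) := by
  have hq : q ≠ 0 := by rw [← hvq]; exact pow_ne_zero _ hv
  have hpc : pr n c = c := by simp only [pr]; omega
  have key : ∀ b, 1 ≤ b → b ≤ c → ∑ m ∈ Finset.Ico 1 b, v ^ (twoRho n m) • (α (pr n m) * α m) =
      q ^ ((n:ℤ) - 2 * b) • Osum n v α b := by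
    intro b hb
    induction b, hb using Nat.le_induction with
    | base => intro _; simp [Osum]
    | succ b hb ih =>
      intro hbc
      rw [Finset.sum_Ico_succ_top hb, ih (by omega), h.wu hv hq b hb (by omega)]
      rw [smul_smul, smul_sub, smul_smul, twoRho_lt n b (by omega), ← zpow_add₀ hv]
      have e1 : v ^ ((n:ℤ) - 2 * b + (n - 2 * b)) = q ^ ((n:ℤ) - 2 * b) := by
        rw [← hvq, ← zpow_natCast, ← zpow_mul]; congr 1; push_cast; ring
      have e2 : q ^ ((n:ℤ) - 2 * b) * (q^2)⁻¹ = q ^ ((n:ℤ) - 2 * (b+1 : ℕ)) := by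
        rw [← zpow_natCast, ← zpow_neg, ← zpow_add₀ hq]; congr 1; push_cast; ring
      rw [e1, e2]; abel
  have k := key c (by omega) le_rfl
  rw [show (n:ℤ) - 2 * c = -1 by omega, zpow_neg_one] at k
  have t := h.total
  have e : Finset.Icc 1 n = (Finset.Ico 1 c ∪ {c}) ∪ (Finset.Ico 1 c).image (pr n) := by
    ext m
    simp only [Finset.mem_union, Finset.mem_Icc, Finset.mem_Ico, Finset.mem_singleton, Finset.mem_image, pr]
    constructor
    · intro hm
      rcases lt_trichotomy m c with h | h | h
      · left; left; omega
      · left; right; exact h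
      · right; exact ⟨n+1-m, by omega, by omega⟩
    · rintro ((h | h) | ⟨a, h, h'⟩) <;> omega
  rw [e, Finset.sum_union, Finset.sum_union, Finset.sum_image, Finset.sum_singleton] at t
  · have e2 : ∑ m ∈ Finset.Ico 1 c, v ^ (-(twoRho n (pr n m))) • (α (pr n m) * α (pr n (pr n m))) =
        ∑ m ∈ Finset.Ico 1 c, v ^ (twoRho n m) • (α (pr n m) * α m) := by
      refine Finset.sum_congr rfl fun m hm => ?_
      rw [Finset.mem_Ico] at hm
      rw [twoRho_pr n m hm.1 (by omega), twoRho_lt n m (by omega), neg_neg]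
      congr 3
      simp only [pr]; omega
    have h0 : twoRho n c = 0 := by simp [twoRho, hc]
    rw [e2, k, hpc, h0, neg_zero, zpow_zero, one_smul, ← Osum] at t
    rw [add_smul, one_smul, pow_two]
    rw [add_right_comm] at t
    exact eq_neg_of_add_eq_zero_right t
  · intro a ha b hb hab
    simp only [Finset.coe_Ico, Set.mem_Ico, pr] at *; omega
  · simp
  · rw [Finset.disjoint_left]
    simp only [Finset.mem_union, Finset.mem_Ico, Finset.mem_singleton, Finset.mem_image, pr]
    rintro a ha ⟨b, hb, h⟩
    omega

end abstractPart
end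

section
section abstractPart
variable {E : Type*} [Ring E] [Algebra ℂ E]

theorem prod_qc {a1 a2 b1 b2 : E} {s t : ℂ} (ha : a1 * a2 = s • (a2 * a1)) (hb : b1 * b2 = t • (b2 * b1))
    (h1 : Commute a2 b1) (h2 : Commute a1 b2) : (a1 * b1) * (a2 * b2) = (s * t) • ((a2 * b2) * (a1 * b1)) := by
  rw [h1.symm.mul_mul_mul_comm, h2.symm.mul_mul_mul_comm, ha, hb, smul_mul_smul_comm]

theorem peel (N : ℕ) (hN : Odd N) (Q : ℂ) (hQ : IsPrimitiveRoot Q N) (x : ℕ → E) (s : Finset ℕ)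
    (h : ∀ k ∈ s, ∀ l ∈ s, k < l → x k * x l = Q • (x l * x k)) :
    (∑ k ∈ s, x k)^N = ∑ k ∈ s, x k ^ N := by
  induction s using Finset.induction_on_min with
  | empty => simp only [Finset.sum_empty]; exact zero_pow (by rintro rfl; simp at hN)
  | insert a s ha ih =>
    have has : a ∉ s := fun h => (ha a h).false
    rw [Finset.sum_insert has, Finset.sum_insert has, qbinom N hN Q hQ, ih]
    · intro k hk l hl; exact h k (Finset.mem_insert_of_mem hk) l (Finset.mem_insert_of_mem hl)
    · rw [Finset.mul_sum, Finset.sum_mul, Finset.smul_sum]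
      exact Finset.sum_congr rfl fun l hl =>
        h a (Finset.mem_insert_self _ _) l (Finset.mem_insert_of_mem hl) (ha l hl)

variable {n : ℕ} {q v : ℂ} {α β : ℕ → E}

theorem Osum_comm (b : ℕ) (y : E) (h : ∀ k, Commute (α k) y) : Commute (Osum n v α b) y :=
  Commute.sum_left _ _ _ fun k _ => Commute.smul_left ((h _).mul_left (h _)) _

theorem mid_sum_split {M : Type*} [AddCommMonoid M] (n b : ℕ) (hb : 1 ≤ b) (hb2 : 2 * b < n + 1) (f : ℕ → M) :
    ∑ k ∈ Finset.Icc b (pr n b), f k = f b + ∑ k ∈ Finset.Icc (b+1) (pr n (b+1)), f k + f (pr n b) := by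
  have : Finset.Icc b (pr n b) = insert b (insert (pr n b) (Finset.Icc (b+1) (pr n (b+1)))) := by
    ext m
    simp only [Finset.mem_insert, Finset.mem_Icc, pr]; omega
  rw [this, Finset.sum_insert, Finset.sum_insert]
  · abel
  · simp only [Finset.mem_Icc, pr]; omega
  · simp only [Finset.mem_insert, Finset.mem_Icc, pr]; omega

theorem Eucl.qc' (hα : Eucl n q v α) (hβ : Eucl n q v β) (hc : ∀ a b, Commute (α a) (β b))
    (a b : ℕ) (h1 : a < b) (h2 : a + b ≠ n + 1) :
    (α a * β a) * (α b * β b) = (q^2) • ((α b * β b) * (α a * β a)) := by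
  rw [pow_two]; exact prod_qc (hα.qc a b h1 h2) (hβ.qc a b h1 h2) (hc _ _) (hc _ _)

theorem middle (hα : Eucl n q v α) (hβ : Eucl n q v β) (hc : ∀ a b, Commute (α a) (β b))
    (hv : v ≠ 0) (hvq : v^2 = q) (N : ℕ) (hN : Odd N) (hN1 : 1 < N) (hq : IsPrimitiveRoot q N) :
    ∀ m b, 1 ≤ b → n + 2 - 2 * b ≤ m →
      Dk (∑ k ∈ Finset.Icc b (pr n b), α k * β k)
        (q ^ ((n:ℤ) - 2 * b) • (Osum n v α b * Osum n v β b)) N =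
      ∑ k ∈ Finset.Icc b (pr n b), (if 2 * k = n + 1 then 2 / (1+q)^N else (1:ℂ)) • (α k * β k)^N := by
  have hq0 : q ≠ 0 := by rw [← hvq]; exact pow_ne_zero _ hv
  have hQ : IsPrimitiveRoot (q^2) N := hq.pow_of_coprime 2 (Nat.coprime_two_left.2 hN)
  intro m
  induction m with
  | zero =>
    intro b hb h
    have : Finset.Icc b (pr n b) = ∅ := Finset.Icc_eq_empty (by simp only [pr]; omega)
    rw [this, Finset.sum_empty, Finset.sum_empty]
    obtain ⟨k, rfl⟩ := hN
    exact Dk_zero_left _ _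
  | succ m ih =>
    intro b hb hbm
    rcases lt_trichotomy (2 * b) (n + 1) with h | h | h
    · have hbn : b ≤ n := by omega
      have hpb : b < pr n b := by simp only [pr]; omega
      rw [mid_sum_split n b hb h, mid_sum_split n b hb h, ← ih (b+1) (by omega) (by omega)]
      have s1 : ¬ 2 * b = n + 1 := by omega
      have s2 : ¬ 2 * pr n b = n + 1 := by simp only [pr]; omega
      rw [if_neg s1, if_neg s2, one_smul, one_smul]
      set O := Osum n v α b with hO
      set O1 := Osum n v α (b+1) with hO1
      set T := Osum n v β b with hT
      set T1 := Osum n v β (b+1) with hT1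
      set κ : ℂ := q ^ ((n:ℤ) - 2 * b) with hκ
      have hκ' : v ^ (twoRho n b) * v ^ (twoRho n b) = κ := by
        rw [twoRho_lt n b h, ← zpow_add₀ hv, hκ, ← hvq, ← zpow_natCast, ← zpow_mul]
        congr 1; push_cast; ring
      have cO : ∀ k, Commute O (β k) := fun k => Osum_comm _ _ fun l => hc l k
      have cO1 : ∀ k, Commute O1 (β k) := fun k => Osum_comm _ _ fun l => hc l k
      have cT : ∀ k, Commute (α k) T := fun k => (Osum_comm _ _ fun l => (hc k l).symm).symm
      have cT1 : ∀ k, Commute (α k) T1 := fun k => (Osum_comm _ _ fun l => (hc k l).symm).symm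
      have cOT : Commute O T := (Osum_comm _ _ fun l => (cO l).symm).symm
      have cOT1 : Commute O T1 := (Osum_comm _ _ fun l => (cO l).symm).symm
      have cO1T : Commute O1 T := (Osum_comm _ _ fun l => (cO1 l).symm).symm
      have cO1T1 : Commute O1 T1 := (Osum_comm _ _ fun l => (cO1 l).symm).symm
      have cOO1 : Commute O O1 := hα.OO hq0 b hb h
      have cTT1 : Commute T T1 := hβ.OO hq0 b hb h
      have uO := hα.uO hv hq0 b hb h
      have uT := hβ.uO hv hq0 b hb h
      have Ow := hα.Ow hv hq0 b hb h
      have Tw := hβ.Ow hv hq0 b hb h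
      have uO0 : ∀ k, b ≤ k → k ≤ pr n b → Commute (α k) O := fun k h1 h2 => (hα.Ocomm hq0 b k h1 h2 hbn).symm
      have uT0 : ∀ k, b ≤ k → k ≤ pr n b → Commute (β k) T := fun k h1 h2 => (hβ.Ocomm hq0 b k h1 h2 hbn).symm
      have uO2 : ∀ k, b+1 ≤ k → k ≤ pr n (b+1) → Commute (α k) O1 := fun k h1 h2 => 
        (hα.Ocomm hq0 (b+1) k h1 h2 (by omega)).symm
      have uT2 : ∀ k, b+1 ≤ k → k ≤ pr n (b+1) → Commute (β k) T1 := fun k h1 h2 => 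
        (hβ.Ocomm hq0 (b+1) k h1 h2 (by omega)).symm
      have kk := key N hN (q^2) hQ (α b * β b) (α (pr n b) * β (pr n b))
        (∑ k ∈ Finset.Icc (b+1) (pr n (b+1)), α k * β k)
        (κ • (O * T)) (-((κ * (q^2)⁻¹) • (O1 * T + O * T1))) ((κ * (q^2)⁻¹ * (q^2)⁻¹) • (O1 * T1))
        ?_ ?_ ?_ ?_ ?_ ?_ ?_ ?_ ?_ ?_ ?_ ?_ ?_ ?_ ?_ ?_
      · rw [kk, smul_smul]
        have : q^2 * (κ * (q^2)⁻¹ * (q^2)⁻¹) = q ^ ((n:ℤ) - 2 * (b+1 : ℕ)) := by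
          rw [show (n:ℤ) - 2 * (b+1 : ℕ) = (n:ℤ) - 2 * b - (2:ℕ) by push_cast; ring, zpow_sub₀ hq0,
            zpow_natCast, ← hκ]
          field_simp
        rw [this]; abel
      · rw [(hc b (pr n b)).symm.mul_mul_mul_comm, hα.wu hv hq0 b hb h, hβ.wu hv hq0 b hb h, smul_mul_smul_comm, hκ',
          ← hO, ← hO1, ← hT, ← hT1, sub_mul, mul_sub, mul_sub, smul_mul_smul_comm, smul_mul_assoc, mul_smul_comm]
        module
      · rw [(hc (pr n b) b).symm.mul_mul_mul_comm, Eucl.uw hv b hb, Eucl.uw hv b hb, smul_mul_smul_comm, hκ',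
          ← hO, ← hO1, ← hT, ← hT1, sub_mul, mul_sub, mul_sub]
        simp only [smul_sub, smul_add, smul_neg, smul_smul]
        rw [show q^2 * (κ * (q^2)⁻¹) = κ by field_simp, show (q^2)^2 * (κ * (q^2)⁻¹ * (q^2)⁻¹) = κ by field_simp]
        abel
      · rw [Finset.mul_sum, Finset.sum_mul, Finset.smul_sum]
        refine Finset.sum_congr rfl fun l hl => ?_
        simp only [Finset.mem_Icc, pr] at hl
        exact hα.qc' hβ hc _ _ (by omega) (by omega)
      · rw [Finset.mul_sum, Finset.sum_mul, Finset.smul_sum]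
        refine Finset.sum_congr rfl fun l hl => ?_
        simp only [Finset.mem_Icc, pr] at hl
        exact hα.qc' hβ hc _ _ (by simp only [pr]; omega) (by simp only [pr]; omega)
      · have := prod_qc (s := 1) (t := 1) (by simpa using (uO0 b le_rfl hpb.le).eq) 
          (by simpa using (uT0 b le_rfl hpb.le).eq) (cO b) (cT b)
        rw [mul_smul_comm, this, smul_mul_assoc]; simp
      · have e1 := prod_qc (t := 1) uO (by simpa using (uT0 b le_rfl hpb.le).eq) (cO1 b) (cT b)
        have e2 := prod_qc (s := 1) (by simpa using (uO0 b le_rfl hpb.le).eq) uT (cO b) (cT1 b)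
        rw [mul_one] at e1; rw [one_mul] at e2
        rw [mul_neg, mul_smul_comm, mul_add, e1, e2, neg_mul, smul_mul_assoc, add_mul]
        module
      · have e1 := prod_qc uO uT (cO1 b) (cT1 b)
        rw [mul_smul_comm, e1, smul_mul_assoc]
        module
      · have := prod_qc (s := 1) (t := 1) (by simpa using (uO0 (pr n b) hpb.le le_rfl).symm.eq) 
          (by simpa using (uT0 (pr n b) hpb.le le_rfl).symm.eq) (cT _) (cO _)
        rw [mul_smul_comm, smul_mul_assoc, this]; simp
      · have e1 := prod_qc (t := 1) Ow (by simpa using (uT0 (pr n b) hpb.le le_rfl).symm.eq) (cT _) (cO1 _)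
        have e2 := prod_qc (s := 1) (by simpa using (uO0 (pr n b) hpb.le le_rfl).symm.eq) Tw (cT1 _) (cO _)
        rw [mul_one] at e1; rw [one_mul] at e2
        rw [neg_mul, smul_mul_assoc, add_mul, e1, e2, mul_neg, mul_smul_comm, mul_add]
        module
      · have e1 := prod_qc Ow Tw (cT1 _) (cO1 _)
        rw [smul_mul_assoc, e1, mul_smul_comm]
        module
      · refine Commute.sum_left _ _ _ fun k hk => Commute.smul_right ?_ _
        simp only [Finset.mem_Icc, pr] at hk
        have g1 := uO0 k (by omega) (by simp only [pr]; omega)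
        have g2 := uT0 k (by omega) (by simp only [pr]; omega)
        exact (g1.mul_right (cT k)).mul_left (((cO k).symm).mul_right g2)
      · refine Commute.sum_left _ _ _ fun k hk => (Commute.smul_right ?_ _).neg_right
        have g3 := uO2 k (Finset.mem_Icc.1 hk).1 (Finset.mem_Icc.1 hk).2
        have g4 := uT2 k (Finset.mem_Icc.1 hk).1 (Finset.mem_Icc.1 hk).2
        simp only [Finset.mem_Icc, pr] at hk
        have g1 := uO0 k (by omega) (by simp only [pr]; omega)
        have g2 := uT0 k (by omega) (by simp only [pr]; omega)
        exact ((g3.mul_right (cT k)).mul_left (((cO1 k).symm).mul_right g2)).add_right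
          ((g1.mul_right (cT1 k)).mul_left (((cO k).symm).mul_right g4))
      · refine Commute.sum_left _ _ _ fun k hk => Commute.smul_right ?_ _
        have g3 := uO2 k (Finset.mem_Icc.1 hk).1 (Finset.mem_Icc.1 hk).2
        have g4 := uT2 k (Finset.mem_Icc.1 hk).1 (Finset.mem_Icc.1 hk).2
        exact (g3.mul_right (cT1 k)).mul_left (((cO1 k).symm).mul_right g4)
      · refine (Commute.smul_left (Commute.smul_right ?_ _) _).neg_right
        exact ((cOO1.mul_right cOT).mul_left ((cO1T.symm).mul_right (Commute.refl _))).add_right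
          (((Commute.refl _).mul_right cOT1).mul_left ((cOT.symm).mul_right cTT1))
      · refine (Commute.smul_left (Commute.smul_right ?_ _) _)
        exact (cOO1.mul_right cOT1).mul_left ((cO1T.symm).mul_right cTT1)
      · refine (Commute.smul_left (Commute.smul_right ?_ _) _).neg_left
        exact (((Commute.refl _).mul_right cO1T1).mul_left ((cO1T.symm).mul_right cTT1)).add_left
          ((cOO1.mul_right cOT1).mul_left ((cO1T1.symm).mul_right (Commute.refl _)))
    · have hpb : pr n b = b := by simp only [pr]; omega
      have hq1 : 1 + q ≠ 0 := by
        intro h0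
        have h1 : q = -1 := by linear_combination h0
        have := hq.pow_eq_one
        rw [h1, hN.neg_one_pow] at this
        norm_num at this
      rw [hpb, Finset.Icc_self, Finset.sum_singleton, Finset.sum_singleton, if_pos h]
      have c1 := hα.center hv hvq b h
      have c2 := hβ.center hv hvq b h
      have e : q ^ ((n:ℤ) - 2 * b) • (Osum n v α b * Osum n v β b) = 
          ((1 / (1+q)) * (q / (1+q))) • (α b * β b)^2 := by
        rw [(hc b b).mul_pow, c1, c2, neg_mul_neg, smul_mul_smul_comm, smul_smul]
        congr 1
        rw [show (n:ℤ) - 2 * b = -1 by omega, zpow_neg_one]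
        field_simp; ring
      rw [e, Dk_sq _ _ _ (by field_simp)]
      congr 1
      rw [div_pow, div_pow, hq.pow_eq_one]
      ring
    · have : Finset.Icc b (pr n b) = ∅ := Finset.Icc_eq_empty (by simp only [pr]; omega)
      rw [this, Finset.sum_empty, Finset.sum_empty]
      obtain ⟨k, rfl⟩ := hN
      exact Dk_zero_left _ _

end abstractPart
end

section
section shortPart
variable {E : Type*} [Ring E] [Algebra ℂ E]

structure ShortP (q : ℂ) (s : Finset ℕ) (p : ℕ → E) (W : ℕ → ℕ → E) : Prop where
  hp : ∀ b ∈ s, ∀ a ∈ s, b < a → p b * p a = p a * p b - (q - q⁻¹) • W b a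
  hpW : ∀ b ∈ s, ∀ a ∈ s, b < a → p b * W b a = q • (W b a * p b)
  hWp : ∀ b ∈ s, ∀ a ∈ s, b < a → W b a * p a = q • (p a * W b a)
  hcm : ∀ b ∈ s, ∀ a ∈ s, ∀ c ∈ s, b < a → a < c → W b c * p a = p a * W b c
  hWc : ∀ b ∈ s, ∀ a ∈ s, ∀ c ∈ s, b < a → a < c → W b a * p c = p c * W b a + (q - q⁻¹) • (p a * W b c)

theorem ShortP.map {F : Type*} [Ring F] [Algebra ℂ F] {q : ℂ} {s : Finset ℕ} {p : ℕ → E} {W : ℕ → ℕ → E}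
    (h : ShortP q s p W) (φ : E →ₐ[ℂ] F) : ShortP q s (fun k => φ (p k)) (fun a b => φ (W a b)) where
  hp b hb a ha hab := by simp only [← map_mul, ← map_smul, ← map_sub, h.hp b hb a ha hab]
  hpW b hb a ha hab := by simp only [← map_mul, ← map_smul, h.hpW b hb a ha hab]
  hWp b hb a ha hab := by simp only [← map_mul, ← map_smul, h.hWp b hb a ha hab]
  hcm b hb a ha c hc hab hac := by simp only [← map_mul, h.hcm b hb a ha c hc hab hac]
  hWc b hb a ha c hc hab hac := by
    simp only [← map_mul, ← map_smul, ← map_add, h.hWc b hb a ha c hc hab hac]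

theorem ShortP.mono {q : ℂ} {s t : Finset ℕ} {p : ℕ → E} {W : ℕ → ℕ → E}
    (h : ShortP q s p W) (hts : t ⊆ s) : ShortP q t p W where
  hp b hb a ha := h.hp b (hts hb) a (hts ha)
  hpW b hb a ha := h.hpW b (hts hb) a (hts ha)
  hWp b hb a ha := h.hWp b (hts hb) a (hts ha)
  hcm b hb a ha c hc := h.hcm b (hts hb) a (hts ha) c (hts hc)
  hWc b hb a ha c hc := h.hWc b (hts hb) a (hts ha) c (hts hc)

theorem sum_antisymm (s : Finset ℕ) (f : ℕ → ℕ → E) (h : ∀ a ∈ s, ∀ c ∈ s, f a c + f c a = 0) :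
    ∑ a ∈ s, ∑ c ∈ s, f a c = 0 := by
  have h1 : ∑ a ∈ s, ∑ c ∈ s, f a c + ∑ a ∈ s, ∑ c ∈ s, f a c = 0 := by
    have e : ∑ a ∈ s, ∑ c ∈ s, f a c = ∑ a ∈ s, ∑ c ∈ s, f c a := Finset.sum_comm
    conv_lhs => rhs; rw [e]
    rw [← Finset.sum_add_distrib]
    refine Finset.sum_eq_zero fun a ha => ?_
    rw [← Finset.sum_add_distrib]
    exact Finset.sum_eq_zero fun c hc => h _ ha _ hc
  have h2 : (2:ℂ) • ∑ a ∈ s, ∑ c ∈ s, f a c = 0 := by rw [two_smul]; exact h1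
  exact (smul_eq_zero.1 h2).resolve_left two_ne_zero

theorem short_lemma (N : ℕ) (hN : Odd N) (hN1 : 1 < N) (q : ℂ) (hq : IsPrimitiveRoot q N)
    (s : Finset ℕ) (p r : ℕ → E) (W : ℕ → ℕ → E) (h : ShortP q s p W)
    (hr : ∀ b ∈ s, ∀ a ∈ s, b < a → r b * r a = q • (r a * r b))
    (hpr : ∀ a b, Commute (p a) (r b)) (hWr : ∀ a b c, Commute (W a b) (r c)) :
    (∑ k ∈ s, p k * r k)^N = ∑ k ∈ s, (p k * r k)^N := by
  have hq0 : q ≠ 0 := hq.ne_zero (by omega)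
  induction s using Finset.induction_on_min with
  | empty => simp only [Finset.sum_empty]; exact zero_pow (by omega)
  | insert b s hb ih =>
    have has : b ∉ s := fun h => (hb b h).false
    have bm := Finset.mem_insert_self b s
    have sm : ∀ a ∈ s, a ∈ insert b s := fun a ha => Finset.mem_insert_of_mem ha
    rw [Finset.sum_insert has, Finset.sum_insert has, 
      ← ih (h.mono (Finset.subset_insert _ _)) (fun b hb a ha => hr b (sm b hb) a (sm a ha))]
    set K : ℂ := -((q - q⁻¹) * q)
    refine qshort N hN hN1 q hq (p b * r b) (∑ k ∈ s, p k * r k) (∑ a ∈ s, K • (W b a * (r a * r b))) ?_ ?_ ?_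
    · rw [Finset.mul_sum, Finset.sum_mul, Finset.smul_sum, ← Finset.sum_add_distrib]
      refine Finset.sum_congr rfl fun a ha => ?_
      rw [(hpr a b).symm.mul_mul_mul_comm, (hpr b a).symm.mul_mul_mul_comm, 
        h.hp b bm a (sm a ha) (hb a ha), hr b bm a (sm a ha) (hb a ha), sub_mul, smul_mul_assoc, 
        mul_smul_comm, mul_smul_comm]
      module
    · rw [Finset.mul_sum, Finset.sum_mul, Finset.smul_sum]
      refine Finset.sum_congr rfl fun a ha => ?_
      have e := prod_qc (s := q) (t := q) (h.hpW b bm a (sm a ha) (hb a ha)) 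
        (show r b * (r a * r b) = q • (r a * r b * r b) by 
          rw [← mul_assoc, hr b bm a (sm a ha) (hb a ha), smul_mul_assoc])
        (hWr b a b) ((hpr b a).mul_right (hpr b b))
      rw [mul_smul_comm, e, smul_mul_assoc]
      module
    · rw [Finset.sum_mul_sum, Finset.sum_mul_sum, Finset.smul_sum, ← sub_eq_zero]
      simp only [Finset.smul_sum]
      conv_lhs => rhs; rw [Finset.sum_comm]
      rw [← Finset.sum_sub_distrib]
      simp only [← Finset.sum_sub_distrib]
      apply sum_antisymm
      have main : ∀ a ∈ s, ∀ c ∈ s, a < c → 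
        (K • (W b a * (r a * r b)) * (p c * r c) - q ^ 2 • (p c * r c * K • (W b a * (r a * r b)))) + 
        (K • (W b c * (r c * r b)) * (p a * r a) - q ^ 2 • (p a * r a * K • (W b c * (r c * r b)))) = 0 := by
        intro a ha c hc hac
        have e1 : (r a * r b) * r c = q^2 • (r c * (r a * r b)) := by
          rw [mul_assoc, hr b bm c (sm c hc) (hb c hc), mul_smul_comm, ← mul_assoc, hr a (sm a ha) c (sm c hc) hac,
            smul_mul_assoc, smul_smul, mul_assoc, pow_two]
        have e2 : (r c * r b) * r a = q • (r c * (r a * r b)) := by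
          rw [mul_assoc, hr b bm a (sm a ha) (hb a ha), mul_smul_comm]
        have e3 : r a * (r c * r b) = q • (r c * (r a * r b)) := by
          rw [← mul_assoc, hr a (sm a ha) c (sm c hc) hac, smul_mul_assoc, mul_assoc]
        simp only [smul_mul_assoc, mul_smul_comm]
        rw [((hpr c a).mul_right (hpr c b)).symm.mul_mul_mul_comm, 
          ((hpr a c).mul_right (hpr a b)).symm.mul_mul_mul_comm,
          (hWr b a c).symm.mul_mul_mul_comm, (hWr b c a).symm.mul_mul_mul_comm, e1, e2, e3,
          h.hcm b bm a (sm a ha) c (sm c hc) (hb a ha) hac, h.hWc b bm a (sm a ha) c (sm c hc) (hb a ha) hac, add_mul]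
        simp only [smul_mul_assoc, mul_smul_comm, smul_add, smul_smul]
        match_scalars <;> field_simp <;> ring
      intro a ha c hc
      rcases lt_trichotomy a c with hac | hac | hac
      · exact main a ha c hc hac
      · subst hac
        have e1 : (r a * r b) * r a = q • (r a * (r a * r b)) := by
          rw [mul_assoc, hr b bm a (sm a ha) (hb a ha), mul_smul_comm]
        have e := prod_qc (s := q) (t := q) (h.hWp b bm a (sm a ha) (hb a ha)) e1
          ((hpr a a).mul_right (hpr a b)) (hWr b a a)
        rw [smul_mul_assoc, e, mul_smul_comm]
        module
      · rw [add_comm]; exact main c hc a ha hac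

end shortPart
end

section
theorem z_zero (n : ℕ) (q v : ℂ) (i j : ℕ) (h : j < i ∨ i = 0 ∨ j = 0 ∨ n < i ∨ n < j) :
    z n q v i j = 0 := by
  rcases h with h | h
  · have := RingQuot.mkAlgHom_rel ℂ (Rel.lower (n := n) (q := q) (v := v) i j h)
    simpa [z] using this
  · have := RingQuot.mkAlgHom_rel ℂ (Rel.out (n := n) (q := q) (v := v) i j h)
    simpa [z] using this

theorem sum_pick {M : Type*} [AddCommMonoid M] (n a b : ℕ) (ha : a ∈ Finset.Icc 1 n)
    (hb : b ∈ Finset.Icc 1 n) (f : ℕ → ℕ → M) :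
    ∑ k ∈ Finset.Icc 1 n, ∑ l ∈ Finset.Icc 1 n, (if k = a then if l = b then f k l else 0 else 0)
      = f a b := by
  rw [Finset.sum_eq_single a]
  · rw [Finset.sum_eq_single b]
    · simp
    · intro l _ hl; simp [hl]
    · intro h; exact absurd hb h
  · intro k _ hk; simp [hk]
  · intro h; exact absurd ha h

theorem sum_anti {M : Type*} [AddCommMonoid M] (n : ℕ) (f : ℕ → ℕ → M) :
    ∑ k ∈ Finset.Icc 1 n, ∑ l ∈ Finset.Icc 1 n, (if l = pr n k then f k l else 0)
      = ∑ k ∈ Finset.Icc 1 n, f k (pr n k) := by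
  refine Finset.sum_congr rfl fun k hk => ?_
  rw [Finset.sum_eq_single (pr n k)]
  · simp
  · intro l _ hl; simp [hl]
  · intro h
    exfalso; apply h
    simp only [Finset.mem_Icc, pr] at hk ⊢; omega

variable {M : Type*} [AddCommGroup M] [Module ℂ M]

theorem Rsum1 (n : ℕ) (q v : ℂ) (a b : ℕ) (ha : a ∈ Finset.Icc 1 n) (hb : b ∈ Finset.Icc 1 n)
    (f : ℕ → ℕ → M) :
    ∑ k ∈ Finset.Icc 1 n, ∑ l ∈ Finset.Icc 1 n, Rc n q v l k a b • f k l =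
      q ^ (((if a = b then 1 else 0) - (if a = pr n b then 1 else 0) : ℤ)) • f b a +
      (if a < b then (q - q⁻¹) • f a b else 0) -
      ((q - q⁻¹) * Jc n v a b) • ∑ k ∈ Finset.Icc 1 n,
        (if a < pr n k then v ^ (-(twoRho n k)) • f k (pr n k) else 0) := by
  have e : ∀ k l, Rc n q v l k a b • f k l =
      (if k = b then if l = a then q ^ (((if l = k then 1 else 0) - (if l = pr n k then 1 else 0) : ℤ)) • f k l else 0 else 0)
      + (if k = a then if l = b then (if a < l then (q - q⁻¹) • f k l else 0) else 0 else 0)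
      - (if l = pr n k then ((q - q⁻¹) * Jc n v a b) • (if a < l then v ^ (-(twoRho n k)) • f k l else 0) else 0) := by
    intro k l
    rw [Rc, add_smul, mul_sub, sub_smul, add_sub_assoc]
    congr 1
    · by_cases h1 : k = b <;> by_cases h2 : l = a <;> simp [h1, h2]
    · congr 1
      · by_cases h1 : k = a <;> by_cases h2 : l = b <;> by_cases h3 : a < l <;> simp [h1, h2, h3] 
        all_goals (subst h2; simp [h3])
      · by_cases h1 : l = pr n k <;> by_cases h3 : a < l <;> simp only [Jc, h1, h3, if_true, if_false, smul_smul]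
        · subst h1; simp only [h3, if_true, smul_smul]; congr 1; ring
        · subst h1; simp [h3]
        · simp
        · simp
  simp only [e, Finset.sum_sub_distrib, Finset.sum_add_distrib]
  rw [sum_pick n b a hb ha, sum_pick n a b ha hb, sum_anti, Finset.smul_sum]

theorem Rsum2 (n : ℕ) (q v : ℂ) (i j : ℕ) (hi : i ∈ Finset.Icc 1 n) (hj : j ∈ Finset.Icc 1 n)
    (f : ℕ → ℕ → M) :
    ∑ k ∈ Finset.Icc 1 n, ∑ l ∈ Finset.Icc 1 n, Rc n q v j i k l • f k l =
      q ^ (((if j = i then 1 else 0) - (if j = pr n i then 1 else 0) : ℤ)) • f j i +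
      (if i < j then (q - q⁻¹) • f i j else 0) -
      ((q - q⁻¹) * Jc n v i j) • ∑ k ∈ Finset.Icc 1 n,
        (if k < j then v ^ (-(twoRho n k)) • f k (pr n k) else 0) := by
  have e : ∀ k l, Rc n q v j i k l • f k l =
      (if k = j then if l = i then q ^ (((if k = l then 1 else 0) - (if k = pr n l then 1 else 0) : ℤ)) • f k l else 0 else 0)
      + (if k = i then if l = j then (if k < l then (q - q⁻¹) • f k l else 0) else 0 else 0)
      - (if l = pr n k then ((q - q⁻¹) * Jc n v i j) • (if k < j then v ^ (-(twoRho n k)) • f k l else 0) else 0) := by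
    intro k l
    rw [Rc, add_smul, mul_sub, sub_smul, add_sub_assoc]
    congr 1
    · by_cases h1 : k = j <;> by_cases h2 : l = i
      · subst h1 h2; simp
      · subst h1; simp [h2, Ne.symm h2]
      · subst h2; simp [h1, Ne.symm h1]
      · simp [h1, h2, Ne.symm h1]
    · congr 1
      · by_cases h1 : k = i <;> by_cases h2 : l = j
        · subst h1 h2; by_cases h3 : k < l <;> simp [h3]
        · subst h1; simp [h2, Ne.symm h2]
        · subst h2; simp [h1, Ne.symm h1]
        · simp [h1, Ne.symm h1]
      · by_cases h1 : l = pr n k <;> by_cases h3 : k < j <;> simp only [Jc, h1, h3, if_true, if_false, smul_smul]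
        · congr 1; ring
        · simp 
        · simp
        · simp
  simp only [e, Finset.sum_sub_distrib, Finset.sum_add_distrib]
  rw [sum_pick n j i hj hi, sum_pick n i j hi hj, sum_anti, Finset.smul_sum]

theorem frt (n : ℕ) (q v : ℂ) (i b j a : ℕ) (hi : i ∈ Finset.Icc 1 n) (hb : b ∈ Finset.Icc 1 n)
    (hj : j ∈ Finset.Icc 1 n) (ha : a ∈ Finset.Icc 1 n) :
    q ^ (((if a = b then 1 else 0) - (if a = pr n b then 1 else 0) : ℤ)) • (z n q v i b * z n q v j a) +
      (if a < b then (q - q⁻¹) • (z n q v i a * z n q v j b) else 0) -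
      ((q - q⁻¹) * Jc n v a b) • ∑ k ∈ Finset.Icc 1 n,
        (if a < pr n k then v ^ (-(twoRho n k)) • (z n q v i k * z n q v j (pr n k)) else 0) =
    q ^ (((if j = i then 1 else 0) - (if j = pr n i then 1 else 0) : ℤ)) • (z n q v j a * z n q v i b) +
      (if i < j then (q - q⁻¹) • (z n q v i a * z n q v j b) else 0) -
      ((q - q⁻¹) * Jc n v i j) • ∑ k ∈ Finset.Icc 1 n,
        (if k < j then v ^ (-(twoRho n k)) • (z n q v k a * z n q v (pr n k) b) else 0) := by
  have h := RingQuot.mkAlgHom_rel ℂ (Rel.frt (n := n) (q := q) (v := v) i b j a hi hb hj ha)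
  rw [frtRel, map_zero] at h
  simp only [Finset.sum_sub_distrib, map_sub, map_sum, map_smul, map_mul] at h
  have h2 := sub_eq_zero.1 h
  have e1 := Rsum1 n q v a b ha hb (fun k l => z n q v i k * z n q v j l)
  have e2 := Rsum2 n q v i j hi hj (fun k l => z n q v k a * z n q v l b)
  exact e1.symm.trans (h2.trans e2)

theorem orth1 (n : ℕ) (q v : ℂ) (hv : v ≠ 0) (i : ℕ) (hi : i ∈ Finset.Icc 1 n) (hii : 2 * i ≠ n + 1) :
    ∑ k ∈ Finset.Icc 1 n, v ^ (-(twoRho n k)) • (z n q v i k * z n q v i (pr n k)) = 0 := by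
  have hi' : pr n i ∈ Finset.Icc 1 n := by simp only [Finset.mem_Icc, pr] at hi ⊢; omega
  have hne : i ≠ pr n i := by simp only [Finset.mem_Icc, pr] at hi ⊢; omega
  have h := RingQuot.mkAlgHom_rel ℂ (Rel.orth₁ (n := n) (q := q) (v := v) i (pr n i) hi hi')
  rw [orthRel₁, if_neg hne, sub_zero, map_zero] at h
  simp only [map_sum, map_smul, map_mul] at h
  have e : ∀ k l, ∑ m ∈ Finset.Icc 1 n, (Jc n v k l * Jc n v m (pr n i)) • 
      ((RingQuot.mkAlgHom ℂ (Rel n q v)) (zf i k) * (RingQuot.mkAlgHom ℂ (Rel n q v)) (zf m l)) = 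
      if l = pr n k then v ^ (-(twoRho n i)) • v ^ (-(twoRho n k)) • (z n q v i k * z n q v i l) else 0 := by
    intro k l
    rw [Finset.sum_eq_single i]
    · by_cases h : l = pr n k
      · simp only [Jc, h, if_true, smul_smul, z]; congr 1; ring
      · simp [Jc, h]
    · intro m hm hmi
      have : pr n i ≠ pr n m := by simp only [Finset.mem_Icc, pr] at hi hm ⊢; omega
      simp [Jc, this]
    · intro h; exact absurd hi h
  simp only [e] at h
  rw [sum_anti, ← Finset.smul_sum] at h
  exact (smul_eq_zero.1 h).resolve_left (zpow_ne_zero _ hv)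

theorem orth2 (n : ℕ) (q v : ℂ) (hv : v ≠ 0) (j : ℕ) (hj : j ∈ Finset.Icc 1 n) (hjj : 2 * j ≠ n + 1) :
    ∑ k ∈ Finset.Icc 1 n, v ^ (-(twoRho n k)) • (z n q v k j * z n q v (pr n k) j) = 0 := by
  have hj' : pr n j ∈ Finset.Icc 1 n := by simp only [Finset.mem_Icc, pr] at hj ⊢; omega
  have hne : pr n j ≠ j := by simp only [Finset.mem_Icc, pr] at hj ⊢; omega
  have hpp : pr n (pr n j) = j := by simp only [Finset.mem_Icc, pr] at hj ⊢; omega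
  have h := RingQuot.mkAlgHom_rel ℂ (Rel.orth₂ (n := n) (q := q) (v := v) (pr n j) j hj' hj)
  rw [orthRel₂, if_neg hne, sub_zero, map_zero] at h
  simp only [map_sum, map_smul, map_mul] at h
  rw [Finset.sum_eq_single j] at h
  · have e : ∀ l m, (Jc n v (pr n j) j * Jc n v l m) • 
      ((RingQuot.mkAlgHom ℂ (Rel n q v)) (zf l j) * (RingQuot.mkAlgHom ℂ (Rel n q v)) (zf m j)) = 
      if m = pr n l then v ^ (-(twoRho n (pr n j))) • v ^ (-(twoRho n l)) • (z n q v l j * z n q v m j) else 0 := by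
      intro k l
      by_cases h : l = pr n k
      · simp only [Jc, h, if_true, smul_smul, z, hpp]
      · simp [Jc, h]
    simp only [e] at h
    rw [sum_anti, ← Finset.smul_sum] at h
    exact (smul_eq_zero.1 h).resolve_left (zpow_ne_zero _ hv)
  · intro k _ hk
    have : k ≠ pr n (pr n j) := by rw [hpp]; exact hk
    simp [Jc, this]
  · intro h; exact absurd hj h
end

section
theorem sum_lt {M : Type*} [AddCommMonoid M] (n b : ℕ) (hb : b ≤ n + 1) (f : ℕ → M) :
    ∑ k ∈ Finset.Icc 1 n, (if k < b then f k else 0) = ∑ k ∈ Finset.Ico 1 b, f k := by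
  rw [← Finset.sum_filter]
  congr 1
  ext m; simp only [Finset.mem_filter, Finset.mem_Icc, Finset.mem_Ico]; omega

theorem sum_lt' {M : Type*} [AddCommMonoid M] (n b a : ℕ) (hb : b ≤ n + 1) (hab : a = pr n b) (f : ℕ → M) :
    ∑ k ∈ Finset.Icc 1 n, (if a < pr n k then f k else 0) = ∑ k ∈ Finset.Ico 1 b, f k := by
  rw [← Finset.sum_filter]
  congr 1
  ext m; simp only [hab, pr, Finset.mem_filter, Finset.mem_Icc, Finset.mem_Ico]; omega

theorem solve_q {E : Type*} [Ring E] [Algebra ℂ E] (q : ℂ) (hq : q ≠ 0) (A B : E)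
    (h : B + (q - q⁻¹) • A = q • A) : A = q • B := by
  rw [eq_sub_of_add_eq h, ← sub_smul, smul_smul, show q * (q - (q - q⁻¹)) = 1 by field_simp; ring, one_smul]

section
variable (n : ℕ) (q v : ℂ)

theorem R1 (i j a b : ℕ) (hi : 1 ≤ i) (hij : i < j) (hj : j ≤ n) (ha : 1 ≤ a) (hab : a < b) (hb : b ≤ n)
    (h1 : i + j ≠ n + 1) (h2 : a + b ≠ n + 1) : Commute (z n q v i b) (z n q v j a) := by
  have h := frt n q v i b j a (by simp; omega) (by simp; omega) (by simp; omega) (by simp; omega)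
  have g1 : ¬ j = i := by omega
  have g2 : ¬ j = pr n i := by simp only [pr]; omega
  have g3 : ¬ a = b := by omega
  have g4 : ¬ a = pr n b := by simp only [pr]; omega
  have g5 : ¬ b = pr n a := by simp only [pr]; omega
  simp only [g1, g2, g3, g4, g5, hij, hab, Jc, if_true, if_false, sub_zero, zpow_zero, one_smul, mul_zero, zero_smul] at h
  exact add_right_cancel h

theorem R2 (i j a b : ℕ) (hi : 1 ≤ i) (hij : i < j) (hj : j ≤ n) (ha : 1 ≤ a) (hab : a < b) (hb : b ≤ n)
    (h1 : i + j ≠ n + 1) (h2 : a + b ≠ n + 1) : z n q v i a * z n q v j b =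
      z n q v j b * z n q v i a + (q - q⁻¹) • (z n q v i b * z n q v j a) := by
  have h := frt n q v i a j b (by simp; omega) (by simp; omega) (by simp; omega) (by simp; omega)
  have g1 : ¬ j = i := by omega
  have g2 : ¬ j = pr n i := by simp only [pr]; omega
  have g3 : ¬ b = a := by omega
  have g4 : ¬ b = pr n a := by simp only [pr]; omega
  have g5 : ¬ a = pr n b := by simp only [pr]; omega
  have g6 : ¬ b < a := by omega
  simp only [g1, g2, g3, g4, g5, g6, hij, Jc, if_true, if_false, sub_zero, zpow_zero, one_smul, mul_zero, zero_smul, add_zero] at h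
  exact h

theorem R3 (hq : q ≠ 0) (i a b : ℕ) (hi : 1 ≤ i) (hin : i ≤ n) (hii : 2 * i ≠ n + 1) (hab : a < b)
    (h2 : a + b ≠ n + 1) : z n q v i a * z n q v i b = q • (z n q v i b * z n q v i a) := by
  by_cases ha : 1 ≤ a
  swap
  · rw [z_zero n q v i a (by omega)]; simp
  by_cases hb : b ≤ n
  swap
  · rw [z_zero n q v i b (by omega)]; simp
  have h := frt n q v i b i a (by simp; omega) (by simp; omega) (by simp; omega) (by simp; omega)
  have g2 : ¬ i = pr n i := by simp only [pr]; omega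
  have g3 : ¬ a = b := by omega
  have g4 : ¬ a = pr n b := by simp only [pr]; omega
  have g5 : ¬ b = pr n a := by simp only [pr]; omega
  simp only [g2, g3, g4, g5, hab, lt_irrefl, Jc, if_true, if_false, sub_zero, zpow_zero, zpow_one, one_smul, mul_zero, zero_smul, add_zero] at h
  exact solve_q q hq _ _ h

theorem R4 (hq : q ≠ 0) (j k l : ℕ) (hj : 1 ≤ j) (hjn : j ≤ n) (hjj : 2 * j ≠ n + 1) (hkl : k < l)
    (h2 : k + l ≠ n + 1) : z n q v k j * z n q v l j = q • (z n q v l j * z n q v k j) := by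
  by_cases ha : 1 ≤ k
  swap
  · rw [z_zero n q v k j (by omega)]; simp
  by_cases hb : l ≤ n
  swap
  · rw [z_zero n q v l j (by omega)]; simp
  have h := frt n q v k j l j (by simp; omega) (by simp; omega) (by simp; omega) (by simp; omega)
  have g2 : ¬ j = pr n j := by simp only [pr]; omega
  have g3 : ¬ l = k := by omega
  have g4 : ¬ l = pr n k := by simp only [pr]; omega
  simp only [g2, g3, g4, hkl, lt_irrefl, Jc, if_true, if_false, sub_zero, zpow_zero, zpow_one, one_smul, mul_zero, zero_smul, add_zero] at h
  exact solve_q q hq _ _ h.symm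

theorem eucl_row (hq : q ≠ 0) (hv : v ≠ 0) (i : ℕ) (hi : 1 ≤ i) (hin : i ≤ n) (hii : 2 * i ≠ n + 1) :
    Eucl n q v (fun k => z n q v i k) where
  qc a b hab h2 := R3 n q v hq i a b hi hin hii hab h2
  total := orth1 n q v hv i (by simp; omega) hii
  pair b hb hb2 := by
    have h := frt n q v i b i (pr n b) (by simp; omega) (by simp; omega) (by simp; omega) (by simp [pr]; omega)
    have g1 : ¬ i = pr n i := by simp only [pr]; omega
    have g2 : ¬ pr n b = b := by simp only [pr]; omega
    have g3 : ¬ pr n b < b := by simp only [pr]; omega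
    have g4 : b = pr n (pr n b) := by simp only [pr]; omega
    rw [sum_lt' n b (pr n b) (by omega) rfl] at h
    simp only [g1, g2, g3, lt_irrefl, if_true, if_false, sub_zero, zero_sub, zpow_one, zpow_neg_one, mul_zero, zero_smul, add_zero, Jc, ← g4] at h
    rw [twoRho_pr n b hb hb2, ← twoRho_lt n b hb2, neg_neg] at h
    have h2 := congrArg (fun x => q • x) h
    simp only [smul_smul, smul_sub, mul_inv_cancel₀ hq, one_smul] at h2
    simp only [Osum]
    rw [pow_two, ← h2]
    congr 2
    field_simp

theorem eucl_col (hq : q ≠ 0) (hv : v ≠ 0) (j : ℕ) (hj : 1 ≤ j) (hjn : j ≤ n) (hjj : 2 * j ≠ n + 1) :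
    Eucl n q v (fun k => z n q v k j) where
  qc a b hab h2 := R4 n q v hq j a b hj hjn hjj hab h2
  total := orth2 n q v hv j (by simp; omega) hjj
  pair b hb hb2 := by
    have h := frt n q v (pr n b) j b j (by simp [pr]; omega) (by simp; omega) (by simp; omega) (by simp; omega)
    have g1 : ¬ j = pr n j := by simp only [pr]; omega
    have g2 : ¬ b = pr n b := by simp only [pr]; omega
    have g3 : ¬ pr n b < b := by simp only [pr]; omega
    have g4 : b = pr n (pr n b) := by simp only [pr]; omega
    rw [sum_lt n b (by omega)] at h
    simp only [g1, g2, g3, lt_irrefl, if_true, if_false, sub_zero, zero_sub, zpow_one, zpow_neg_one, mul_zero, zero_smul, add_zero, Jc, ← g4] at h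
    rw [twoRho_pr n b hb hb2, ← twoRho_lt n b hb2, neg_neg] at h
    have h2 := congrArg (fun x => q • x) h
    simp only [smul_smul, smul_sub, mul_inv_cancel₀ hq, one_smul] at h2
    simp only [Osum]
    rw [pow_two, h2]
    congr 2
    field_simp

def Wr (c b a : ℕ) : OB n q v :=
  ∑ k ∈ Finset.Ico 1 c, v ^ (-(twoRho n k)) • (z n q v k a * z n q v (pr n k) b)

def Vr (c s r : ℕ) : OB n q v :=
  ∑ k ∈ Finset.Ico 1 c, v ^ (-(twoRho n k)) • (z n q v r k * z n q v s (pr n k))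

theorem short_row (hq : q ≠ 0) (c : ℕ) (hc : 2 * c = n + 1) :
    ShortP q (Finset.Icc c n) (fun k => z n q v c k) (Wr n q v c) where
  hp b hb a ha hba := by
    rw [Finset.mem_Icc] at hb ha
    have h := frt n q v c b c a (by simp; omega) (by simp; omega) (by simp; omega) (by simp; omega)
    have g1 : pr n c = c := by simp only [pr]; omega
    have g2 : ¬ a = b := by omega
    have g3 : ¬ a < b := by omega
    have g4 : ¬ b = pr n a := by simp only [pr]; omega
    have g5 : ¬ a = pr n b := by simp only [pr]; omega
    have g6 : twoRho n c = 0 := by simp [twoRho, hc]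
    rw [sum_lt n c (by omega)] at h
    simp only [g1, g2, g3, g4, g5, g6, lt_irrefl, if_true, if_false, sub_self, neg_zero, sub_zero, zpow_zero, one_smul, mul_zero, mul_one, zero_smul, add_zero, Jc] at h
    exact h
  hpW b hb a ha hba := by
    rw [Finset.mem_Icc] at hb ha
    rw [Wr, Finset.mul_sum, Finset.sum_mul, Finset.smul_sum]
    refine Finset.sum_congr rfl fun k hk => ?_
    rw [Finset.mem_Ico] at hk
    rw [mul_smul_comm, smul_mul_assoc, smul_comm q]
    congr 1
    have c1 := R1 n q v k c b a (by omega) (by omega) (by omega) (by omega) (by omega) (by omega) (by omega) (by omega)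
    rcases hb.1.eq_or_lt with e | e
    · rw [z_zero n q v (pr n k) b (by simp only [pr]; omega)]; simp
    · have c2 := R4 n q v hq b c (pr n k) (by omega) (by omega) (by omega) (by simp only [pr]; omega) (by simp only [pr]; omega)
      rw [← mul_assoc, ← c1.eq, mul_assoc, c2, mul_smul_comm, mul_assoc]
  hWp b hb a ha hba := by
    rw [Finset.mem_Icc] at hb ha
    rw [Wr, Finset.mul_sum, Finset.sum_mul, Finset.smul_sum]
    refine Finset.sum_congr rfl fun k hk => ?_
    rw [Finset.mem_Ico] at hk
    rw [mul_smul_comm, smul_mul_assoc, smul_comm q]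
    congr 1
    have c1 := R1 n q v c (pr n k) b a (by omega) (by simp only [pr]; omega) (by simp only [pr]; omega) (by omega) (by omega) (by omega) (by simp only [pr]; omega) (by omega)
    have c2 := R4 n q v hq a k c (by omega) (by omega) (by omega) (by omega) (by omega)
    rw [mul_assoc, ← c1.eq, ← mul_assoc, c2, smul_mul_assoc, mul_assoc]
  hcm b hb a ha d hd hba had := by
    rw [Finset.mem_Icc] at hb ha hd
    refine (Commute.sum_left _ _ _ fun k hk => Commute.smul_left (Commute.mul_left ?_ ?_) _).eq
    · rw [Finset.mem_Ico] at hk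
      exact R1 n q v k c a d (by omega) (by omega) (by omega) (by omega) (by omega) (by omega) (by omega) (by omega)
    · rw [Finset.mem_Ico] at hk
      exact (R1 n q v c (pr n k) b a (by omega) (by simp only [pr]; omega) (by simp only [pr]; omega) (by omega) (by omega) (by omega) (by simp only [pr]; omega) (by omega)).symm
  hWc b hb a ha d hd hba had := by
    rw [Finset.mem_Icc] at hb ha hd
    rw [Wr, Wr, Finset.mul_sum, Finset.sum_mul, Finset.mul_sum, Finset.smul_sum, ← Finset.sum_add_distrib]
    refine Finset.sum_congr rfl fun k hk => ?_
    rw [Finset.mem_Ico] at hk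
    rw [mul_smul_comm, smul_mul_assoc, mul_smul_comm, smul_comm (q - q⁻¹), ← smul_add]
    congr 1
    have c1 := R1 n q v c (pr n k) b d (by omega) (by simp only [pr]; omega) (by simp only [pr]; omega) (by omega) (by omega) (by omega) (by simp only [pr]; omega) (by omega)
    have c2 := R2 n q v k c a d (by omega) (by omega) (by omega) (by omega) (by omega) (by omega) (by omega) (by omega)
    have c3 := R1 n q v k c a d (by omega) (by omega) (by omega) (by omega) (by omega) (by omega) (by omega) (by omega)
    rw [mul_assoc, ← c1.eq, ← mul_assoc, c2, add_mul, smul_mul_assoc, mul_assoc, c3.eq, mul_assoc]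

theorem short_col (hq : q ≠ 0) (c : ℕ) (hc : 2 * c = n + 1) :
    ShortP q (Finset.Icc 1 c) (fun k => z n q v k c) (Vr n q v c) where
  hp s hs r hr hsr := by
    rw [Finset.mem_Icc] at hs hr
    have h := frt n q v r c s c (by simp; omega) (by simp; omega) (by simp; omega) (by simp; omega)
    have g1 : pr n c = c := by simp only [pr]; omega
    have g2 : ¬ s = r := by omega
    have g3 : ¬ r < s := by omega
    have g4 : ¬ s = pr n r := by simp only [pr]; omega
    have g5 : ¬ r = pr n s := by simp only [pr]; omega
    have g6 : twoRho n c = 0 := by simp [twoRho, hc]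
    rw [sum_lt' n c c (by omega) g1.symm] at h
    simp only [g1, g2, g3, g4, g5, g6, lt_irrefl, if_true, if_false, sub_self, neg_zero, sub_zero, zpow_zero, one_smul, mul_zero, mul_one, zero_smul, add_zero, Jc] at h
    exact h.symm
  hpW s hs r hr hsr := by
    rw [Finset.mem_Icc] at hs hr
    rw [Vr, Finset.mul_sum, Finset.sum_mul, Finset.smul_sum]
    refine Finset.sum_congr rfl fun k hk => ?_
    rw [Finset.mem_Ico] at hk
    rw [mul_smul_comm, smul_mul_assoc, smul_comm q]
    congr 1
    have c1 := R1 n q v s r k c (by omega) (by omega) (by omega) (by omega) (by omega) (by omega) (by omega) (by omega)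
    have c2 := R3 n q v hq s c (pr n k) (by omega) (by omega) (by omega) (by simp only [pr]; omega) (by simp only [pr]; omega)
    rw [← mul_assoc, c1.eq, mul_assoc, c2, mul_smul_comm, mul_assoc]
  hWp s hs r hr hsr := by
    rw [Finset.mem_Icc] at hs hr
    rw [Vr, Finset.mul_sum, Finset.sum_mul, Finset.smul_sum]
    refine Finset.sum_congr rfl fun k hk => ?_
    rw [Finset.mem_Ico] at hk
    rw [mul_smul_comm, smul_mul_assoc, smul_comm q]
    congr 1
    have c1 := R1 n q v s r c (pr n k) (by omega) (by omega) (by omega) (by omega) (by simp only [pr]; omega) (by simp only [pr]; omega) (by omega) (by simp only [pr]; omega)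
    rcases hr.2.eq_or_lt with e | e
    · rw [z_zero n q v r k (by omega)]; simp
    · have c2 := R3 n q v hq r k c (by omega) (by omega) (by omega) (by omega) (by omega)
      rw [mul_assoc, c1.eq, ← mul_assoc, c2, smul_mul_assoc, mul_assoc]
  hcm s hs r hr d hd hsr hrd := by
    rw [Finset.mem_Icc] at hs hr hd
    refine (Commute.sum_left _ _ _ fun k hk => Commute.smul_left (Commute.mul_left ?_ ?_) _).eq
    · rw [Finset.mem_Ico] at hk
      exact (R1 n q v r d k c (by omega) (by omega) (by omega) (by omega) (by omega) (by omega) (by omega) (by omega)).symm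
    · rw [Finset.mem_Ico] at hk
      exact (R1 n q v s r c (pr n k) (by omega) (by omega) (by omega) (by omega) (by simp only [pr]; omega) (by simp only [pr]; omega) (by omega) (by simp only [pr]; omega))
  hWc s hs r hr d hd hsr hrd := by
    rw [Finset.mem_Icc] at hs hr hd
    rw [Vr, Vr, Finset.mul_sum, Finset.sum_mul, Finset.mul_sum, Finset.smul_sum, ← Finset.sum_add_distrib]
    refine Finset.sum_congr rfl fun k hk => ?_
    rw [Finset.mem_Ico] at hk
    rw [mul_smul_comm, smul_mul_assoc, mul_smul_comm, smul_comm (q - q⁻¹), ← smul_add]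
    congr 1
    have c1 := R1 n q v s d c (pr n k) (by omega) (by omega) (by omega) (by omega) (by simp only [pr]; omega) (by simp only [pr]; omega) (by omega) (by simp only [pr]; omega)
    have c2 := R2 n q v r d k c (by omega) (by omega) (by omega) (by omega) (by omega) (by omega) (by omega) (by omega)
    rw [mul_assoc, c1.eq, ← mul_assoc, c2, add_mul, smul_mul_assoc, mul_assoc, mul_assoc]

end
end

theorem core {A : Type*} [Ring A] [Algebra ℂ A] (n : ℕ) (N : ℕ) (hN1 : 1 < N) (hNodd : Odd N)
    (q v : ℂ) (hv : v ^ 2 = q) (hq : IsPrimitiveRoot q N) (hq0 : q ≠ 0) (hv0 : v ≠ 0)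
    (zz : ℕ → ℕ → A) (zzero : ∀ i j, j < i → zz i j = 0)
    (her : ∀ i, 1 ≤ i → i ≤ n → 2 * i ≠ n + 1 → Eucl n q v (fun k => zz i k))
    (hec : ∀ j, 1 ≤ j → j ≤ n → 2 * j ≠ n + 1 → Eucl n q v (fun k => zz k j))
    (W V : ℕ → ℕ → ℕ → A)
    (hsr : ∀ i, 2 * i = n + 1 → ShortP q (Finset.Icc i n) (fun k => zz i k) (W i))
    (hsc : ∀ j, 2 * j = n + 1 → ShortP q (Finset.Icc 1 j) (fun k => zz k j) (V j))
    (Δ : A →ₐ[ℂ] (A ⊗[ℂ] A))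
    (hΔ : ∀ i j : ℕ, 1 ≤ i → i ≤ j → j ≤ n →
      Δ (zz i j) = ∑ k ∈ Finset.Icc i j, zz i k ⊗ₜ[ℂ] zz k j)
    (i j : ℕ) (hi : 1 ≤ i) (hij : i ≤ j) (hj : j ≤ n) :
      Δ (zz i j ^ N) =
        ∑ k ∈ Finset.Icc i j,
          cCoef n N q i j k • ((zz i k ^ N) ⊗ₜ[ℂ] (zz k j ^ N)) := by
  have hQ : IsPrimitiveRoot (q^2) N := hq.pow_of_coprime 2 (Nat.coprime_two_left.2 hNodd)
  let L : A →ₐ[ℂ] (A ⊗[ℂ] A) := Algebra.TensorProduct.includeLeft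
  let R : A →ₐ[ℂ] (A ⊗[ℂ] A) := Algebra.TensorProduct.includeRight
  have hLR : ∀ a b, L a * R b = a ⊗ₜ[ℂ] b := by
    intro a b
    simp [L, R, Algebra.TensorProduct.includeLeft_apply, Algebra.TensorProduct.includeRight_apply]
  have hcomm : ∀ a b, Commute (L a) (R b) := by
    intro a b
    show L a * R b = R b * L a
    simp [L, R, Algebra.TensorProduct.includeLeft_apply, Algebra.TensorProduct.includeRight_apply]
  have hpow : ∀ k, (zz i k ^ N) ⊗ₜ[ℂ] (zz k j ^ N) = (L (zz i k) * R (zz k j))^N := by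
    intro k
    rw [hLR, Algebra.TensorProduct.tmul_pow]
  simp only [hpow]
  rw [map_pow, hΔ i j hi hij hj]
  simp only [← hLR]
  have fin1 : (∀ k ∈ Finset.Icc i j, 2 * k = n + 1 → ¬ (i < k ∧ k < j)) → 
      ∑ k ∈ Finset.Icc i j, cCoef n N q i j k • (L (zz i k) * R (zz k j))^N =
      ∑ k ∈ Finset.Icc i j, (L (zz i k) * R (zz k j))^N := by
    intro h
    refine Finset.sum_congr rfl fun k hk => ?_
    rw [cCoef, if_neg, one_smul]
    rintro ⟨_, h1, h2⟩
    exact h k hk h1 h2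
  by_cases hii : 2 * i = n + 1
  · rw [fin1 (fun k hk h => by omega)]
    by_cases hjj : 2 * j = n + 1
    · obtain rfl : i = j := by omega
      simp
    have sh := ((hsr i hii).mono (t := Finset.Icc i j) 
      (Finset.Icc_subset_Icc le_rfl hj)).map L
    refine short_lemma N hNodd hN1 q hq _ _ (fun k => R (zz k j)) _ sh ?_ 
      (fun a b => hcomm _ _) (fun a b c => hcomm _ _)
    intro b hb a ha hab
    rw [Finset.mem_Icc] at hb ha
    exact ((hec j (by omega) hj hjj).map R).qc b a hab (by omega)
  by_cases hjj : 2 * j = n + 1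
  · rw [fin1 (fun k hk h => by omega)]
    have sh := ((hsc j hjj).mono (t := Finset.Icc i j) 
      (Finset.Icc_subset_Icc hi le_rfl)).map R
    have := short_lemma N hNodd hN1 q hq _ _ (fun k => L (zz i k)) _ sh ?_ 
      (fun a b => (hcomm _ _).symm) (fun a b c => (hcomm _ _).symm)
    · simpa only [(hcomm _ _).eq] using this
    intro b hb a ha hab
    rw [Finset.mem_Icc] at hb ha
    exact ((her i (by omega) (by omega) hii).map L).qc b a hab (by omega)
  have eA := (her i (by omega) (by omega) hii).map L
  have eB := (hec j (by omega) (by omega) hjj).map R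
  have qc := eA.qc' eB (fun a b => hcomm _ _)
  by_cases hcase : n + 1 < 2 * i ∨ 2 * j < n + 1
  · rw [fin1 (fun k hk h => by omega)]
    refine peel N hNodd (q^2) hQ (fun k => L (zz i k) * R (zz k j)) _ ?_
    intro k hk l hl hkl
    rw [Finset.mem_Icc] at hk hl
    exact qc k l hkl (by omega)
  have mid := fun b hb => middle eA eB (fun a b => hcomm _ _) hv0 hv N hNodd hN1 hq _ b hb le_rfl
  have OA : ∀ b, b ≤ i → Osum n v (fun k => L (zz i k)) b = 0 := by
    intro b hb
    refine Finset.sum_eq_zero fun m hm => ?_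
    rw [Finset.mem_Ico] at hm
    simp only [zzero i m (by omega), map_zero, zero_mul, smul_zero]
  have OB : ∀ b, b ≤ pr n j → Osum n v (fun k => R (zz k j)) b = 0 := by
    intro b hb
    refine Finset.sum_eq_zero fun m hm => ?_
    rw [Finset.mem_Ico] at hm
    simp only [pr] at hb ⊢
    simp only [zzero (n + 1 - m) j (by omega), map_zero, mul_zero, smul_zero]
  have step : ∀ b, 1 ≤ b → i ≤ b → pr n b ≤ j → (b = i ∨ b = pr n j) → 
      (∑ k ∈ Finset.Icc b (pr n b), L (zz i k) * R (zz k j))^N = 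
      ∑ k ∈ Finset.Icc b (pr n b), cCoef n N q i j k • (L (zz i k) * R (zz k j))^N := by
    intro b hb hib hbj hor
    have m := mid b hb
    have h0 : Osum n v (fun k => L (zz i k)) b * Osum n v (fun k => R (zz k j)) b = 0 := by
      rcases hor with h | h
      · rw [OA b h.le, zero_mul]
      · rw [OB b h.le, mul_zero]
    rw [h0, smul_zero, Dk_zero_right' _ _ (by omega)] at m
    rw [m]
    refine Finset.sum_congr rfl fun k hk => ?_
    congr 1
    rw [cCoef]
    by_cases h2 : 2 * k = n + 1
    · rw [if_pos h2, if_pos]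
      exact ⟨⟨k - 1, by omega⟩, h2, by omega, by omega⟩
    · rw [if_neg h2, if_neg (fun h => h2 h.2.1)]
  have rest : ∀ s : Finset ℕ, (∀ k ∈ s, ∀ l ∈ s, k + l ≠ n + 1) → 
      (∑ k ∈ s, L (zz i k) * R (zz k j))^N = 
      ∑ k ∈ s, cCoef n N q i j k • (L (zz i k) * R (zz k j))^N := by
    intro s hs
    rw [peel N hNodd (q^2) hQ (fun k => L (zz i k) * R (zz k j)) s 
      (fun k hk l hl hkl => qc k l hkl (hs k hk l hl))]
    refine Finset.sum_congr rfl fun k hk => ?_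
    rw [cCoef, if_neg, one_smul]
    rintro ⟨_, h1, _⟩
    exact hs k hk k hk (by omega)
  have comb : ∀ s t : Finset ℕ, (∀ k ∈ s, ∀ l ∈ t, k < l ∧ k + l ≠ n + 1) → 
      (∑ k ∈ s, L (zz i k) * R (zz k j) + ∑ k ∈ t, L (zz i k) * R (zz k j))^N =
      (∑ k ∈ s, L (zz i k) * R (zz k j))^N + (∑ k ∈ t, L (zz i k) * R (zz k j))^N := by
    intro s t h
    refine qbinom N hNodd (q^2) hQ _ _ ?_
    rw [Finset.sum_mul_sum, Finset.sum_mul_sum, Finset.smul_sum]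
    simp only [Finset.smul_sum]
    rw [Finset.sum_comm]
    exact Finset.sum_congr rfl fun l hl => Finset.sum_congr rfl fun k hk => qc k l (h k hk l hl).1 (h k hk l hl).2
  rcases le_total i (pr n j) with hle | hle
  · have e : Finset.Icc i j = Finset.Ico i (pr n j) ∪ Finset.Icc (pr n j) (pr n (pr n j)) := by
      ext m; simp only [Finset.mem_union, Finset.mem_Icc, Finset.mem_Ico, pr] at *; omega
    have d : Disjoint (Finset.Ico i (pr n j)) (Finset.Icc (pr n j) (pr n (pr n j))) := by
      rw [Finset.disjoint_left]; intro m
      simp only [Finset.mem_Icc, Finset.mem_Ico]; omega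
    rw [e, Finset.sum_union d, Finset.sum_union d, comb, step, rest]
    · intro k hk l hl; simp only [Finset.mem_Ico, pr] at *; omega
    · simp only [pr]; omega
    · exact hle
    · simp only [pr]; omega
    · right; rfl
    · intro k hk l hl; simp only [Finset.mem_Ico, Finset.mem_Icc, pr] at *; omega
  · have e : Finset.Icc i j = Finset.Icc i (pr n i) ∪ Finset.Ioc (pr n i) j := by
      ext m; simp only [Finset.mem_union, Finset.mem_Icc, Finset.mem_Ioc, pr] at *; omega
    have d : Disjoint (Finset.Icc i (pr n i)) (Finset.Ioc (pr n i) j) := by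
      rw [Finset.disjoint_left]; intro m
      simp only [Finset.mem_Icc, Finset.mem_Ioc]; omega
    rw [e, Finset.sum_union d, Finset.sum_union d, comb, step, rest]
    · intro k hk l hl; simp only [Finset.mem_Ioc, pr] at *; omega
    · exact hi
    · exact le_rfl
    · simp only [pr] at *; omega
    · left; rfl
    · intro k hk l hl; simp only [Finset.mem_Ioc, Finset.mem_Icc, pr] at *; omega

/-- If `Δ` is an algebra map on `𝒪_q(B⁺)` given on the generators by the
standard comultiplication, then `Δ(z_{ij}^N) = ∑_{k=i}^{j} c^k_{ij} z_{ik}^N ⊗ z_{kj}^N`. -/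
theorem delta_pow_N (n : ℕ) (hn : 3 ≤ n) (N : ℕ) (hN1 : 1 < N) (hNodd : Odd N)
    (q v : ℂ) (hv : v ^ 2 = q) (hq : IsPrimitiveRoot q N)
    (Δ : OB n q v →ₐ[ℂ] (OB n q v ⊗[ℂ] OB n q v))
    (hΔ : ∀ i j : ℕ, 1 ≤ i → i ≤ j → j ≤ n →
      Δ (z n q v i j) = ∑ k ∈ Finset.Icc i j, z n q v i k ⊗ₜ[ℂ] z n q v k j) :
    ∀ i j : ℕ, 1 ≤ i → i ≤ j → j ≤ n →
      Δ (z n q v i j ^ N) =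
        ∑ k ∈ Finset.Icc i j,
          cCoef n N q i j k • ((z n q v i k ^ N) ⊗ₜ[ℂ] (z n q v k j ^ N)) := by
  intro i j hi hij hj
  have hq0 : q ≠ 0 := hq.ne_zero (by omega)
  have hv0 : v ≠ 0 := by rintro rfl; apply hq0; rw [← hv]; norm_num
  exact core n N hN1 hNodd q v hv hq hq0 hv0 (z n q v) (fun i j h => z_zero n q v i j (Or.inl h))
    (eucl_row n q v hq0 hv0) (eucl_col n q v hq0 hv0) _ _
    (short_row n q v hq0) (short_col n q v hq0) Δ hΔ i j hi hij hj

end SOq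
end
end

section
/- Let N > 1 be an odd integer and let q be a primitive N-th root of unity in ℂ. Suppose Δ : 𝒪_q(B⁺) → 𝒪_q(B⁺) ⊗_ℂ 𝒪_q(B⁺) and ε : 𝒪_q(B⁺) → ℂ are algebra homomorphisms with Δ(z_{ij}) = Σ_{k=i}^{j} z_{ik} ⊗ z_{kj} and ε(z_{ij}) = δ_{ij} for all i ≤ j. Define γ_{ij} := (1+q)^N/2 if n is odd and i < n₀ < j, and γ_{ij} := 1 otherwise, and set Y_{ij} := γ_{ij} · z_{ij}^N. Then Δ(Y_{ij}) = Σ_{k=i}^{j} Y_{ik} ⊗ Y_{kj} and ε(Y_{ij}) = δ_{ij} for all 1 ≤ i ≤ j ≤ n. (This is the coalgebra-map part of the theorem stating that X_{ij} ↦ γ_{ij} z_{ij}^N defines the dual quantum Frobenius inclusion 𝒪(B⁺) → 𝒪_q(B⁺) for types B and D.) -/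
noncomputable section
open scoped TensorProduct

namespace SOq

/-- The coefficient `γ_{ij}`. -/
def gam (n N : ℕ) (q : ℂ) (i j : ℕ) : ℂ :=
  if Odd n ∧ 2 * i < n + 1 ∧ n + 1 < 2 * j then (1 + q) ^ N / 2 else 1

def qn (p : ℂ) (m : ℕ) : ℂ := ∑ i ∈ Finset.range m, p ^ i

def gg (p : ℂ) : ℕ → ℕ → ℂ
  | 0, _ => 1
  | _ + 1, 0 => 1
  | i + 1, j + 1 => gg p i (j + 1) + p ^ (i + 1) * gg p (i + 1) j

def KK (p : ℂ) {A : Type*} [Ring A] [Algebra ℂ A] (W b : A) : ℕ → A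
  | 0 => 1
  | 1 => W
  | m + 2 => W * KK p W b (m + 1) + qn p (m + 1) • (b * KK p W b m)

lemma qn_succ (p : ℂ) (m : ℕ) : qn p (m + 1) = qn p m + p ^ m := Finset.sum_range_succ _ _

lemma qn_succ' (p : ℂ) (m : ℕ) : qn p (m + 1) = p * qn p m + 1 := by
  simp [qn, Finset.sum_range_succ', Finset.mul_sum, pow_succ']

lemma qn_add (p : ℂ) (a b : ℕ) : qn p (a + b) = qn p a + p ^ a * qn p b := by
  induction b with
  | zero => simp [qn]
  | succ b ih => rw [← add_assoc, qn_succ, ih, qn_succ]; ring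

lemma qn_mul (p : ℂ) (m : ℕ) : qn p m * (p - 1) = p ^ m - 1 := by
  simpa [qn] using geom_sum_mul p m

lemma gg_zero_right (p : ℂ) (i : ℕ) : gg p i 0 = 1 := by cases i <;> simp [gg]
lemma gg_zero_left (p : ℂ) (i : ℕ) : gg p 0 i = 1 := by simp [gg]

lemma gg_both (p : ℂ) (s : ℕ) : ∀ i j, i + j = s →
    qn p (i + j + 1) * gg p i j = gg p (i + 1) j * qn p (i + 1) ∧
    qn p (i + j + 1) * gg p i j = gg p i (j + 1) * qn p (j + 1) := by
  induction s with
  | zero =>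
    intro i j h
    obtain ⟨rfl, rfl⟩ : i = 0 ∧ j = 0 := by omega
    simp [gg_zero_left, gg_zero_right]
  | succ s ih =>
    intro i j h
    constructor
    · cases j with
      | zero => simp [gg_zero_right]
      | succ j =>
        have h2 := (ih i j (by omega)).1
        have h3 := (ih i j (by omega)).2
        rw [gg]
        have e1 : i + (j + 1) + 1 = (i + 1) + (j + 1) := by ring
        rw [e1, qn_add p (i + 1) (j + 1)]
        linear_combination p ^ (i + 1) * (-h3 + h2)
    · cases i with
      | zero => simp [gg_zero_left]
      | succ i =>
        have h2 := (ih i j (by omega)).1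
        have h3 := (ih i j (by omega)).2
        rw [gg]
        have e1 : i + 1 + j + 1 = (i + 1) + (j + 1) := by ring
        rw [e1, qn_add p (i + 1) (j + 1)]
        have h4 := (ih i (j) (by omega)).2
        linear_combination h3 - h2

section main
variable {A : Type*} [Ring A] [Algebra ℂ A]

lemma e_pow (p : ℂ) (e f b0 b1 : A) (hef : e * f = p • (f * e) + b1 - b0)
    (h1 : b1 * f = p ^ 2 • (f * b1)) (h0 : b0 * f = f * b0) (i : ℕ) :
    e * f ^ (i + 1) = p ^ (i + 1) • (f ^ (i + 1) * e) + (p ^ i * qn p (i + 1)) • (f ^ i * b1)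
      - qn p (i + 1) • (f ^ i * b0) := by
  induction i with
  | zero => simp [hef, qn]
  | succ i ih =>
    rw [pow_succ f (i + 1), ← mul_assoc, ih]
    simp only [add_mul, sub_mul, smul_mul_assoc, mul_assoc, hef, h1, h0, mul_add, mul_sub,
      mul_smul_comm, smul_add, smul_sub, smul_smul]
    simp only [← mul_assoc, ← pow_succ]
    rw [qn_succ p (i + 1)]
    have : qn p (i + 1) * p + 1 = qn p (i + 1) + p ^ (i + 1) := by
      rw [← qn_succ p (i + 1), qn_succ' p (i + 1)]; ring
    have e1 : p ^ (i + 1) * (qn p (i + 1) + p ^ (i + 1)) = p ^ (i + 1) + p ^ i * qn p (i + 1) * p ^ 2 := by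
      rw [← this]; ring
    rw [e1]
    module

lemma KK_split1 (p : ℂ) (e f b0 b1 : A) (hef : e * f = p • (f * e) + b1 - b0)
    (h1 : b1 * f = p ^ 2 • (f * b1)) (h0 : b0 * f = f * b0) (m : ℕ) :
    KK p (e + f) b0 m = ∑ x ∈ Finset.HasAntidiagonal.antidiagonal m, gg p x.1 x.2 • (f ^ x.1 * KK p e b1 x.2) := by
  induction m using Nat.twoStepInduction with
  | zero => simp [KK, gg]
  | one => simp [KK, gg, Finset.Nat.antidiagonal_succ]
  | more m ih0 ih1 =>
    rw [KK, ih0, ih1]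
    have hb : ∀ i, b0 * f ^ i = f ^ i * b0 := fun i =>
      ((show Commute b0 f from h0).pow_right i).eq
    have E1 : ∀ x ∈ Finset.HasAntidiagonal.antidiagonal m,
        e * gg p (x.1 + 1) x.2 • (f ^ (x.1 + 1) * KK p e b1 x.2)
        + qn p (m + 1) • (b0 * gg p x.1 x.2 • (f ^ x.1 * KK p e b1 x.2))
        = gg p (x.1 + 1) x.2 • p ^ (x.1 + 1) • (f ^ (x.1 + 1) * (e * KK p e b1 x.2)) +
          (gg p x.1 (x.2 + 1) * p ^ x.1) • (f ^ x.1 * (qn p (x.2 + 1) • (b1 * KK p e b1 x.2))) := by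
      rintro ⟨i, j⟩ hx
      rw [Finset.HasAntidiagonal.mem_antidiagonal] at hx
      simp only at hx ⊢
      subst hx
      obtain ⟨g1, g2⟩ := gg_both p (i + j) i j rfl
      have g3 := g1.symm.trans g2
      simp only [mul_smul_comm, smul_smul]
      rw [← mul_assoc b0, hb, ← mul_assoc e, e_pow p e f b0 b1 hef h1 h0 i, g1]
      simp only [add_mul, sub_mul, smul_mul_assoc, mul_assoc, smul_add, smul_sub, smul_smul]
      have : gg p (i + 1) j * (p ^ i * qn p (i + 1)) = gg p i (j + 1) * (p ^ i * qn p (j + 1)) := by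
        linear_combination p ^ i * g3
      rw [this]
      module
    have E2 : e * ∑ x ∈ Finset.HasAntidiagonal.antidiagonal (m + 1), gg p x.1 x.2 • (f ^ x.1 * KK p e b1 x.2)
       + qn p (m + 1) • (b0 * ∑ x ∈ Finset.HasAntidiagonal.antidiagonal m, gg p x.1 x.2 • (f ^ x.1 * KK p e b1 x.2))
       = ∑ x ∈ Finset.HasAntidiagonal.antidiagonal (m + 1), (gg p x.1 x.2 * p ^ x.1) • (f ^ x.1 * KK p e b1 (x.2 + 1)) := by
      rw [Finset.mul_sum, Finset.Nat.sum_antidiagonal_succ, Finset.mul_sum, Finset.smul_sum, add_assoc, ← Finset.sum_add_distrib,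
        Finset.sum_congr rfl E1, Finset.sum_add_distrib, ← add_assoc]
      have : e * gg p 0 (m + 1) • (f ^ 0 * KK p e b1 (m + 1)) +
        ∑ x ∈ Finset.HasAntidiagonal.antidiagonal m,
          gg p (x.1 + 1) x.2 • p ^ (x.1 + 1) • (f ^ (x.1 + 1) * (e * KK p e b1 x.2)) =
          ∑ x ∈ Finset.HasAntidiagonal.antidiagonal (m + 1), (gg p x.1 x.2 * p ^ x.1) • (f ^ x.1 * (e * KK p e b1 x.2)) := by
        rw [Finset.Nat.sum_antidiagonal_succ]
        simp [mul_smul]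
      rw [this, Finset.Nat.sum_antidiagonal_succ', Finset.Nat.sum_antidiagonal_succ']
      simp only [KK, mul_add, smul_add, Finset.sum_add_distrib, mul_one]
      abel
    have E3 : f * ∑ x ∈ Finset.HasAntidiagonal.antidiagonal (m + 1), gg p x.1 x.2 • (f ^ x.1 * KK p e b1 x.2)
      = ∑ x ∈ Finset.HasAntidiagonal.antidiagonal (m + 1), gg p x.1 x.2 • (f ^ (x.1 + 1) * KK p e b1 x.2) := by
      rw [Finset.mul_sum]
      refine Finset.sum_congr rfl fun x _ => ?_
      rw [mul_smul_comm, pow_succ', mul_assoc]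
    rw [add_mul, add_right_comm, E2, E3]
    rw [Finset.Nat.sum_antidiagonal_succ (n := m + 1), Finset.Nat.sum_antidiagonal_succ (n := m),
      Finset.Nat.sum_antidiagonal_succ' (n := m), Finset.Nat.sum_antidiagonal_succ' (n := m)]
    simp only [gg, add_smul, Finset.sum_add_distrib, gg_zero_left, gg_zero_right, pow_zero, one_mul]
    simp [mul_comm]
    abel


lemma u_KK (p : ℂ) (u W b : A) (hW : u * W = p • (W * u)) (hb : u * b = p ^ 2 • (b * u)) (m : ℕ) :
    u * KK p W b m = p ^ m • (KK p W b m * u) := by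
  induction m using Nat.twoStepInduction with
  | zero => simp [KK]
  | one => simp [KK, hW]
  | more m ih0 ih1 =>
    rw [KK, mul_add, ← mul_assoc, hW, mul_smul_comm, ← mul_assoc, hb, smul_mul_assoc, mul_assoc, ih1,
      smul_mul_assoc, mul_assoc, ih0]
    simp only [mul_smul_comm, smul_smul, add_mul, smul_mul_assoc, smul_add, mul_assoc]
    congr 2 <;> ring

lemma KK_split2 (p : ℂ) (u W b : A) (hW : u * W = p • (W * u)) (hb : u * b = p ^ 2 • (b * u)) (m : ℕ) :
    KK p (u + W) b m = ∑ x ∈ Finset.HasAntidiagonal.antidiagonal m,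
      gg p x.1 x.2 • (KK p W b x.1 * u ^ x.2) := by
  induction m using Nat.twoStepInduction with
  | zero => simp [KK, gg]
  | one => simp [KK, gg, Finset.Nat.antidiagonal_succ]
  | more m ih0 ih1 =>
    rw [KK, ih0, ih1]
    have E2 : W * ∑ x ∈ Finset.HasAntidiagonal.antidiagonal (m + 1), gg p x.1 x.2 • (KK p W b x.1 * u ^ x.2)
       + qn p (m + 1) • (b * ∑ x ∈ Finset.HasAntidiagonal.antidiagonal m, gg p x.1 x.2 • (KK p W b x.1 * u ^ x.2))
       = ∑ x ∈ Finset.HasAntidiagonal.antidiagonal (m + 1), gg p x.1 x.2 • (KK p W b (x.1 + 1) * u ^ x.2) := by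
      rw [Finset.mul_sum, Finset.Nat.sum_antidiagonal_succ, Finset.Nat.sum_antidiagonal_succ,
        Finset.mul_sum, Finset.smul_sum, add_assoc, ← Finset.sum_add_distrib]
      congr 1
      · simp [KK]
      refine Finset.sum_congr rfl ?_
      rintro ⟨i, j⟩ hx
      rw [Finset.HasAntidiagonal.mem_antidiagonal] at hx
      simp only at hx ⊢
      subst hx
      obtain ⟨g1, g2⟩ := gg_both p (i + j) i j rfl
      rw [KK]
      simp only [mul_smul_comm, smul_smul, add_mul, smul_mul_assoc, smul_add, mul_assoc, g1]
    have E3 : u * ∑ x ∈ Finset.HasAntidiagonal.antidiagonal (m + 1), gg p x.1 x.2 • (KK p W b x.1 * u ^ x.2)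
      = ∑ x ∈ Finset.HasAntidiagonal.antidiagonal (m + 1), (p ^ x.1 * gg p x.1 x.2) • (KK p W b x.1 * u ^ (x.2 + 1)) := by
      rw [Finset.mul_sum]
      refine Finset.sum_congr rfl fun x _ => ?_
      rw [mul_smul_comm, ← mul_assoc, u_KK p u W b hW hb, pow_succ', smul_mul_assoc, smul_smul, mul_assoc,
        mul_comm (p ^ _)]
    rw [add_mul, add_assoc, E2, E3]
    rw [Finset.Nat.sum_antidiagonal_succ (n := m + 1), Finset.Nat.sum_antidiagonal_succ (n := m),
      Finset.Nat.sum_antidiagonal_succ' (n := m), Finset.Nat.sum_antidiagonal_succ' (n := m)]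
    simp only [gg, add_smul, Finset.sum_add_distrib, gg_zero_left, gg_zero_right, pow_zero, one_mul]
    simp
    abel

lemma qn_N {p : ℂ} {N : ℕ} (hN1 : 1 < N) (hp : IsPrimitiveRoot p N) : qn p N = 0 :=
  hp.geom_sum_eq_zero hN1

lemma qn_ne {p : ℂ} {N m : ℕ} (hp : IsPrimitiveRoot p N) (h0 : 0 < m) (h1 : m < N) : qn p m ≠ 0 := by
  intro h
  have := qn_mul p m
  rw [h, zero_mul] at this
  exact hp.pow_ne_one_of_pos_of_lt h0.ne' h1 (by linear_combination -this)

lemma gg_van {p : ℂ} {N : ℕ} (hN1 : 1 < N) (hp : IsPrimitiveRoot p N) (i j : ℕ) (hi : 0 < i) (hj : 0 < j)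
    (h : i + j = N) : gg p i j = 0 := by
  obtain ⟨i, rfl⟩ := Nat.exists_eq_add_of_lt hi
  rw [zero_add] at *
  have := (gg_both p _ i j rfl).1
  rw [show i + j + 1 = N by omega, qn_N hN1 hp, zero_mul] at this
  exact (mul_eq_zero.mp this.symm).resolve_right (qn_ne hp hi (by omega))

lemma sum_ends {N : ℕ} (hN : 0 < N) (F : ℕ × ℕ → A)
    (h : ∀ i j, 0 < i → 0 < j → i + j = N → F (i, j) = 0) :
    ∑ x ∈ Finset.HasAntidiagonal.antidiagonal N, F x = F (0, N) + F (N, 0) := by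
  rw [← Finset.sum_pair (f := F) (a := (0, N)) (b := (N, 0)) (by simp; omega)]
  symm
  apply Finset.sum_subset
  · intro x; simp; rintro (rfl | rfl) <;> simp
  · rintro ⟨i, j⟩ hx hx2
    simp at hx hx2
    exact h i j (by omega) (by omega) hx

lemma KK_main {p : ℂ} {N : ℕ} (hN1 : 1 < N) (hp : IsPrimitiveRoot p N) (u W f b0 b1 : A)
    (huf : u * f = p • (f * u) + b1 - b0) (hWf : W * f = p • (f * W)) (huW : u * W = p • (W * u))
    (hb1f : b1 * f = p ^ 2 • (f * b1)) (hub1 : u * b1 = p ^ 2 • (b1 * u)) (hb0f : b0 * f = f * b0) :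
    KK p (u + W + f) b0 N = f ^ N + u ^ N + KK p W b1 N := by
  rw [KK_split1 p (u + W) f b0 b1 (by rw [add_mul, huf, hWf, mul_add, smul_add]; abel) hb1f hb0f,
    sum_ends (by omega), KK_split2 p u W b1 huW hub1, sum_ends (by omega)]
  · simp [gg_zero_left, gg_zero_right, KK]; abel
  · intro i j hi hj h; simp [gg_van hN1 hp i j hi hj h]
  · intro i j hi hj h; simp [gg_van hN1 hp i j hi hj h]

lemma KK_zero (p : ℂ) (L : A) (m : ℕ) : KK p L 0 m = L ^ m := by
  induction m using Nat.twoStepInduction with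
  | zero => simp [KK]
  | one => simp [KK]
  | more m ih0 ih1 => simp [KK, ih1, pow_succ' _ (m + 1)]

lemma KK_odd (p : ℂ) (b : A) (m : ℕ) : KK p 0 b (2 * m + 1) = 0 := by
  induction m with
  | zero => simp [KK]
  | succ m ih =>
    rw [show 2 * (m + 1) + 1 = (2 * m + 1) + 2 by ring, KK, ih]; simp

/-- Binary lemma -/
lemma B2 {p : ℂ} {N : ℕ} (hN1 : 1 < N) (hNo : Odd N) (hp : IsPrimitiveRoot p N) (e f b : A)
    (hef : e * f = p • (f * e) + b) (hbf : b * f = p ^ 2 • (f * b)) (heb : e * b = p ^ 2 • (b * e)) :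
    (e + f) ^ N = e ^ N + f ^ N := by
  have := KK_main hN1 hp e 0 f 0 b (by simpa using hef) (by simp) (by simp) hbf heb (by simp)
  obtain ⟨m, rfl⟩ := hNo
  rw [KK_odd, KK_zero] at this
  simpa [add_comm] using this

lemma prod_one_add {q : ℂ} {N : ℕ} (hNo : Odd N) (hq : IsPrimitiveRoot q N) :
    ∏ i ∈ Finset.range N, (1 + q ^ i) = 2 := by
  have hpos : 0 < N := hNo.pos
  have := hq.pow_add_pow_eq_prod_add_mul (1 : ℂ) 1 hNo
  simp only [one_pow, mul_one] at this
  rw [show (2 : ℂ) = 1 + 1 by norm_num, this]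
  refine Finset.prod_nbij (fun i => q ^ i) ?_ ?_ ?_ (fun _ _ => rfl)
  · intro i _
    rw [Polynomial.mem_nthRootsFinset hpos, ← pow_mul, mul_comm, pow_mul, hq.pow_eq_one, one_pow]
  · intro i hi j hj h
    exact hq.pow_inj (by simpa using hi) (by simpa using hj) h
  · intro x hx
    rw [Finset.mem_coe, Polynomial.mem_nthRootsFinset hpos] at hx
    have : NeZero N := ⟨hpos.ne'⟩
    obtain ⟨i, hi, rfl⟩ := hq.eq_pow_of_pow_eq_one hx
    exact ⟨i, by simpa using hi, rfl⟩

lemma KK_mid {q : ℂ} {N : ℕ} (hN1 : 1 < N) (hNo : Odd N) (hq : IsPrimitiveRoot q N) (h1q : 1 + q ≠ 0) (X b : A)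
    (hb : b = ((q ^ 2 - 1) * q / (1 + q) ^ 2) • (X * X)) :
    KK (q ^ 2) X b N = (2 / (1 + q) ^ N) • X ^ N := by
  have key : ∀ m, KK (q ^ 2) X b m = ((∏ i ∈ Finset.range m, (1 + q ^ (i + 1))) / (1 + q) ^ m) • X ^ m := by
    intro m
    induction m using Nat.twoStepInduction with
    | zero => simp [KK]
    | one => simp [KK, h1q]
    | more m ih0 ih1 =>
      rw [KK, ih0, ih1, hb]
      simp only [mul_smul_comm, smul_mul_assoc, smul_smul, mul_assoc, ← pow_succ', ← add_smul]
      congr 1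
      have := qn_mul (q ^ 2) (m + 1)
      rw [Finset.prod_range_succ _ (m + 1), Finset.prod_range_succ _ m]
      set P := ∏ i ∈ Finset.range m, (1 + q ^ (i + 1))
      have e : qn (q ^ 2) (m + 1) * ((q ^ 2 - 1) * q / (1 + q) ^ 2 * (P / (1 + q) ^ m)) =
         ((q ^ 2) ^ (m + 1) - 1) * q / (1 + q) ^ 2 * (P / (1 + q) ^ m) := by
        rw [← this]; ring
      rw [mul_comm (P / _), e]
      field_simp
      ring
  rw [key]
  congr 2
  have := prod_one_add hNo hq
  obtain ⟨M, rfl⟩ : ∃ M, N = M + 1 := ⟨N - 1, by omega⟩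
  rw [Finset.prod_range_succ'] at this
  rw [Finset.prod_range_succ, hq.pow_eq_one, ← this]
  simp

def cc (n : ℕ) (v : ℂ) (a : ℕ) : ℂ := Jc n v a (n + 1 - a)

def SS (n : ℕ) (v : ℂ) (x : ℕ → A) (a : ℕ) : A :=
  ∑ k ∈ Finset.Icc 1 (n - a), cc n v k • (x k * x (n + 1 - k))

lemma cc_lo (n : ℕ) (v : ℂ) (a : ℕ) (h : 2 * a < n + 1) : cc n v a = v ^ (2 * a - n : ℤ) := by
  simp only [cc, Jc, pr, twoRho, if_true, if_pos h]
  congr 1; ring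

lemma cc_hi (n : ℕ) (v : ℂ) (a : ℕ) (h : 2 * a < n + 1) :
    cc n v (n + 1 - a) = v ^ (-(2 * a - n : ℤ)) := by
  simp only [cc, Jc, pr, twoRho, if_true]
  rw [if_neg (by omega), if_neg (by omega)]
  congr 1
  push_cast [Nat.cast_sub (show a ≤ n + 1 by omega)]
  ring

lemma cc_mid (n : ℕ) (v : ℂ) (a : ℕ) (h : 2 * a = n + 1) : cc n v a = 1 := by
  simp [cc, Jc, pr, twoRho, h]

lemma cc_sq (n : ℕ) (q v : ℂ) (hv : v ^ 2 = q) (a : ℕ) (h : 2 * a < n + 1) :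
    cc n v a * cc n v a = q ^ (2 * a - n : ℤ) := by
  rw [cc_lo n v a h, ← hv, ← mul_zpow, sq]

lemma cc_mul (n : ℕ) (v : ℂ) (hv0 : v ≠ 0) (a : ℕ) (h : 2 * a < n + 1) :
    cc n v a * cc n v (n + 1 - a) = 1 := by
  rw [cc_lo n v a h, cc_hi n v a h, ← zpow_add₀ hv0]; simp

structure QE (n : ℕ) (q v : ℂ) (x : ℕ → A) : Prop where
  r1 : ∀ k l, 1 ≤ k → k < l → l ≤ n → k + l ≠ n + 1 → x k * x l = q • (x l * x k)
  r2 : ∀ a, 1 ≤ a → 2 * a < n + 1 →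
    x (n + 1 - a) * x a = x a * x (n + 1 - a) + ((q ^ 2 - 1) * cc n v a) • SS n v x a
  r3 : SS n v x 0 = 0

variable {n : ℕ} {q v : ℂ} {x : ℕ → A}

lemma SS_step (hv0 : v ≠ 0) (a : ℕ) (h : 2 * (a + 1) ≤ n) :
    x (n - a) * x (a + 1) = cc n v (a + 1) • (SS n v x a - SS n v x (a + 1)) := by
  have e : n - a = (n - (a + 1)) + 1 := by omega
  have : SS n v x a = SS n v x (a + 1) + cc n v (n - a) • (x (n - a) * x (a + 1)) := by
    unfold SS
    rw [e, Finset.sum_Icc_succ_top (by omega)]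
    congr 4
    omega
  rw [this, add_sub_cancel_left, smul_smul]
  have := cc_mul n v hv0 (a + 1) (by omega)
  rw [show n + 1 - (a + 1) = n - a by omega] at this
  rw [this, one_smul]

lemma QE.pa (hx : QE n q v x) (hv0 : v ≠ 0) (a : ℕ) (h : 2 * (a + 1) ≤ n) :
    x (a + 1) * x (n - a) = cc n v (a + 1) • (SS n v x a - q ^ 2 • SS n v x (a + 1)) := by
  have h1 := SS_step (x := x) hv0 a h
  have h2 := hx.r2 (a + 1) (by omega) (by omega)
  rw [show n + 1 - (a + 1) = n - a by omega, h1] at h2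
  rw [← sub_eq_iff_eq_add] at h2
  rw [← h2]
  module

lemma QE.comm (hx : QE n q v x) (hv0 : v ≠ 0) (a k : ℕ) (h : 2 * a ≤ n) (h1 : a < k) (h2 : k < n + 1 - a) :
    x k * SS n v x a = SS n v x a * x k := by
  induction a with
  | zero => simp [hx.r3]
  | succ a ih =>
    have h3 := SS_step (x := x) hv0 a h
    have ih := ih (by omega) (by omega) (by omega)
    have hc : cc n v (a + 1) ≠ 0 := left_ne_zero_of_mul_eq_one (cc_mul n v hv0 (a + 1) (by omega))
    have h4 : SS n v x (a + 1) = SS n v x a - (cc n v (a + 1))⁻¹ • (x (n - a) * x (a + 1)) := by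
      rw [h3, smul_smul, inv_mul_cancel₀ hc, one_smul]; abel
    rw [h4, mul_sub, sub_mul, ih]
    congr 1
    rw [mul_smul_comm, smul_mul_assoc]
    congr 1
    rw [← mul_assoc, hx.r1 k (n - a) (by omega) (by omega) (by omega) (by omega), mul_assoc,
      hx.r1 (a + 1) k (by omega) (by omega) (by omega) (by omega)]
    simp [mul_assoc]

lemma QE.up (hx : QE n q v x) (hv0 : v ≠ 0) (a : ℕ) (h : 2 * (a + 1) ≤ n) :
    x (a + 1) * SS n v x (a + 1) = q ^ 2 • (SS n v x (a + 1) * x (a + 1)) := by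
  have hc : cc n v (a + 1) ≠ 0 := left_ne_zero_of_mul_eq_one (cc_mul n v hv0 (a + 1) (by omega))
  have h1 := SS_step (x := x) hv0 a h
  have h2 := hx.pa hv0 a h
  have h3 := hx.comm hv0 a (a + 1) (by omega) (by omega) (by omega)
  have h4 : x (a + 1) * (x (n - a) * x (a + 1)) = x (a + 1) * x (n - a) * x (a + 1) := (mul_assoc _ _ _).symm
  rw [h1, h2, mul_smul_comm, smul_mul_assoc] at h4
  have h5 := smul_right_injective A hc h4
  simp only [mul_sub, sub_mul, h3, smul_mul_assoc] at h5
  exact sub_right_injective h5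

lemma QE.dn (hx : QE n q v x) (hv0 : v ≠ 0) (a : ℕ) (h : 2 * (a + 1) ≤ n) :
    SS n v x (a + 1) * x (n - a) = q ^ 2 • (x (n - a) * SS n v x (a + 1)) := by
  have hc : cc n v (a + 1) ≠ 0 := left_ne_zero_of_mul_eq_one (cc_mul n v hv0 (a + 1) (by omega))
  have h1 := SS_step (x := x) hv0 a h
  have h2 := hx.pa hv0 a h
  have h3 := hx.comm hv0 a (n - a) (by omega) (by omega) (by omega)
  have h4 : x (n - a) * x (a + 1) * x (n - a) = x (n - a) * (x (a + 1) * x (n - a)) := mul_assoc _ _ _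
  rw [h1, h2, mul_smul_comm, smul_mul_assoc] at h4
  have h5 := smul_right_injective A hc h4
  simp only [mul_sub, sub_mul, h3, mul_smul_comm] at h5
  exact sub_right_injective h5

lemma sum_outer {M : Type*} [AddCommMonoid M] (F : ℕ → M) (n a : ℕ) (h : 2 * (a + 1) ≤ n) :
    ∑ k ∈ Finset.Icc (a + 1) (n - a), F k =
      F (a + 1) + ∑ k ∈ Finset.Icc (a + 1 + 1) (n - (a + 1)), F k + F (n - a) := by
  have e : n - a = (n - (a + 1)) + 1 := by omega
  rw [e, Finset.sum_Icc_succ_top (by omega)]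
  congr 1
  rw [Finset.Icc_eq_cons_Ioc (by omega), Finset.sum_cons]
  congr 2
  ext k; simp [Nat.succ_le_iff]

lemma QE.VV (hx : QE n q v x) (hv0 : v ≠ 0) (hv : v ^ 2 = q) (a : ℕ) (h : 2 * a ≤ n) :
    ∑ k ∈ Finset.Icc (a + 1) (n - a), cc n v k • (x k * x (n + 1 - k)) =
      (1 + q ^ (2 * a + 2 - n : ℤ)) • SS n v x a := by
  have hq0 : q ≠ 0 := by rw [← hv]; positivity
  induction a with
  | zero =>
    have := hx.r3
    rw [this, smul_zero]
    exact this
  | succ a ih =>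
    have ih := ih (by omega)
    rw [sum_outer _ n a h] at ih
    rw [show n + 1 - (a + 1) = n - a by omega, show n + 1 - (n - a) = a + 1 by omega,
      SS_step hv0 a h, hx.pa hv0 a h, smul_smul, smul_smul] at ih
    have h1 := cc_mul n v hv0 (a + 1) (by omega)
    have h2 := cc_sq n q v hv (a + 1) (by omega)
    rw [show n + 1 - (a + 1) = n - a by omega] at h1
    rw [mul_comm] at h1
    rw [h1, h2] at ih
    have e1 : q ^ (2 * ((a + 1 : ℕ) : ℤ) + 2 - n) = q ^ (2 * ((a + 1 : ℕ) : ℤ) - n) * q ^ 2 := by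
      rw [← zpow_natCast q 2, ← zpow_add₀ hq0] ; congr 1; push_cast; ring
    have e2 : q ^ (2 * (a : ℤ) + 2 - n) = q ^ (2 * ((a + 1 : ℕ) : ℤ) - n) := by
      congr 1
    rw [e2] at ih
    rw [e1]
    generalize q ^ (2 * ((a + 1 : ℕ) : ℤ) - n) = t at *
    have ih' := eq_sub_of_add_eq' (eq_sub_of_add_eq ih)
    rw [ih']
    module

section pairs
variable {y : ℕ → A}

lemma SS_comm_left (hxy : ∀ k l, x k * y l = y l * x k) (a l : ℕ) :
    SS n v x a * y l = y l * SS n v x a := by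
  unfold SS
  rw [Finset.sum_mul, Finset.mul_sum]
  refine Finset.sum_congr rfl fun k _ => ?_
  rw [smul_mul_assoc, mul_smul_comm, mul_assoc, hxy, ← mul_assoc, hxy, mul_assoc]

lemma SS_comm_right (hxy : ∀ k l, x k * y l = y l * x k) (k a : ℕ) :
    x k * SS n v y a = SS n v y a * x k :=
  (SS_comm_left (fun k l => (hxy l k).symm) a k).symm

lemma SS_comm_both (hxy : ∀ k l, x k * y l = y l * x k) (a b : ℕ) :
    SS n v x a * SS n v y b = SS n v y b * SS n v x a := by
  unfold SS
  rw [Finset.sum_mul, Finset.mul_sum]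
  refine Finset.sum_congr rfl fun k _ => ?_
  have := SS_comm_right (n := n) (v := v) hxy
  unfold SS at this
  rw [smul_mul_assoc, mul_smul_comm, mul_assoc, this, ← mul_assoc, this, mul_assoc]

/-- interchange -/
lemma four {a b c d : A} (h : b * c = c * b) : (a * b) * (c * d) = (a * c) * (b * d) := by
  rw [mul_assoc, ← mul_assoc b, h]; simp [mul_assoc]

def bb (n : ℕ) (q v : ℂ) (x y : ℕ → A) (a : ℕ) : A :=
  ((q ^ 2 - 1) * q ^ (2 * a + 2 - n : ℤ)) • (SS n v x a * SS n v y a)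

lemma pair_step {N : ℕ} (hN1 : 1 < N) (hp : IsPrimitiveRoot (q ^ 2) N) (hv0 : v ≠ 0) (hv : v ^ 2 = q)
    (hx : QE n q v x) (hy : QE n q v y) (hxy : ∀ k l, x k * y l = y l * x k) (a : ℕ) (h : 2 * (a + 1) ≤ n) :
    KK (q ^ 2) (∑ k ∈ Finset.Icc (a + 1) (n - a), x k * y k) (bb n q v x y a) N =
      (x (n - a) * y (n - a)) ^ N + (x (a + 1) * y (a + 1)) ^ N +
      KK (q ^ 2) (∑ k ∈ Finset.Icc (a + 1 + 1) (n - (a + 1)), x k * y k) (bb n q v x y (a + 1)) N := by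
  have hq0 : q ≠ 0 := by rw [← hv]; positivity
  have hyx : ∀ k l, y k * x l = x l * y k := fun k l => (hxy l k).symm
  have hXX : ∀ k l, 1 ≤ k → k < l → l ≤ n → k + l ≠ n + 1 →
      (x k * y k) * (x l * y l) = q ^ 2 • ((x l * y l) * (x k * y k)) := by
    intro k l h1 h2 h3 h4
    rw [four (hyx k l), hx.r1 k l h1 h2 h3 h4, hy.r1 k l h1 h2 h3 h4, four (hyx l k),
      smul_mul_smul_comm, sq]
  rw [sum_outer _ n a h]
  apply KK_main hN1 hp
  · rw [four (hyx _ _), hx.pa hv0 a h, hy.pa hv0 a h, four (hyx _ _), SS_step hv0 a h, SS_step hv0 a h]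
    have e1 : q ^ (2 * ((a + 1 : ℕ) : ℤ) + 2 - n) = q ^ (2 * ((a + 1 : ℕ) : ℤ) - n) * q ^ 2 := by
      rw [← zpow_natCast q 2, ← zpow_add₀ hq0]; congr 1; push_cast; ring
    have e2 : q ^ (2 * (a : ℤ) + 2 - n) = q ^ (2 * ((a + 1 : ℕ) : ℤ) - n) := by
      congr 1
    unfold bb
    rw [e1, e2]
    have h2 := cc_sq n q v hv (a + 1) (by omega)
    rw [smul_mul_smul_comm, smul_mul_smul_comm, h2]
    simp only [mul_sub, sub_mul, smul_mul_assoc, mul_smul_comm]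
    module
  · rw [Finset.sum_mul, Finset.mul_sum, Finset.smul_sum]
    refine Finset.sum_congr rfl fun k hk => ?_
    rw [Finset.mem_Icc] at hk
    exact hXX _ _ (by omega) (by omega) (by omega) (by omega)
  · rw [Finset.sum_mul, Finset.mul_sum, Finset.smul_sum]
    refine Finset.sum_congr rfl fun k hk => ?_
    rw [Finset.mem_Icc] at hk
    exact hXX _ _ (by omega) (by omega) (by omega) (by omega)
  · unfold bb
    rw [smul_mul_assoc, mul_smul_comm, four (SS_comm_left hyx _ _), four (SS_comm_right hyx _ _),
      hx.dn hv0 a h, hy.dn hv0 a h, smul_mul_smul_comm]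
    module
  · unfold bb
    rw [smul_mul_assoc, mul_smul_comm, four (SS_comm_left hyx _ _), four (SS_comm_right hyx _ _),
      hx.up hv0 a h, hy.up hv0 a h, smul_mul_smul_comm]
    module
  · unfold bb
    rw [smul_mul_assoc, mul_smul_comm, four (SS_comm_left hyx _ _), four (SS_comm_right hyx _ _),
      hx.comm hv0 a (n - a) (by omega) (by omega) (by omega),
      hy.comm hv0 a (n - a) (by omega) (by omega) (by omega)]

lemma pair_sum {N : ℕ} (hN1 : 1 < N) (hNo : Odd N) (hq : IsPrimitiveRoot q N)
    (hv0 : v ≠ 0) (hv : v ^ 2 = q)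
    (hx : QE n q v x) (hy : QE n q v y) (hxy : ∀ k l, x k * y l = y l * x k) :
    (∑ k ∈ Finset.Icc 1 n, x k * y k) ^ N =
      ∑ k ∈ Finset.Icc 1 n, (if 2 * k = n + 1 then 2 / (1 + q) ^ N else 1) • (x k * y k) ^ N := by
  have hyx : ∀ k l, y k * x l = x l * y k := fun k l => (hxy l k).symm
  have hq0 : q ≠ 0 := by rw [← hv]; positivity
  have hp : IsPrimitiveRoot (q ^ 2) N := hq.pow_of_coprime 2 (by
    rw [Nat.coprime_comm]; exact hNo.coprime_two_right)
  have h2 : ∀ m, 1 + q ^ m ≠ 0 := by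
    intro m hm
    have h3 : (q ^ m) ^ N = 1 := by rw [← pow_mul, mul_comm, pow_mul, hq.pow_eq_one, one_pow]
    rw [show q ^ m = -1 by linear_combination hm, hNo.neg_one_pow] at h3
    norm_num at h3
  have key : ∀ d a, 2 * (a + d) ≤ n → n ≤ 2 * (a + d) + 1 →
      KK (q ^ 2) (∑ k ∈ Finset.Icc (a + 1) (n - a), x k * y k) (bb n q v x y a) N =
      ∑ k ∈ Finset.Icc (a + 1) (n - a), (if 2 * k = n + 1 then 2 / (1 + q) ^ N else (1 : ℂ)) • (x k * y k) ^ N := by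
    intro d
    induction d with
    | zero =>
      intro a h1 h2'
      have Vx := hx.VV hv0 hv a (by omega)
      have Vy := hy.VV hv0 hv a (by omega)
      rcases (show n = 2 * a ∨ n = 2 * a + 1 by omega) with rfl | rfl
      · rw [Finset.Icc_eq_empty (by omega)] at *
        obtain ⟨M, rfl⟩ := hNo
        rw [Finset.sum_empty, Finset.sum_empty, KK_odd]
      · rw [show 2 * a + 1 - a = a + 1 by omega, Finset.Icc_self] at *
        simp only [Finset.sum_singleton] at *
        rw [cc_mid _ _ _ (by omega), one_smul, show 2 * a + 1 + 1 - (a + 1) = a + 1 by omega,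
          show (2 * (a : ℤ) + 2 - ((2 * a + 1 : ℕ) : ℤ)) = 1 by push_cast; ring, zpow_one] at Vx Vy
        rw [if_pos (by omega)]
        have h1q : 1 + q ≠ 0 := by simpa using h2 1
        refine KK_mid hN1 hNo hq h1q _ _ ?_
        unfold bb
        rw [four (hyx _ _), Vx, Vy, smul_mul_smul_comm, smul_smul,
          show (2 * (a : ℤ) + 2 - ((2 * a + 1 : ℕ) : ℤ)) = 1 by push_cast; ring, zpow_one]
        congr 1
        field_simp
    | succ d ih =>
      intro a h1 h2'
      rw [pair_step hN1 hp hv0 hv hx hy hxy a (by omega), ih (a + 1) (by omega) (by omega),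
        sum_outer _ n a (by omega), if_neg (by omega), if_neg (by omega), one_smul, one_smul]
      abel
  have := key (n / 2) 0 (by omega) (by omega)
  unfold bb at this
  rw [hx.r3, zero_mul, smul_zero, KK_zero] at this
  exact this

end pairs

section middle

lemma antisymm_sum (s : Finset ℕ) (t : ℕ → ℕ → A) (h0 : ∀ a ∈ s, t a a = 0)
    (h : ∀ d ∈ s, ∀ a ∈ s, d < a → t d a + t a d = 0) : ∑ d ∈ s, ∑ a ∈ s, t d a = 0 := by
  have h1 : ∑ d ∈ s, ∑ a ∈ s, (t d a + t a d) = 0 := by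
    refine Finset.sum_eq_zero fun d hd => Finset.sum_eq_zero fun a ha => ?_
    rcases lt_trichotomy d a with h2 | h2 | h2
    · exact h d hd a ha h2
    · subst h2; simp [h0 d hd]
    · rw [add_comm]; exact h a ha d hd h2
  simp only [Finset.sum_add_distrib] at h1
  rw [Finset.sum_comm (f := fun d a => t a d), ← two_smul ℂ] at h1
  exact (smul_eq_zero.mp h1).resolve_left two_ne_zero

lemma mid_sum {N : ℕ} (hN1 : 1 < N) (hNo : Odd N) (hq : IsPrimitiveRoot q N) (hq0 : q ≠ 0)
    (W Y : ℕ → A) (P : ℕ → ℕ → A) (lo hi : ℕ)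
    (hYW : ∀ a b, Y a * W b = W b * Y a) (hPY : ∀ a b d, Y d * P a b = P a b * Y d)
    (hY : ∀ a b, lo ≤ a → a < b → b ≤ hi → Y a * Y b = q • (Y b * Y a))
    (hW : ∀ a b, lo ≤ a → a < b → b ≤ hi → W a * W b = W b * W a + P a b)
    (hPa : ∀ a b, lo ≤ a → a < b → b ≤ hi → W a * P a b = q • (P a b * W a))
    (hPb : ∀ a b, lo ≤ a → a < b → b ≤ hi → P a b * W b = q • (W b * P a b))
    (hPd : ∀ d a b, lo ≤ d → d < a → a < b → b ≤ hi →
      W d * P a b = P a b * W d + (q - q⁻¹) • (W a * P d b))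
    (hPc : ∀ d a b, lo ≤ d → d < a → a < b → b ≤ hi → W a * P d b = P d b * W a)
    (t : ℕ) (ht : t ≤ hi) :
    (∑ k ∈ Finset.Icc lo t, W k * Y k) ^ N = ∑ k ∈ Finset.Icc lo t, (W k * Y k) ^ N := by
  have hN0 : N ≠ 0 := by omega
  induction t with
  | zero =>
    rcases Nat.eq_zero_or_pos lo with rfl | h
    · simp
    · rw [Finset.Icc_eq_empty (by omega)]; simp [hN0]
  | succ t ih =>
    by_cases hlo : t + 1 < lo
    · rw [Finset.Icc_eq_empty (by omega)]; simp [hN0]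
    rw [Finset.sum_Icc_succ_top (by omega), Finset.sum_Icc_succ_top (by omega), ← ih (by omega)]
    apply B2 hN1 hNo hq _ _ (∑ a ∈ Finset.Icc lo t, q • (P a (t + 1) * (Y (t + 1) * Y a)))
    · rw [Finset.sum_mul, Finset.mul_sum, Finset.smul_sum, ← Finset.sum_add_distrib]
      refine Finset.sum_congr rfl fun a ha => ?_
      rw [Finset.mem_Icc] at ha
      rw [four (hYW _ _), four (hYW _ _), hW a (t + 1) (by omega) (by omega) (by omega),
        hY a (t + 1) (by omega) (by omega) (by omega), mul_smul_comm, add_mul, smul_add]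
    · rw [Finset.sum_mul, Finset.mul_sum, Finset.smul_sum]
      refine Finset.sum_congr rfl fun a ha => ?_
      rw [Finset.mem_Icc] at ha
      rw [smul_mul_assoc, mul_smul_comm, four (by rw [mul_assoc, hYW, ← mul_assoc, hYW, mul_assoc]),
        four (hPY _ _ _), hPb a (t + 1) (by omega) (by omega) (by omega), mul_assoc (Y (t + 1)),
        hY a (t + 1) (by omega) (by omega) (by omega), mul_smul_comm, smul_mul_smul_comm]
      module
    · rw [← sub_eq_zero]
      have : ∀ d a, (W d * Y d) * (q • (P a (t + 1) * (Y (t + 1) * Y a)))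
          - q ^ 2 • (q • (P a (t + 1) * (Y (t + 1) * Y a)) * (W d * Y d))
          = q • ((W d * P a (t + 1)) * (Y d * (Y (t + 1) * Y a)))
            - q ^ 3 • ((P a (t + 1) * W d) * (Y (t + 1) * (Y a * Y d))) := by
        intro d a
        rw [smul_mul_assoc, mul_smul_comm, four (hPY _ _ _),
          four (b := Y (t + 1) * Y a) (by rw [mul_assoc, hYW, ← mul_assoc, hYW, mul_assoc]),
          mul_assoc (Y (t + 1))]
        module
      have h2 := antisymm_sum (Finset.Icc lo t) (fun d a =>
        (W d * Y d) * (q • (P a (t + 1) * (Y (t + 1) * Y a)))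
          - q ^ 2 • (q • (P a (t + 1) * (Y (t + 1) * Y a)) * (W d * Y d))) ?_ ?_
      · rw [← h2, Finset.sum_mul_sum, Finset.sum_mul_sum, Finset.sum_comm (s := Finset.Icc lo t) (f := fun i j =>
          q • (P i (t + 1) * (Y (t + 1) * Y i)) * (W j * Y j)), Finset.smul_sum, ← Finset.sum_sub_distrib]
        refine Finset.sum_congr rfl fun d _ => ?_
        rw [Finset.smul_sum, ← Finset.sum_sub_distrib]
      · intro a ha
        rw [Finset.mem_Icc] at ha
        simp only [this]
        rw [hPa a (t + 1) (by omega) (by omega) (by omega), ← mul_assoc (Y a),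
          hY a (t + 1) (by omega) (by omega) (by omega)]
        simp only [smul_mul_assoc, mul_smul_comm, smul_smul, mul_assoc]
        module
      · intro d hd a ha hda
        rw [Finset.mem_Icc] at ha hd
        simp only [this]
        have y1 : Y d * (Y (t + 1) * Y a) = q ^ 2 • (Y (t + 1) * (Y a * Y d)) := by
          rw [← mul_assoc (Y d),
            hY d (t + 1) (by omega) (by omega) (by omega), smul_mul_assoc, mul_assoc,
            hY d a (by omega) (by omega) (by omega), mul_smul_comm, smul_smul, sq]
        have y2 : Y a * (Y (t + 1) * Y d) = q • (Y (t + 1) * (Y a * Y d)) := by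
          rw [← mul_assoc (Y a),
            hY a (t + 1) (by omega) (by omega) (by omega), smul_mul_assoc, mul_assoc]
        have y3 : Y (t + 1) * (Y d * Y a) = q • (Y (t + 1) * (Y a * Y d)) := by
          rw [hY d a (by omega) (by omega) (by omega), mul_smul_comm]
        rw [y1, y2, y3, hPd d a (t + 1) (by omega) (by omega) (by omega) (by omega),
          ← hPc d a (t + 1) (by omega) (by omega) (by omega) (by omega)]
        simp only [add_mul, smul_mul_assoc, mul_smul_comm, smul_add, smul_smul]
        have : q * (q ^ 2 * (q - q⁻¹)) = q ^ 4 - q ^ 2 := by field_simp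
        rw [this]
        module

end middle
end main

section frt

variable {A : Type*} [Ring A] [Algebra ℂ A]

lemma dsum (n a b : ℕ) (ha : a ∈ Finset.Icc 1 n) (hb : b ∈ Finset.Icc 1 n) (c : ℕ → ℕ → ℂ) (f : ℕ → ℕ → A) :
    ∑ k ∈ Finset.Icc 1 n, ∑ l ∈ Finset.Icc 1 n,
      (c k l * (if k = a then (1 : ℂ) else 0) * (if l = b then (1 : ℂ) else 0)) • f k l = c a b • f a b := by
  rw [Finset.sum_eq_single a, Finset.sum_eq_single b]
  · simp
  · intro l _ hl; simp [hl]
  · exact fun h => absurd hb h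
  · intro k _ hk; simp [hk]
  · exact fun h => absurd ha h

lemma jsum (n : ℕ) (v : ℂ) (p : ℕ → ℕ → Prop) [∀ a b, Decidable (p a b)] (s : Finset ℕ)
    (hs : ∀ k, k ∈ s ↔ (1 ≤ k ∧ k ≤ n ∧ p k (n + 1 - k)))
    (f : ℕ → ℕ → A) :
    ∑ k ∈ Finset.Icc 1 n, ∑ l ∈ Finset.Icc 1 n,
      ((if p k l then (1 : ℂ) else 0) * Jc n v k l) • f k l = ∑ k ∈ s, cc n v k • f k (n + 1 - k) := by
  have h1 : ∀ k ∈ Finset.Icc 1 n, ∑ l ∈ Finset.Icc 1 n,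
      ((if p k l then (1 : ℂ) else 0) * Jc n v k l) • f k l
      = if p k (n + 1 - k) then cc n v k • f k (n + 1 - k) else 0 := by
    intro k hk
    rw [Finset.mem_Icc] at hk
    rw [Finset.sum_eq_single (n + 1 - k)]
    · split_ifs <;> simp [cc]
    · intro l _ hl
      simp [Jc, pr, hl]
    · intro h
      exact absurd (Finset.mem_Icc.mpr (by omega)) h
  rw [Finset.sum_congr rfl h1, ← Finset.sum_filter]
  apply Finset.sum_congr _ (fun _ _ => rfl)
  ext k
  rw [Finset.mem_filter, hs, Finset.mem_Icc, and_assoc]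

lemma rsum1 (n : ℕ) (q v : ℂ) (a b : ℕ) (ha : a ∈ Finset.Icc 1 n) (hb : b ∈ Finset.Icc 1 n)
    (f : ℕ → ℕ → A) :
    ∑ k ∈ Finset.Icc 1 n, ∑ l ∈ Finset.Icc 1 n, Rc n q v l k a b • f k l =
      q ^ (((if a = b then 1 else 0) - (if a = pr n b then 1 else 0) : ℤ)) • f b a
      + (if a < b then q - q⁻¹ else 0) • f a b
      - ((q - q⁻¹) * Jc n v a b) • ∑ k ∈ Finset.Icc 1 (n - a), cc n v k • f k (n + 1 - k) := by
  have hs : ∀ k, k ∈ Finset.Icc 1 (n - a) ↔ (1 ≤ k ∧ k ≤ n ∧ (fun _ l => a < l) k (n + 1 - k)) := by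
    rw [Finset.mem_Icc] at ha
    intro k; rw [Finset.mem_Icc]; simp only; omega
  rw [← jsum n v (fun _ l => a < l) _ hs f,
    ← dsum n b a hb ha (fun k l => q ^ (((if l = k then 1 else 0) - (if l = pr n k then 1 else 0) : ℤ))) f,
    ← dsum n a b ha hb (fun k l => if a < l then q - q⁻¹ else 0) f]
  simp only [Finset.smul_sum, ← Finset.sum_add_distrib, ← Finset.sum_sub_distrib, smul_smul, ← add_smul, ← sub_smul]
  refine Finset.sum_congr rfl fun k _ => Finset.sum_congr rfl fun l _ => ?_
  congr 1
  unfold Rc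
  split_ifs <;> ring

lemma rsum2 (n : ℕ) (q v : ℂ) (i j : ℕ) (hi : i ∈ Finset.Icc 1 n) (hj : j ∈ Finset.Icc 1 n)
    (f : ℕ → ℕ → A) :
    ∑ k ∈ Finset.Icc 1 n, ∑ l ∈ Finset.Icc 1 n, Rc n q v j i k l • f k l =
      q ^ (((if j = i then 1 else 0) - (if j = pr n i then 1 else 0) : ℤ)) • f j i
      + (if i < j then q - q⁻¹ else 0) • f i j
      - ((q - q⁻¹) * Jc n v i j) • ∑ k ∈ Finset.Icc 1 (j - 1), cc n v k • f k (n + 1 - k) := by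
  have hs : ∀ k, k ∈ Finset.Icc 1 (j - 1) ↔ (1 ≤ k ∧ k ≤ n ∧ (fun k _ => k < j) k (n + 1 - k)) := by
    rw [Finset.mem_Icc] at hj
    intro k; rw [Finset.mem_Icc]; simp only; omega
  rw [← jsum n v (fun k _ => k < j) _ hs f,
    ← dsum n j i hj hi (fun _ _ => q ^ (((if j = i then 1 else 0) - (if j = pr n i then 1 else 0) : ℤ))) f,
    ← dsum n i j hi hj (fun k l => if k < j then q - q⁻¹ else 0) f]
  simp only [Finset.smul_sum, ← Finset.sum_add_distrib, ← Finset.sum_sub_distrib, smul_smul, ← add_smul, ← sub_smul]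
  refine Finset.sum_congr rfl fun k _ => Finset.sum_congr rfl fun l _ => ?_
  congr 1
  unfold Rc
  simp only [@eq_comm _ j k, @eq_comm _ i k, @eq_comm _ i l, @eq_comm _ j l]
  split_ifs <;> ring

/-- All defining relations of the quantum Borel algebra in collapsed form. -/
structure OBR (n : ℕ) (q v : ℂ) (Z : ℕ → ℕ → A) : Prop where
  frt : ∀ i b j a, i ∈ Finset.Icc 1 n → b ∈ Finset.Icc 1 n → j ∈ Finset.Icc 1 n →
      a ∈ Finset.Icc 1 n →
      q ^ (((if a = b then 1 else 0) - (if a = pr n b then 1 else 0) : ℤ)) • (Z i b * Z j a)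
      + (if a < b then q - q⁻¹ else 0) • (Z i a * Z j b)
      - ((q - q⁻¹) * Jc n v a b) • ∑ k ∈ Finset.Icc 1 (n - a), cc n v k • (Z i k * Z j (n + 1 - k))
      = q ^ (((if j = i then 1 else 0) - (if j = pr n i then 1 else 0) : ℤ)) • (Z j a * Z i b)
      + (if i < j then q - q⁻¹ else 0) • (Z i a * Z j b)
      - ((q - q⁻¹) * Jc n v i j) • ∑ k ∈ Finset.Icc 1 (j - 1), cc n v k • (Z k a * Z (n + 1 - k) b)
  row : ∀ i, 1 ≤ i → i ≤ n → 2 * i ≠ n + 1 → ∑ k ∈ Finset.Icc 1 n, cc n v k • (Z i k * Z i (n + 1 - k)) = 0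
  col : ∀ j, 1 ≤ j → j ≤ n → 2 * j ≠ n + 1 → ∑ k ∈ Finset.Icc 1 n, cc n v k • (Z k j * Z (n + 1 - k) j) = 0
  lower : ∀ i j, j < i → Z i j = 0
  out : ∀ i j, (i = 0 ∨ j = 0 ∨ n < i ∨ n < j) → Z i j = 0

lemma cc_ne (n : ℕ) (v : ℂ) (hv0 : v ≠ 0) (a : ℕ) : cc n v a ≠ 0 := by
  simp only [cc, Jc, pr, if_true]
  exact zpow_ne_zero _ hv0

lemma Jc_ne (n : ℕ) (v : ℂ) (i j : ℕ) (h : j ≠ n + 1 - i) : Jc n v i j = 0 := by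
  unfold Jc pr
  rw [if_neg h]

lemma OBR.z (n : ℕ) (q v : ℂ) (hv0 : v ≠ 0) : OBR n q v (z n q v) := by
  constructor
  · intro i b j a hi hb hj ha
    have h := RingQuot.mkAlgHom_rel ℂ (Rel.frt (n := n) (q := q) (v := v) i b j a hi hb hj ha)
    simp only [frtRel, map_sum, map_sub, map_smul, map_mul, map_zero, Finset.sum_sub_distrib] at h
    rw [sub_eq_zero] at h
    have h1 := rsum1 n q v a b ha hb (fun k l => SOq.z n q v i k * SOq.z n q v j l)
    have h2 := rsum2 n q v i j hi hj (fun k l => SOq.z n q v k a * SOq.z n q v l b)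
    rw [← h1, ← h2]
    exact h
  · intro i h1 h2 h3
    have hi' : n + 1 - i ∈ Finset.Icc 1 n := Finset.mem_Icc.mpr (by omega)
    have h := RingQuot.mkAlgHom_rel ℂ (Rel.orth₁ (n := n) (q := q) (v := v) i (n + 1 - i) (Finset.mem_Icc.mpr ⟨h1, h2⟩) hi')
    rw [orthRel₁, if_neg (by omega), sub_zero] at h
    simp only [map_sum, map_smul, map_mul, map_zero] at h
    have e : ∀ k ∈ Finset.Icc 1 n, ∀ l ∈ Finset.Icc 1 n, ∑ m ∈ Finset.Icc 1 n,
        (Jc n v k l * Jc n v m (n + 1 - i)) • (SOq.z n q v i k * SOq.z n q v m l)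
        = ((if True then (1 : ℂ) else 0) * Jc n v k l) • cc n v i • (SOq.z n q v i k * SOq.z n q v i l) := by
      intro k _ l _
      rw [Finset.sum_eq_single i]
      · rw [smul_smul]; simp [cc]
      · intro m hm hmi
        rw [Finset.mem_Icc] at hm
        rw [Jc_ne n v m (n + 1 - i) (by omega)]
        simp
      · intro h
        exact absurd (Finset.mem_Icc.mpr ⟨h1, h2⟩) h
    have h' := (Finset.sum_congr rfl fun k hk => Finset.sum_congr rfl (e k hk)).symm.trans h
    rw [jsum n v (fun _ _ => True) (Finset.Icc 1 n) (by intro k; simp) (fun k l =>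
      cc n v i • (SOq.z n q v i k * SOq.z n q v i l))] at h'
    simp only [smul_comm _ (cc n v i)] at h'
    rw [← Finset.smul_sum] at h'
    exact (smul_eq_zero.mp h').resolve_left (cc_ne n v hv0 i)
  · intro j h1 h2 h3
    have hi' : n + 1 - j ∈ Finset.Icc 1 n := Finset.mem_Icc.mpr (by omega)
    have h := RingQuot.mkAlgHom_rel ℂ (Rel.orth₂ (n := n) (q := q) (v := v) (n + 1 - j) j hi' (Finset.mem_Icc.mpr ⟨h1, h2⟩))
    rw [orthRel₂, if_neg (by omega), sub_zero] at h
    simp only [map_sum, map_smul, map_mul, map_zero] at h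
    rw [Finset.sum_eq_single j] at h
    · have e : ∀ l ∈ Finset.Icc 1 n, ∀ m ∈ Finset.Icc 1 n,
        (Jc n v (n + 1 - j) j * Jc n v l m) • (SOq.z n q v l j * SOq.z n q v m j)
        = ((if True then (1 : ℂ) else 0) * Jc n v l m) • cc n v (n + 1 - j) • (SOq.z n q v l j * SOq.z n q v m j) := by
        intro l _ m _
        rw [smul_smul, cc, show n + 1 - (n + 1 - j) = j by omega]
        simp [mul_comm]
      have h' := (Finset.sum_congr rfl fun k hk => Finset.sum_congr rfl (e k hk)).symm.trans h
      rw [jsum n v (fun _ _ => True) (Finset.Icc 1 n) (by intro k; simp) (fun k l =>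
        cc n v (n + 1 - j) • (SOq.z n q v k j * SOq.z n q v l j))] at h'
      simp only [smul_comm _ (cc n v (n + 1 - j))] at h'
      rw [← Finset.smul_sum] at h'
      exact (smul_eq_zero.mp h').resolve_left (cc_ne n v hv0 _)
    · intro m hm hmi
      rw [Finset.mem_Icc] at hm
      rw [Jc_ne n v (n + 1 - j) m (by omega)]
      simp
    · intro h
      exact absurd (Finset.mem_Icc.mpr ⟨h1, h2⟩) h
  · intro i j h
    have h := RingQuot.mkAlgHom_rel ℂ (Rel.lower (n := n) (q := q) (v := v) i j h)
    rw [map_zero] at h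
    exact h
  · intro i j h
    have h := RingQuot.mkAlgHom_rel ℂ (Rel.out (n := n) (q := q) (v := v) i j h)
    rw [map_zero] at h
    exact h

end frt

section rels

variable {A : Type*} [Ring A] [Algebra ℂ A] {n : ℕ} {q v : ℂ} {Z : ℕ → ℕ → A}

lemma OBR.map {B : Type*} [Ring B] [Algebra ℂ B] (f : A →ₐ[ℂ] B) (hZ : OBR n q v Z) :
    OBR n q v (fun i j => f (Z i j)) := by
  constructor
  · intro i b j a hi hb hj ha
    have := congrArg f (hZ.frt i b j a hi hb hj ha)
    simpa only [map_sub, map_add, map_sum, map_smul, map_mul] using this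
  · intro i h1 h2 h3
    have := congrArg f (hZ.row i h1 h2 h3)
    simpa only [map_sum, map_smul, map_mul, map_zero] using this
  · intro i h1 h2 h3
    have := congrArg f (hZ.col i h1 h2 h3)
    simpa only [map_sum, map_smul, map_mul, map_zero] using this
  · intro i j h
    simp only [hZ.lower i j h, map_zero]
  · intro i j h
    simp only [hZ.out i j h, map_zero]

lemma OBR.rowQE (hq0 : q ≠ 0) (hZ : OBR n q v Z) (i : ℕ) (h1 : 1 ≤ i) (h2 : i ≤ n) (h3 : 2 * i ≠ n + 1) :
    QE n q v (fun k => Z i k) := by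
  have hi := Finset.mem_Icc.mpr ⟨h1, h2⟩
  constructor
  · intro k l hk hkl hl hs
    have h := hZ.frt i l i k hi (Finset.mem_Icc.mpr (by omega)) hi (Finset.mem_Icc.mpr (by omega))
    rw [Jc_ne n v k l (by omega), Jc_ne n v i i (by omega), if_neg (show ¬ (k = l) by omega),
      if_neg (show ¬ (k = pr n l) by unfold pr; omega), if_pos hkl, if_pos rfl,
      if_neg (show ¬ (i = pr n i) by unfold pr; omega), if_neg (show ¬ (i < i) by omega)] at h
    simp only [mul_zero, zero_smul, sub_zero, zpow_zero, one_smul, add_zero, zpow_one] at h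
    rw [← eq_sub_iff_add_eq, ← sub_smul, sub_sub_cancel] at h
    simp only [h, smul_smul, mul_inv_cancel₀ hq0, one_smul]
  · intro a ha ha2
    have h := hZ.frt i (n + 1 - a) i a hi (Finset.mem_Icc.mpr (by omega)) hi (Finset.mem_Icc.mpr (by omega))
    rw [Jc_ne n v i i (by omega), if_neg (show ¬ (a = n + 1 - a) by omega),
      if_pos (show (a = pr n (n + 1 - a)) by unfold pr; omega), if_pos (show a < n + 1 - a by omega), if_pos rfl,
      if_neg (show ¬ (i = pr n i) by unfold pr; omega), if_neg (show ¬ (i < i) by omega)] at h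
    simp only [mul_zero, zero_smul, sub_zero, add_zero, zpow_one, zero_sub, zpow_neg] at h
    rw [sub_eq_iff_eq_add, ← eq_sub_iff_add_eq] at h
    have h' := congrArg (fun t => q • t) h
    simp only [smul_smul, smul_sub, smul_add, mul_inv_cancel₀ hq0, one_smul] at h'
    simp only [h', SS, cc]
    have e : q ^ 2 - 1 = q * (q - q⁻¹) := by field_simp
    have e2 : q * q = q * (q - q⁻¹) + 1 := by field_simp; ring
    rw [e, e2, mul_assoc]
    module
  · exact hZ.row i h1 h2 h3

lemma OBR.colQE (hq0 : q ≠ 0) (hZ : OBR n q v Z) (c : ℕ) (h1 : 1 ≤ c) (h2 : c ≤ n) (h3 : 2 * c ≠ n + 1) :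
    QE n q v (fun k => Z k c) := by
  have hi := Finset.mem_Icc.mpr ⟨h1, h2⟩
  constructor
  · intro k l hk hkl hl hs
    have h := hZ.frt k c l c (Finset.mem_Icc.mpr (by omega)) hi (Finset.mem_Icc.mpr (by omega)) hi
    rw [Jc_ne n v k l (by omega), Jc_ne n v c c (by omega), if_neg (show ¬ (l = k) by omega),
      if_neg (show ¬ (l = pr n k) by unfold pr; omega), if_pos hkl, if_pos rfl,
      if_neg (show ¬ (c = pr n c) by unfold pr; omega), if_neg (show ¬ (c < c) by omega)] at h
    simp only [mul_zero, zero_smul, sub_zero, zpow_zero, one_smul, add_zero, zpow_one] at h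
    rw [← sub_eq_iff_eq_add, ← sub_smul, sub_sub_cancel] at h
    simp only [← h, smul_smul, mul_inv_cancel₀ hq0, one_smul]
  · intro a ha ha2
    have h := hZ.frt a c (n + 1 - a) c (Finset.mem_Icc.mpr (by omega)) hi (Finset.mem_Icc.mpr (by omega)) hi
    rw [Jc_ne n v c c (by omega), if_neg (show ¬ (n + 1 - a = a) by omega),
      if_pos (show (n + 1 - a = pr n a) by rfl), if_pos (show a < n + 1 - a by omega), if_pos rfl,
      if_neg (show ¬ (c = pr n c) by unfold pr; omega), if_neg (show ¬ (c < c) by omega)] at h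
    simp only [mul_zero, zero_smul, sub_zero, add_zero, zpow_one, zero_sub, zpow_neg] at h
    rw [eq_sub_iff_add_eq, ← sub_eq_iff_eq_add] at h
    have h' := congrArg (fun t => q • t) h
    simp only [smul_smul, smul_sub, smul_add, mul_inv_cancel₀ hq0, one_smul] at h'
    simp only [← h', SS, cc]
    have e : q ^ 2 - 1 = q * (q - q⁻¹) := by field_simp
    have e2 : q * q = q * (q - q⁻¹) + 1 := by field_simp; ring
    rw [e, e2, mul_assoc, show n + 1 - a - 1 = n - a by omega]
    module
  · exact hZ.col c h1 h2 h3

lemma OBR.gl1 (hZ : OBR n q v Z) (i j a b : ℕ) (hi : 1 ≤ i) (hij : i < j) (hj : j ≤ n) (hs : i + j ≠ n + 1)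
    (ha : 1 ≤ a) (hab : a < b) (hb : b ≤ n) (hs2 : a + b ≠ n + 1) : Z i b * Z j a = Z j a * Z i b := by
  have h := hZ.frt i b j a (Finset.mem_Icc.mpr (by omega)) (Finset.mem_Icc.mpr (by omega))
    (Finset.mem_Icc.mpr (by omega)) (Finset.mem_Icc.mpr (by omega))
  rw [Jc_ne n v a b (by omega), Jc_ne n v i j (by omega), if_neg (show ¬ (a = b) by omega),
      if_neg (show ¬ (a = pr n b) by unfold pr; omega), if_pos hab, if_pos hij,
      if_neg (show ¬ (j = pr n i) by unfold pr; omega), if_neg (show ¬ (j = i) by omega)] at h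
  simp only [mul_zero, zero_smul, sub_zero, zpow_zero, one_smul] at h
  exact add_right_cancel h

lemma OBR.gl2 (hZ : OBR n q v Z) (i j a b : ℕ) (hi : 1 ≤ i) (hij : i < j) (hj : j ≤ n) (hs : i + j ≠ n + 1)
    (hb : 1 ≤ b) (hab : b < a) (ha : a ≤ n) (hs2 : a + b ≠ n + 1) :
    Z i b * Z j a = Z j a * Z i b + (q - q⁻¹) • (Z i a * Z j b) := by
  have h := hZ.frt i b j a (Finset.mem_Icc.mpr (by omega)) (Finset.mem_Icc.mpr (by omega))
    (Finset.mem_Icc.mpr (by omega)) (Finset.mem_Icc.mpr (by omega))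
  rw [Jc_ne n v a b (by omega), Jc_ne n v i j (by omega), if_neg (show ¬ (a = b) by omega),
      if_neg (show ¬ (a = pr n b) by unfold pr; omega), if_neg (show ¬ (a < b) by omega), if_pos hij,
      if_neg (show ¬ (j = pr n i) by unfold pr; omega), if_neg (show ¬ (j = i) by omega)] at h
  simpa only [mul_zero, zero_smul, sub_zero, zpow_zero, one_smul, add_zero] using h

lemma OBR.midrow (hZ : OBR n q v Z) (r a b : ℕ) (hr : 2 * r = n + 1) (hr1 : 1 ≤ r) (ha : r ≤ a) (hab : a < b) (hb : b ≤ n) :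
    Z r a * Z r b = Z r b * Z r a + (-(q - q⁻¹)) • ∑ k ∈ Finset.Icc 1 (r - 1), cc n v k • (Z k b * Z (n + 1 - k) a) := by
  have h := hZ.frt r a r b (Finset.mem_Icc.mpr (by omega)) (Finset.mem_Icc.mpr (by omega))
    (Finset.mem_Icc.mpr (by omega)) (Finset.mem_Icc.mpr (by omega))
  have h1 : Jc n v r r = 1 := by
    have := cc_mid n v r hr
    rwa [cc, show n + 1 - r = r by omega] at this
  rw [Jc_ne n v b a (by omega), h1, if_neg (show ¬ (b = a) by omega),
      if_neg (show ¬ (b = pr n a) by unfold pr; omega), if_neg (show ¬ (b < a) by omega),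
      if_pos (show (r = pr n r) by unfold pr; omega), if_pos rfl, if_neg (show ¬ (r < r) by omega)] at h
  simp only [mul_zero, zero_smul, sub_zero, zpow_zero, one_smul, add_zero, sub_self, mul_one] at h
  rw [h, neg_smul, sub_eq_add_neg]

lemma OBR.midcol (hZ : OBR n q v Z) (r a b : ℕ) (hr : 2 * r = n + 1) (hr1 : 1 ≤ r) (ha : 1 ≤ a) (hab : a < b) (hb : b ≤ r) :
    Z a r * Z b r = Z b r * Z a r + (-(q - q⁻¹)) • ∑ k ∈ Finset.Icc 1 (r - 1), cc n v k • (Z b k * Z a (n + 1 - k)) := by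
  have h := hZ.frt b r a r (Finset.mem_Icc.mpr (by omega)) (Finset.mem_Icc.mpr (by omega))
    (Finset.mem_Icc.mpr (by omega)) (Finset.mem_Icc.mpr (by omega))
  have h1 : Jc n v r r = 1 := by
    have := cc_mid n v r hr
    rwa [cc, show n + 1 - r = r by omega] at this
  rw [Jc_ne n v b a (by omega), h1, if_neg (show ¬ (a = b) by omega),
      if_neg (show ¬ (a = pr n b) by unfold pr; omega), if_neg (show ¬ (b < a) by omega),
      if_pos (show (r = pr n r) by unfold pr; omega), if_pos rfl, if_neg (show ¬ (r < r) by omega)] at h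
  simp only [mul_zero, zero_smul, sub_zero, zpow_zero, one_smul, add_zero, sub_self, mul_one] at h
  rw [← h, neg_smul, show n - r = r - 1 by omega]
  abel

end rels

section final

variable {A : Type*} [Ring A] [Algebra ℂ A] {n : ℕ} {q v : ℂ} {Z X : ℕ → ℕ → A}

def LS (s : Finset ℕ) (c : ℂ) (d : ℕ → ℂ) (F : ℕ → A) : A := c • ∑ k ∈ s, d k • F k

lemma LS_lin (s : Finset ℕ) (c : ℂ) (d : ℕ → ℂ) (F G : ℕ → A) (w u : A) (p : ℂ)
    (h : ∀ k ∈ s, w * F k = F k * w + p • (u * G k)) :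
    w * LS s c d F = LS s c d F * w + p • (u * LS s c d G) := by
  unfold LS
  rw [mul_smul_comm, smul_mul_assoc, mul_smul_comm, smul_comm p, ← smul_add, Finset.mul_sum, Finset.sum_mul,
    Finset.mul_sum, Finset.smul_sum (r := p), ← Finset.sum_add_distrib]
  congr 1
  refine Finset.sum_congr rfl fun k hk => ?_
  rw [mul_smul_comm, smul_mul_assoc, mul_smul_comm, smul_comm p, ← smul_add, h k hk]

lemma LS_q (s : Finset ℕ) (c : ℂ) (d : ℕ → ℂ) (F : ℕ → A) (w : A) (p : ℂ)
    (h : ∀ k ∈ s, w * F k = p • (F k * w)) :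
    w * LS s c d F = p • (LS s c d F * w) := by
  unfold LS
  rw [mul_smul_comm, smul_mul_assoc, smul_comm p, Finset.mul_sum, Finset.sum_mul]
  congr 1
  rw [Finset.smul_sum]
  refine Finset.sum_congr rfl fun k hk => ?_
  rw [mul_smul_comm, smul_mul_assoc, smul_comm p, h k hk]

lemma LS_q' (s : Finset ℕ) (c : ℂ) (d : ℕ → ℂ) (F : ℕ → A) (w : A) (p : ℂ)
    (h : ∀ k ∈ s, F k * w = p • (w * F k)) :
    LS s c d F * w = p • (w * LS s c d F) := by
  unfold LS
  rw [mul_smul_comm, smul_mul_assoc, smul_comm p, Finset.mul_sum, Finset.sum_mul]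
  congr 1
  rw [Finset.smul_sum]
  refine Finset.sum_congr rfl fun k hk => ?_
  rw [mul_smul_comm, smul_mul_assoc, smul_comm p, h k hk]

lemma LS_c (s : Finset ℕ) (c : ℂ) (d : ℕ → ℂ) (F : ℕ → A) (w : A)
    (h : ∀ k ∈ s, w * F k = F k * w) :
    w * LS s c d F = LS s c d F * w := by
  have := LS_q s c d F w 1 (by simpa using h)
  simpa using this

variable {N : ℕ}

lemma mid_row (hN1 : 1 < N) (hNo : Odd N) (hq : IsPrimitiveRoot q N) (hq0 : q ≠ 0)
    (hZ : OBR n q v Z) (hX : OBR n q v X) (hc : ∀ i j k l, Z i j * X k l = X k l * Z i j)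
    (r j : ℕ) (hr : 2 * r = n + 1) (hr1 : 1 ≤ r) (hj : r < j) (hjn : j ≤ n) :
    (∑ k ∈ Finset.Icc r j, Z r k * X k j) ^ N = ∑ k ∈ Finset.Icc r j, (Z r k * X k j) ^ N := by
  refine mid_sum hN1 hNo hq hq0 (fun k => Z r k) (fun k => X k j)
    (fun a b => LS (Finset.Icc 1 (r - 1)) (-(q - q⁻¹)) (cc n v) (fun k => Z k b * Z (n + 1 - k) a)) r j
    ?_ ?_ ?_ ?_ ?_ ?_ ?_ ?_ j le_rfl
  · intro a b; exact (hc _ _ _ _).symm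
  · intro a b d
    refine LS_c _ _ _ _ _ fun k _ => ?_
    rw [← mul_assoc, ← hc, mul_assoc, ← hc, mul_assoc]
  · intro a b h1 h2 h3
    exact (hX.colQE hq0 j (by omega) hjn (by omega)).r1 a b (by omega) h2 (by omega) (by omega)
  · intro a b h1 h2 h3
    exact hZ.midrow r a b hr hr1 h1 h2 (by omega)
  · intro a b h1 h2 h3
    refine LS_q _ _ _ _ _ _ fun k hk => ?_
    rw [Finset.mem_Icc] at hk
    rcases h1.eq_or_lt with h4 | h4
    · simp [hZ.lower (n + 1 - k) a (by omega)]
    · rw [← mul_assoc, ← hZ.gl1 k r a b (by omega) (by omega) (by omega) (by omega) (by omega) h2 (by omega) (by omega),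
        mul_assoc, (hZ.colQE hq0 a (by omega) (by omega) (by omega)).r1 r (n + 1 - k) (by omega) (by omega) (by omega) (by omega),
        mul_smul_comm, mul_assoc]
  · intro a b h1 h2 h3
    refine LS_q' _ _ _ _ _ _ fun k hk => ?_
    rw [Finset.mem_Icc] at hk
    rw [mul_assoc, ← hZ.gl1 r (n + 1 - k) a b (by omega) (by omega) (by omega) (by omega) (by omega) h2 (by omega) (by omega),
        ← mul_assoc, (hZ.colQE hq0 b (by omega) (by omega) (by omega)).r1 k r (by omega) (by omega) (by omega) (by omega),
        smul_mul_assoc, mul_assoc]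
  · intro d a b h1 h2 h3 h4
    refine LS_lin _ _ _ _ _ _ _ _ fun k hk => ?_
    rw [Finset.mem_Icc] at hk
    rw [← mul_assoc, ← hZ.gl1 k r d b (by omega) (by omega) (by omega) (by omega) (by omega) (by omega) (by omega) (by omega),
      mul_assoc, hZ.gl2 r (n + 1 - k) a d (by omega) (by omega) (by omega) (by omega) (by omega) (by omega) (by omega) (by omega),
      mul_add, mul_smul_comm, mul_assoc, ← mul_assoc (Z k b) (Z r a),
      hZ.gl1 k r a b (by omega) (by omega) (by omega) (by omega) (by omega) (by omega) (by omega) (by omega), mul_assoc]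
  · intro d a b h1 h2 h3 h4
    refine LS_c _ _ _ _ _ fun k hk => ?_
    rw [Finset.mem_Icc] at hk
    rw [← mul_assoc, ← hZ.gl1 k r a b (by omega) (by omega) (by omega) (by omega) (by omega) (by omega) (by omega) (by omega),
      mul_assoc, hZ.gl1 r (n + 1 - k) d a (by omega) (by omega) (by omega) (by omega) (by omega) (by omega) (by omega) (by omega),
      mul_assoc]

lemma mid_col (hN1 : 1 < N) (hNo : Odd N) (hq : IsPrimitiveRoot q N) (hq0 : q ≠ 0)
    (hZ : OBR n q v Z) (hX : OBR n q v X) (hc : ∀ i j k l, Z i j * X k l = X k l * Z i j)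
    (i r : ℕ) (hr : 2 * r = n + 1) (hi1 : 1 ≤ i) (hi : i < r) :
    (∑ k ∈ Finset.Icc i r, X k r * Z i k) ^ N = ∑ k ∈ Finset.Icc i r, (X k r * Z i k) ^ N := by
  refine mid_sum hN1 hNo hq hq0 (fun k => X k r) (fun k => Z i k)
    (fun a b => LS (Finset.Icc 1 (r - 1)) (-(q - q⁻¹)) (cc n v) (fun k => X b k * X a (n + 1 - k))) i r
    ?_ ?_ ?_ ?_ ?_ ?_ ?_ ?_ r le_rfl
  · intro a b; exact (hc _ _ _ _)
  · intro a b d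
    refine LS_c _ _ _ _ _ fun k _ => ?_
    rw [← mul_assoc, hc, mul_assoc, hc, mul_assoc]
  · intro a b h1 h2 h3
    exact (hZ.rowQE hq0 i (by omega) (by omega) (by omega)).r1 a b (by omega) h2 (by omega) (by omega)
  · intro a b h1 h2 h3
    exact hX.midcol r a b hr (by omega) (by omega) h2 (by omega)
  · intro a b h1 h2 h3
    refine LS_q _ _ _ _ _ _ fun k hk => ?_
    rw [Finset.mem_Icc] at hk
    rw [← mul_assoc, hX.gl1 a b k r (by omega) (by omega) (by omega) (by omega) (by omega) (by omega) (by omega) (by omega),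
        mul_assoc, (hX.rowQE hq0 a (by omega) (by omega) (by omega)).r1 r (n + 1 - k) (by omega) (by omega) (by omega) (by omega),
        mul_smul_comm, mul_assoc]
  · intro a b h1 h2 h3
    refine LS_q' _ _ _ _ _ _ fun k hk => ?_
    rw [Finset.mem_Icc] at hk
    rcases h3.eq_or_lt with h4 | h4
    · simp [hX.lower b k (by omega)]
    · rw [mul_assoc, hX.gl1 a b r (n + 1 - k) (by omega) (by omega) (by omega) (by omega) (by omega) (by omega) (by omega) (by omega),
        ← mul_assoc, (hX.rowQE hq0 b (by omega) (by omega) (by omega)).r1 k r (by omega) (by omega) (by omega) (by omega),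
        smul_mul_assoc, mul_assoc]
  · intro d a b h1 h2 h3 h4
    refine LS_lin _ _ _ _ _ _ _ _ fun k hk => ?_
    rw [Finset.mem_Icc] at hk
    rw [← mul_assoc, hX.gl1 d b k r (by omega) (by omega) (by omega) (by omega) (by omega) (by omega) (by omega) (by omega),
      mul_assoc, hX.gl2 d a (n + 1 - k) r (by omega) (by omega) (by omega) (by omega) (by omega) (by omega) (by omega) (by omega),
      mul_add, mul_smul_comm, mul_assoc,
      hX.gl1 d a r (n + 1 - k) (by omega) (by omega) (by omega) (by omega) (by omega) (by omega) (by omega) (by omega),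
      ← mul_assoc (X a r),
      hX.gl1 a b k r (by omega) (by omega) (by omega) (by omega) (by omega) (by omega) (by omega) (by omega), mul_assoc (X b k) (X a r)]
  · intro d a b h1 h2 h3 h4
    refine LS_c _ _ _ _ _ fun k hk => ?_
    rw [Finset.mem_Icc] at hk
    rw [← mul_assoc, hX.gl1 a b k r (by omega) (by omega) (by omega) (by omega) (by omega) (by omega) (by omega) (by omega),
      mul_assoc, ← hX.gl1 d a r (n + 1 - k) (by omega) (by omega) (by omega) (by omega) (by omega) (by omega) (by omega) (by omega),
      mul_assoc]

lemma final_sum (hN1 : 1 < N) (hNo : Odd N) (hq : IsPrimitiveRoot q N) (hv0 : v ≠ 0) (hv : v ^ 2 = q)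
    (hZ : OBR n q v Z) (hX : OBR n q v X) (hc : ∀ i j k l, Z i j * X k l = X k l * Z i j)
    (i j : ℕ) (hi : 1 ≤ i) (hij : i ≤ j) (hj : j ≤ n) :
    (∑ k ∈ Finset.Icc i j, Z i k * X k j) ^ N = ∑ k ∈ Finset.Icc i j,
      (if 2 * k = n + 1 ∧ 2 * i ≠ n + 1 ∧ 2 * j ≠ n + 1 then 2 / (1 + q) ^ N else 1 : ℂ) • (Z i k * X k j) ^ N := by
  have hq0 : q ≠ 0 := by rw [← hv]; exact pow_ne_zero _ hv0
  rcases hij.eq_or_lt with rfl | hlt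
  · rw [Finset.Icc_self, Finset.sum_singleton, Finset.sum_singleton, if_neg (by omega), one_smul]
  by_cases h1 : 2 * i = n + 1
  · rw [mid_row hN1 hNo hq hq0 hZ hX hc i j h1 hi hlt hj]
    refine Finset.sum_congr rfl fun k _ => ?_
    rw [if_neg (by omega), one_smul]
  by_cases h2 : 2 * j = n + 1
  · simp only [hc]
    rw [mid_col hN1 hNo hq hq0 hZ hX hc i j h2 hi hlt]
    refine Finset.sum_congr rfl fun k _ => ?_
    rw [if_neg (by omega), one_smul]
  have h := pair_sum hN1 hNo hq hv0 hv (hZ.rowQE hq0 i (by omega) (by omega) h1)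
    (hX.colQE hq0 j (by omega) (by omega) h2) (fun k l => hc _ _ _ _)
  have hsub : Finset.Icc i j ⊆ Finset.Icc 1 n := Finset.Icc_subset_Icc hi hj
  have h0 : ∀ k ∈ Finset.Icc 1 n, k ∉ Finset.Icc i j → Z i k * X k j = 0 := by
    intro k _ hk
    rw [Finset.mem_Icc] at hk
    by_cases hki : k < i
    · rw [hZ.lower i k hki, zero_mul]
    · rw [hX.lower k j (by omega), mul_zero]
  rw [Finset.sum_subset hsub h0, h, ← Finset.sum_subset hsub]
  · refine Finset.sum_congr rfl fun k _ => ?_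
    simp only [h1, h2, ne_eq, not_false_eq_true, and_true]
  · intro k hk hk'
    simp only [h0 k hk hk']
    rw [zero_pow (by omega), smul_zero]

lemma one_add_q_ne (hN1 : 1 < N) (hNo : Odd N) (hq : IsPrimitiveRoot q N) : 1 + q ≠ 0 := by
  intro h
  have e : q = -1 := by linear_combination h
  have h1 := hq.pow_eq_one
  rw [e, hNo.neg_one_pow] at h1
  norm_num at h1

lemma gam_mul (hN1 : 1 < N) (hNo : Odd N) (hq : IsPrimitiveRoot q N) (i j k : ℕ) (hk : i ≤ k) (hk2 : k ≤ j) :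
    gam n N q i j * (if 2 * k = n + 1 ∧ 2 * i ≠ n + 1 ∧ 2 * j ≠ n + 1 then 2 / (1 + q) ^ N else 1 : ℂ)
      = gam n N q i k * gam n N q k j := by
  have h := pow_ne_zero N (one_add_q_ne hN1 hNo hq)
  unfold gam
  by_cases ho : Odd n
  · simp only [ho, true_and]
    by_cases hh : 2 * i < n + 1 ∧ n + 1 < 2 * j
    · rw [if_pos hh]
      rcases lt_trichotomy (2 * k) (n + 1) with h2 | h2 | h2
      · rw [if_neg (by omega), if_neg (by omega), if_pos (by omega)]; ring
      · rw [if_pos (by omega), if_neg (by omega), if_neg (by omega)]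
        field_simp
      · rw [if_neg (by omega), if_pos (by omega), if_neg (by omega)]
    · rw [if_neg hh, if_neg (by omega), if_neg (by omega), if_neg (by omega)]
  · have : ¬ (2 * k = n + 1 ∧ 2 * i ≠ n + 1 ∧ 2 * j ≠ n + 1) := by
      rw [Nat.not_odd_iff_even] at ho
      obtain ⟨m, hm⟩ := ho
      omega
    rw [if_neg this]
    simp [ho]

end final
/-- The elements `Y_{ij} = γ_{ij} z_{ij}^N` satisfy
`Δ(Y_{ij}) = ∑_{k=i}^{j} Y_{ik} ⊗ Y_{kj}` and `ε(Y_{ij}) = δ_{ij}`: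
the coalgebra-map part of the dual quantum Frobenius inclusion `𝒪(B⁺) → 𝒪_q(B⁺)`. -/
theorem frobenius_coalgebra_map (n : ℕ) (hn : 3 ≤ n) (N : ℕ) (hN1 : 1 < N) (hNodd : Odd N)
    (q v : ℂ) (hv : v ^ 2 = q) (hq : IsPrimitiveRoot q N)
    (Δ : OB n q v →ₐ[ℂ] (OB n q v ⊗[ℂ] OB n q v))
    (ε : OB n q v →ₐ[ℂ] ℂ)
    (hΔ : ∀ i j : ℕ, 1 ≤ i → i ≤ j → j ≤ n →
      Δ (z n q v i j) = ∑ k ∈ Finset.Icc i j, z n q v i k ⊗ₜ[ℂ] z n q v k j)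
    (hε : ∀ i j : ℕ, 1 ≤ i → i ≤ j → j ≤ n →
      ε (z n q v i j) = if i = j then 1 else 0) :
    ∀ i j : ℕ, 1 ≤ i → i ≤ j → j ≤ n →
      (Δ (gam n N q i j • z n q v i j ^ N) =
        ∑ k ∈ Finset.Icc i j,
          (gam n N q i k • z n q v i k ^ N) ⊗ₜ[ℂ] (gam n N q k j • z n q v k j ^ N)) ∧
      (ε (gam n N q i j • z n q v i j ^ N) = if i = j then 1 else 0) := by
  have hq0 : q ≠ 0 := hq.ne_zero (by omega)
  have hv0 : v ≠ 0 := by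
    rintro rfl
    apply hq0
    rw [← hv]; simp
  intro i j hi hij hj
  constructor
  · have hB := OBR.z n q v hv0
    have hL := OBR.map (B := OB n q v ⊗[ℂ] OB n q v) Algebra.TensorProduct.includeLeft hB
    have hR := OBR.map (B := OB n q v ⊗[ℂ] OB n q v) Algebra.TensorProduct.includeRight hB
    have h := final_sum hN1 hNodd hq hv0 hv hL hR
      (by intro a b c d; simp) i j hi hij hj
    simp only [Algebra.TensorProduct.includeLeft_apply, Algebra.TensorProduct.includeRight_apply,
      Algebra.TensorProduct.tmul_mul_tmul, one_mul, mul_one, Algebra.TensorProduct.tmul_pow] at h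
    rw [map_smul, map_pow, hΔ i j hi hij hj, h, Finset.smul_sum]
    refine Finset.sum_congr rfl fun k hk => ?_
    rw [Finset.mem_Icc] at hk
    rw [smul_smul, gam_mul hN1 hNodd hq i j k hk.1 hk.2, TensorProduct.smul_tmul_smul]
  · rw [map_smul, map_pow, hε i j hi hij hj]
    by_cases h : i = j
    · subst h
      rw [if_pos rfl, gam, if_neg (by omega)]
      simp
    · rw [if_neg h, zero_pow (by omega), smul_zero]

end SOq
end
end

section
/- Let θ ≥ 1, let N ≥ 1 be an integer, and let q ∈ ℂ with q ≠ 0 and q² ≠ 1. Fix complex parameters μ_{ij} ∈ ℂ for 1 ≤ i < j ≤ θ+1. Let Q be the (θ+1)×(θ+1) complex matrix with Q_{ii} = 1, Q_{ij} = (−1)^{i−j−1}(1 − q^{−2})^N μ_{ij} for i < j, and Q_{ij} = 0 for i > j. For any t₁, …, t_{θ+1} ∈ ℂˣ set P := diag(t₁, …, t_{θ+1}), M := Q^{−1} P Q, and F_{ij} := (−1)^{j−i}(1 − q^{−2})^{−N} M_{ij} t_j^{−1} for i < j. Then for all 1 ≤ i < j ≤ θ+1: F_{ij} = μ_{ij}(1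 − t_i t_j^{−1}) + (1 − q^{−2})^N Σ_{k=i+1}^{j−1} μ_{ik} F_{kj}. (This is the evaluated form of the type-A_θ lifting theorem: F_{ij} is the evaluation of the root-vector power x_{(ij)}^N, and t_i t_j^{−1} the evaluation of the group-like g_{(ij)}^N, so the identity expresses x_{(ij)}^N = μ_{ij}(1 − g_{(ij)}^N) + (1 − q^{−2})^N Σ_{k=i+1}^{j−1} μ_{ik} x_{(kj)}^N.) -/
noncomputable section

/-- Evaluated form of the type `A_θ` lifting theorem: for
`M = Q⁻¹ diag(t) Q` with `Q` the unipotent upper triangular matrix built from the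
root-vector parameters `μ`, the quantities
`F_{ij} = (-1)^{j-i} (1-q⁻²)^{-N} M_{ij} t_j⁻¹` satisfy
`F_{ij} = μ_{ij}(1 - t_i t_j⁻¹) + (1-q⁻²)^N ∑_{k=i+1}^{j-1} μ_{ik} F_{kj}`. -/
theorem liftingA_evaluated (θ N : ℕ) (hθ : 1 ≤ θ) (hN : 1 ≤ N)
    (q : ℂ) (hq0 : q ≠ 0) (hq1 : q ^ 2 ≠ 1)
    (μ : Fin (θ + 1) → Fin (θ + 1) → ℂ)
    (Q : Matrix (Fin (θ + 1)) (Fin (θ + 1)) ℂ)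
    (hQdiag : ∀ i, Q i i = 1)
    (hQupper : ∀ i j : Fin (θ + 1), i < j →
      Q i j = (-1 : ℂ) ^ (((i : ℕ) : ℤ) - ((j : ℕ) : ℤ) - 1) * (1 - q⁻¹ ^ 2) ^ N * μ i j)
    (hQlower : ∀ i j : Fin (θ + 1), j < i → Q i j = 0)
    (t : Fin (θ + 1) → ℂ) (ht : ∀ i, t i ≠ 0)
    (M : Matrix (Fin (θ + 1)) (Fin (θ + 1)) ℂ)
    (hM : M = Q⁻¹ * Matrix.diagonal t * Q)
    (F : Fin (θ + 1) → Fin (θ + 1) → ℂ)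
    (hF : ∀ i j : Fin (θ + 1), i < j →
      F i j = (-1 : ℂ) ^ ((j : ℕ) - (i : ℕ)) * ((1 - q⁻¹ ^ 2) ^ N)⁻¹ * M i j * (t j)⁻¹) :
    ∀ i j : Fin (θ + 1), i < j →
      F i j = μ i j * (1 - t i * (t j)⁻¹) +
        (1 - q⁻¹ ^ 2) ^ N * ∑ k ∈ Finset.Ioo i j, μ i k * F k j := by
  have hc : (1 - q⁻¹ ^ 2) ^ N ≠ 0 := by
    apply pow_ne_zero
    intro h
    apply hq1
    have h2 : (q ^ 2)⁻¹ = 1 := by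
      rw [← inv_pow]
      exact (sub_eq_zero.mp h).symm
    exact inv_eq_one.mp h2
  generalize (1 - q⁻¹ ^ 2) ^ N = c at *
  have hQt : Q.BlockTriangular id := fun i j h => hQlower i j h
  have hdet : Q.det = 1 := by
    rw [Matrix.det_of_upperTriangular hQt]
    simp [hQdiag]
  have hu : IsUnit Q.det := by simp [hdet]
  haveI : Invertible Q := Matrix.invertibleOfIsUnitDet Q hu
  have hMt : M.BlockTriangular id := by
    rw [hM]
    exact ((Matrix.blockTriangular_inv_of_blockTriangular hQt).mul
      (Matrix.blockTriangular_diagonal t)).mul hQt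
  have hQM : Q * M = Matrix.diagonal t * Q := by
    rw [hM, Matrix.mul_assoc, Matrix.mul_nonsing_inv_cancel_left _ _ hu]
  have key : ∀ i j, ∑ k ∈ Finset.Icc i j, Q i k * M k j = t i * Q i j := by
    intro i j
    have h := congrFun (congrFun hQM i) j
    rw [Matrix.diagonal_mul, Matrix.mul_apply] at h
    rw [← h]
    apply Finset.sum_subset (Finset.subset_univ _)
    intro k _ hk
    rw [Finset.mem_Icc, not_and_or, not_le, not_le] at hk
    rcases hk with hk | hk
    · rw [hQlower i k hk, zero_mul]
    · rw [hMt hk, mul_zero]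
  have hMd : ∀ j, M j j = t j := by
    intro j
    simpa [hQdiag] using key j j
  have hQ' : ∀ i j : Fin (θ + 1), i < j → Q i j = -((-1 : ℂ) ^ ((j : ℕ) - (i : ℕ)) * c * μ i j) := by
    intro i j hij
    rw [hQupper i j hij]
    have hlt : (i : ℕ) < (j : ℕ) := hij
    obtain ⟨d, hd⟩ := Nat.exists_eq_add_of_le hlt.le
    have e : ((i : ℕ) : ℤ) - ((j : ℕ) : ℤ) - 1 = -((d + 1 : ℕ) : ℤ) := by
      rw [hd]; push_cast; ring
    rw [e, zpow_neg, zpow_natCast, ← inv_pow, hd, Nat.add_sub_cancel_left, inv_neg, inv_one, pow_succ]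
    ring
  intro i j hij
  have h := key i j
  rw [← Finset.Ioc_insert_left hij.le, Finset.sum_insert (by simp),
    ← Finset.Ioo_insert_right hij, Finset.sum_insert (by simp), hQdiag, hMd, one_mul] at h
  have hs : ∀ m : ℕ, (-1 : ℂ) ^ m * (-1 : ℂ) ^ m = 1 := by
    intro m
    rw [← mul_pow]; simp
  have hsum : c * ∑ k ∈ Finset.Ioo i j, μ i k * F k j =
      -((-1 : ℂ) ^ ((j : ℕ) - (i : ℕ)) * c⁻¹ * (t j)⁻¹ * ∑ k ∈ Finset.Ioo i j, Q i k * M k j) := by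
    rw [Finset.mul_sum, Finset.mul_sum, ← Finset.sum_neg_distrib]
    apply Finset.sum_congr rfl
    intro k hk
    obtain ⟨h1, h2⟩ := Finset.mem_Ioo.mp hk
    rw [hQ' i k h1, hF k j h2]
    have e : (j : ℕ) - (i : ℕ) = ((j : ℕ) - (k : ℕ)) + ((k : ℕ) - (i : ℕ)) := by
      have h1' : (i : ℕ) < k := h1
      have h2' : (k : ℕ) < j := h2
      omega
    rw [e, pow_add]
    linear_combination (-((-1 : ℂ) ^ ((j : ℕ) - (k : ℕ)) * c⁻¹ * c * (t j)⁻¹ * μ i k * M k j)) * hs ((k : ℕ) - (i : ℕ))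
  rw [hsum, hF i j hij]
  have hm : M i j = t i * Q i j - Q i j * t j - ∑ k ∈ Finset.Ioo i j, Q i k * M k j := by
    linear_combination h
  rw [hm, hQ' i j hij]
  have htj := ht j
  have hss := hs ((j : ℕ) - (i : ℕ))
  generalize (-1 : ℂ) ^ ((j : ℕ) - (i : ℕ)) = s at *
  field_simp
  linear_combination (μ i j * c * (t j - t i)) * hss
end
end

section
/- Let n ≥ 1 and write k' := n+1−k for 1 ≤ k ≤ n. Let Q = (r_{ab}) be an n×n upper triangular complex matrix with all diagonal entries equal to 1, and let t₁, …, t_n ∈ ℂˣ. Set M := Q^{−1} diag(t) Q. Let 1 ≤ a < b ≤ n and assume t_b · t_{b'} = 1. Then M_{ab} M_{b'b'} = r_{ab}( M_{aa} M_{b'b'} − 1 ) − Σ_{k=a+1}^{b−1} r_{ak} M_{kb} M_{b'b'}; equivalently, M_{ab} t_{b'} = r_{ab}( t_a t_{b'} − 1 ) − Σ_{k=a+1}^{b−1} r_{ak} M_{kb} t_{b'}. -/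
noncomputable section

/-- Let `Q` be unipotent upper triangular over `ℂ`, `t` a vector of
nonzero scalars with `t_b t_{b'} = 1` (where `b' = n+1-b`, i.e. `Fin.rev b` in 0-based
indexing), and `M = Q⁻¹ diag(t) Q`. Then for `a < b`,
`M_{ab} M_{b'b'} = Q_{ab}(M_{aa} M_{b'b'} - 1) - ∑_{k=a+1}^{b-1} Q_{ak} M_{kb} M_{b'b'}`;
equivalently `M_{ab} t_{b'} = Q_{ab}(t_a t_{b'} - 1) - ∑_{k=a+1}^{b-1} Q_{ak} M_{kb} t_{b'}`. -/
theorem torus_conjugation_identity (n : ℕ) (hn : 1 ≤ n)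
    (Q : Matrix (Fin n) (Fin n) ℂ)
    (hQdiag : ∀ a, Q a a = 1)
    (hQlower : ∀ a b : Fin n, b < a → Q a b = 0)
    (t : Fin n → ℂ) (ht : ∀ k, t k ≠ 0)
    (M : Matrix (Fin n) (Fin n) ℂ)
    (hM : M = Q⁻¹ * Matrix.diagonal t * Q)
    (a b : Fin n) (hab : a < b) (htb : t b * t (Fin.rev b) = 1) :
    (M a b * M (Fin.rev b) (Fin.rev b) =
      Q a b * (M a a * M (Fin.rev b) (Fin.rev b) - 1) -
        ∑ k ∈ Finset.Ioo a b, Q a k * (M k b * M (Fin.rev b) (Fin.rev b))) ∧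
    (M a b * t (Fin.rev b) =
      Q a b * (t a * t (Fin.rev b) - 1) -
        ∑ k ∈ Finset.Ioo a b, Q a k * (M k b * t (Fin.rev b))) := by
  have hQt : Q.BlockTriangular id := fun i j h => hQlower i j h
  have hdet : IsUnit Q.det := by
    rw [Matrix.det_of_upperTriangular hQt]; simp [hQdiag]
  haveI : Invertible Q := Matrix.invertibleOfIsUnitDet Q hdet
  have hMt : M.BlockTriangular id := by
    rw [hM]
    exact ((Matrix.blockTriangular_inv_of_blockTriangular hQt).mul
      (Matrix.blockTriangular_diagonal t)).mul hQt
  have hQM : Q * M = Matrix.diagonal t * Q := by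
    rw [hM, Matrix.mul_assoc, Matrix.mul_nonsing_inv_cancel_left _ _ hdet]
  have key : ∀ i j, ∑ k, Q i k * M k j = t i * Q i j := by
    intro i j
    have h := congrFun (congrFun hQM i) j
    rwa [Matrix.mul_apply, Matrix.diagonal_mul] at h
  have hdiag : ∀ i, M i i = t i := by
    intro i
    have h := key i i
    rw [Finset.sum_eq_single i] at h
    · simpa [hQdiag] using h
    · intro k _ hk
      rcases lt_or_gt_of_ne hk with h1 | h1
      · rw [hQlower i k h1, zero_mul]
      · rw [hMt (show id i < id k from h1), mul_zero]
    · simp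
  have hsum : ∑ k, Q a k * M k b = ∑ k ∈ Finset.Icc a b, Q a k * M k b := by
    symm
    apply Finset.sum_subset (Finset.subset_univ _)
    intro k _ hk
    rw [Finset.mem_Icc, not_and_or, not_le, not_le] at hk
    rcases hk with h1 | h1
    · rw [hQlower a k h1, zero_mul]
    · rw [hMt (show id b < id k from h1), mul_zero]
  have hmain := key a b
  rw [hsum, ← Finset.Ioc_insert_left hab.le, Finset.sum_insert (by simp),
    ← Finset.Ioo_insert_right hab, Finset.sum_insert (by simp), hQdiag, hdiag] at hmain
  have h2 : M a b * t (Fin.rev b) =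
      Q a b * (t a * t (Fin.rev b) - 1) -
        ∑ k ∈ Finset.Ioo a b, Q a k * (M k b * t (Fin.rev b)) := by
    simp only [← mul_assoc]
    rw [← Finset.sum_mul]
    linear_combination t (Fin.rev b) * hmain - Q a b * htb
  refine ⟨?_, h2⟩
  rw [hdiag, hdiag]
  exact h2
end
end
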